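/- arXiv:1411.3517 — 2 statements merged into one kernel-verified Lean document; each statement's English description precedes it below -/
import Mathlib

section
/- There exist universal constants C₁ > 0 and C₂ ∈ (0,1) such that for all r, d ∈ ℕ with 1 ≤ d ≤ r and every α : F₃^r → F₃: 1 − 2|α|/3^d ≤ ρ_{r,d}(α) ≤ max{1 − C₁·Δ(α, P_{r,2r−2d−1})/3^d, C₂}, where ρ_{r,d}(α) := E[ω^{a·⟨α, Π_{i=1}^d (ℓ_i − 1)(ℓ_i − 2)⟩}], the expectation being over v₁,…,v_d uniformly random linearly independent vectors in F₃^r, independent uniform c₁,…,c_d ∈ F₃, and independent uniform a ∈ F₃, with ℓ_i : F₃^r → F₃ given by ℓ_i(x) := ⟨v_i, x⟩ + c_i and the product Π_{i=1}^d (ℓ_i − 1)(ℓ_i − 2) taken pointwise. -/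
open scoped BigOperators

abbrev F3 := ZMod 3
abbrev Pt (r : ℕ) := Fin r → F3
abbrev Fn (r : ℕ) := Pt r → F3

/-- The set of functions `F₃^r → F₃` computed by polynomials of total degree at most `d`
with individual degrees at most `2`. -/
def PolySet (r d : ℕ) : Set (Fn r) :=
  {g | ∃ P : MvPolynomial (Fin r) F3,
        P.totalDegree ≤ d ∧ (∀ i, P.degreeOf i ≤ 2) ∧
        ∀ x, g x = MvPolynomial.eval x P}

noncomputable def polyFinset (r d : ℕ) : Finset (Fn r) :=
  (Set.toFinite (PolySet r d)).toFinset

/-- Support size `|β|`. -/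
def supp {r : ℕ} (β : Fn r) : ℕ := (Finset.univ.filter fun x => β x ≠ 0).card

/-- Dot product `⟨β, f⟩ = Σ_x β(x) f(x)` in `F₃`. -/
def dotF {r : ℕ} (β f : Fn r) : F3 := ∑ x, β x * f x

noncomputable def ω : ℂ := Complex.exp (2 * (Real.pi : ℂ) * Complex.I / 3)

/-- The character `χ_β(f) = ω^{⟨β,f⟩}`. -/
noncomputable def chi {r : ℕ} (β f : Fn r) : ℂ := ω ^ (dotF β f).val

/-- The dual `S^⊥` of a set of functions. -/
def dualSet (r : ℕ) (S : Set (Fn r)) : Set (Fn r) := {g | ∀ h ∈ S, dotF g h = 0}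

/-- `Λ` contains exactly one representative, of minimal support size, from each coset
of `𝔉_r` modulo `P_{r,d}^⊥`. -/
def IsMinRepSet (r d : ℕ) (Λ : Finset (Fn r)) : Prop :=
  (∀ β : Fn r, ∃! β', β' ∈ Λ ∧ β - β' ∈ dualSet r (PolySet r d)) ∧
  (∀ β' ∈ Λ, ∀ γ : Fn r, β' - γ ∈ dualSet r (PolySet r d) → supp β' ≤ supp γ)

/-- The noise `a·(p² + 1)` (pointwise). -/
def shift {r : ℕ} (p : Fn r) (a : F3) : Fn r := fun x => a * (p x ^ 2 + 1)

/-- Fourier coefficient `Â(β)` of a function on `P_{r,d}`. -/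
noncomputable def fourierP (r d : ℕ) (A : Fn r → ℂ) (β : Fn r) : ℂ :=
  (∑ g ∈ polyFinset r d, A g * (starRingEnd ℂ) (chi β g)) / ((polyFinset r d).card : ℂ)

/-- Expectation `E_{f ∈ P_{r,d}}[A(f)]`. -/
noncomputable def expP (r d : ℕ) (A : Fn r → ℝ) : ℝ :=
  (∑ f ∈ polyFinset r d, A f) / ((polyFinset r d).card : ℝ)

/-- Degree-`k` influence `Inf_x^{≤k}(A)` with respect to a set `Λ` of minimal-support
coset representatives. -/
noncomputable def infP (r d k : ℕ) (Λ : Finset (Fn r)) (A : Fn r → ℝ) (x : Pt r) : ℝ :=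
  ∑ β ∈ Λ.filter (fun β => β x ≠ 0 ∧ supp β ≤ k),
    ‖fourierP r d (fun g => (A g : ℂ)) β‖ ^ 2

open scoped Classical

/-- Hamming distance between two functions `F₃^r → F₃`. -/
def hammingD {r : ℕ} (f g : Fn r) : ℕ := (Finset.univ.filter fun x => f x ≠ g x).card

/-- Hamming distance from `α` to a set `S` of functions. -/
noncomputable def distToSet {r : ℕ} (α : Fn r) (S : Set (Fn r)) : ℕ :=
  sInf ((fun g => hammingD α g) '' S)

/-- Tuples of `d` linearly independent vectors in `F₃^r`. -/
noncomputable def LIset (r d : ℕ) : Finset (Fin d → Pt r) :=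
  Finset.univ.filter fun v : Fin d → Pt r => LinearIndependent F3 v

/-- The affine form `ℓ_i(x) = ⟨v_i, x⟩ + c_i`, times its shifts, multiplied out:
the function `x ↦ Π_i (ℓ_i(x) − 1)(ℓ_i(x) − 2)`. -/
def ellProd {r d : ℕ} (v : Fin d → Pt r) (c : Fin d → F3) : Fn r :=
  fun x => ∏ i, ((∑ j, v i j * x j) + c i - 1) * ((∑ j, v i j * x j) + c i - 2)

/-- The eigenvalue `ρ_{r,d}(α) = E_{v,c,a}[ω^{a·⟨α, Π_i (ℓ_i−1)(ℓ_i−2)⟩}]` (a real number,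
taken as real part). -/
noncomputable def rho (r d : ℕ) (α : Fn r) : ℝ :=
  ((∑ v ∈ LIset r d, ∑ c : Fin d → F3, ∑ a : F3,
      ω ^ (a * dotF α (ellProd v c)).val) /
    (((LIset r d).card : ℂ) * 3 ^ d * 3)).re


namespace T17

abbrev Af (V : Type) [AddCommGroup V] [Module F3 V] := Module.Dual F3 V × F3

section basics
variable {V : Type} [AddCommGroup V] [Module F3 V]

instance finDual [Finite V] : Finite (Module.Dual F3 V) := DFunLike.finite _

noncomputable instance ftDual [Finite V] : Fintype (Module.Dual F3 V) := Fintype.ofFinite _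

/-- Evaluation of an affine form. -/
def ev : Af V →ₗ[F3] (V → F3) where
  toFun u := fun x => u.1 x + u.2
  map_add' := by intro a b; ext x; simp; ring
  map_smul' := by intro a b; ext x; simp; ring

@[simp] lemma ev_apply (u : Af V) (x : V) : ev u x = u.1 x + u.2 := rfl

/-- The space of affine functions. -/
def aff (V : Type) [AddCommGroup V] [Module F3 V] : Submodule F3 (V → F3) :=
  LinearMap.range (ev (V := V))

lemma ev_mem (u : Af V) : ev u ∈ aff V := ⟨u, rfl⟩

lemma one_mem_aff : (1 : V → F3) ∈ aff V := ⟨(0, 1), by ext x; simp⟩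

lemma one_le_aff : (1 : Submodule F3 (V → F3)) ≤ aff V := by
  rw [Submodule.one_le]; exact one_mem_aff

lemma aff_pow_mono {a b : ℕ} (h : a ≤ b) : (aff V) ^ a ≤ (aff V) ^ b :=
  pow_le_pow_right' one_le_aff h

lemma one_mem_pow (e : ℕ) : (1 : V → F3) ∈ (aff V) ^ e := by
  have : (1 : V → F3) ∈ (aff V) ^ 0 := by
    rw [pow_zero]; exact Submodule.one_le.mp le_rfl
  exact aff_pow_mono (Nat.zero_le e) this

lemma mul_mem_pow {a b : ℕ} {f g : V → F3} (hf : f ∈ (aff V) ^ a) (hg : g ∈ (aff V) ^ b) :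
    f * g ∈ (aff V) ^ (a + b) := by
  rw [pow_add]; exact Submodule.mul_mem_mul hf hg

lemma ev_mem_one (u : Af V) : ev u ∈ (aff V) ^ 1 := by rw [pow_one]; exact ev_mem u

/-- Indicator of the hyperplane `u = 0`. -/
def ind (u : Af V) : V → F3 := fun x => 1 - (ev u x) ^ 2

lemma ind_mem (u : Af V) : ind u ∈ (aff V) ^ 2 := by
  have h : ind u = 1 - ev u * ev u := by
    ext x; simp [ind, pow_two]
  rw [h]
  exact Submodule.sub_mem _ (one_mem_pow 2) (mul_mem_pow (ev_mem_one u) (ev_mem_one u))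

lemma f3_sq (t : F3) (h : t ≠ 0) : t ^ 2 = 1 := by revert t; decide

lemma ind_eq (u : Af V) (x : V) : ind u x = if ev u x = 0 then 1 else 0 := by
  unfold ind
  split_ifs with h
  · rw [h]; simp
  · rw [f3_sq _ h]; simp

variable [Fintype V]

/-- `f` annihilates all polynomials of degree at most `e`. -/
def Perp (e : ℕ) (f : V → F3) : Prop := ∀ φ ∈ (aff V) ^ e, ∑ x, f x * φ x = 0

lemma Perp.mono {a b : ℕ} (h : a ≤ b) {f : V → F3} (hf : Perp b f) : Perp a f :=
  fun φ hφ => hf φ (aff_pow_mono h hφ)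

lemma Perp.mul {a b : ℕ} {f φ : V → F3} (hf : Perp (a + b) f) (hφ : φ ∈ (aff V) ^ b) :
    Perp a (f * φ) := by
  intro ψ hψ
  have := hf (φ * ψ) (by rw [add_comm]; exact mul_mem_pow hφ hψ)
  rw [← this]
  exact Finset.sum_congr rfl fun x _ => by simp [mul_assoc]

lemma Perp.sub {a : ℕ} {f g : V → F3} (hf : Perp a f) (hg : Perp a g) : Perp a (f - g) := by
  intro ψ hψ
  have h1 := hf ψ hψ
  have h2 := hg ψ hψ
  simp only [Pi.sub_apply, sub_mul, Finset.sum_sub_distrib, h1, h2, sub_zero]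

lemma Perp.add {a : ℕ} {f g : V → F3} (hf : Perp a f) (hg : Perp a g) : Perp a (f + g) := by
  intro ψ hψ
  have h1 := hf ψ hψ
  have h2 := hg ψ hψ
  simp only [Pi.add_apply, add_mul, Finset.sum_add_distrib, h1, h2, add_zero]

lemma Perp.smul {a : ℕ} {f : V → F3} (c : F3) (hf : Perp a f) : Perp a (c • f) := by
  intro ψ hψ
  have h1 := hf ψ hψ
  simp only [Pi.smul_apply, smul_eq_mul, mul_assoc, ← Finset.mul_sum, h1, mul_zero]

lemma Perp.zero {a : ℕ} : Perp a (0 : V → F3) := by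
  intro ψ _; simp

/-- Number of disagreements. -/
noncomputable def dis (f g : V → F3) : ℕ := (Finset.univ.filter fun x => f x ≠ g x).card

end basics

section pull
variable {V V' : Type} [AddCommGroup V] [Module F3 V] [AddCommGroup V'] [Module F3 V']

lemma pull_pow (m : V' → V) (hm : ∀ u : Af V, ev u ∘ m ∈ aff V') (e : ℕ) (φ : V → F3)
    (hφ : φ ∈ (aff V) ^ e) : φ ∘ m ∈ (aff V') ^ e := by
  induction e generalizing φ with
  | zero =>
    rw [pow_zero] at hφ ⊢
    obtain ⟨c, rfl⟩ := Submodule.mem_one.mp hφ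
    exact Submodule.mem_one.mpr ⟨c, by ext x; simp⟩
  | succ e ih =>
    rw [pow_succ] at hφ ⊢
    refine Submodule.mul_induction_on hφ ?_ ?_
    · rintro a ha b ⟨u, rfl⟩
      have : (a * ev u) ∘ m = (a ∘ m) * (ev u ∘ m) := rfl
      rw [this]
      exact Submodule.mul_mem_mul (ih a ha) (hm u)
    · intro a b ha hb
      exact Submodule.add_mem _ ha hb

end pull

section lemL
variable {V : Type} [AddCommGroup V] [Module F3 V]

lemma diff_mem (L : Submodule F3 (V → F3)) (p : V → V)
    (hp : ∀ u : Af V, ev u ∘ p ∈ aff V) (hL : ∀ u : Af V, ev u - ev u ∘ p ∈ L)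
    (e : ℕ) (φ : V → F3) (hφ : φ ∈ (aff V) ^ (e + 1)) :
    φ - φ ∘ p ∈ L * (aff V) ^ e := by
  induction e generalizing φ with
  | zero =>
    rw [zero_add, pow_one] at hφ
    obtain ⟨u, rfl⟩ := hφ
    rw [pow_zero, mul_one]
    exact hL u
  | succ e ih =>
    rw [pow_succ] at hφ
    refine Submodule.mul_induction_on hφ ?_ ?_
    · rintro a ha b ⟨u, rfl⟩
      have : (a * ev u) - (a * ev u) ∘ p = (a - a ∘ p) * ev u + (ev u - ev u ∘ p) * (a ∘ p) := by
        ext x; simp only [Pi.sub_apply, Pi.mul_apply, Function.comp, Pi.add_apply]; ring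
      rw [this]
      refine Submodule.add_mem _ ?_ ?_
      · rw [pow_succ, ← mul_assoc]
        exact Submodule.mul_mem_mul (ih a ha) (ev_mem u)
      · exact Submodule.mul_mem_mul (hL u) (pull_pow p hp _ a ha)
    · intro a b ha hb
      have : (a + b) - (a + b) ∘ p = (a - a ∘ p) + (b - b ∘ p) := by
        ext x; simp only [Pi.sub_apply, Function.comp, Pi.add_apply]; ring
      rw [this]
      exact Submodule.add_mem _ ha hb

variable [Fintype V]

lemma lemL0 (L : Submodule F3 (Module.Dual F3 V)) (R : V → F3) (e : ℕ)
    (h : ∀ v ∈ L, Perp e (R * ev (v, 0))) :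
    ∃ R' : V → F3, Perp (e + 1) R' ∧ ∀ x, x ∉ L.dualCoannihilator → R' x = R x := by
  set Z := L.dualCoannihilator with hZ
  obtain ⟨π, hπ⟩ := Z.subtype.exists_leftInverse_of_injective (by simp)
  set p : V → V := fun x => (π x : V) with hpdef
  have hpZ : ∀ z ∈ Z, p z = z := by
    intro z hz
    have := LinearMap.congr_fun hπ ⟨z, hz⟩
    simp only [LinearMap.comp_apply, Submodule.subtype_apply, LinearMap.id_apply] at this
    simp [hpdef, this]
  have hp : ∀ u : Af V, ev u ∘ p ∈ aff V := by
    intro u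
    exact ⟨(u.1 ∘ₗ Z.subtype ∘ₗ π, u.2), by ext x; simp [hpdef]⟩
  let L' : Submodule F3 (V → F3) := L.map ((ev (V := V)) ∘ₗ LinearMap.inl F3 _ _)
  have hL : ∀ u : Af V, ev u - ev u ∘ p ∈ L' := by
    intro u
    refine ⟨u.1 - u.1 ∘ₗ Z.subtype ∘ₗ π, ?_, ?_⟩
    · have h1 : u.1 - u.1 ∘ₗ Z.subtype ∘ₗ π ∈ Z.dualAnnihilator := by
        rw [Submodule.mem_dualAnnihilator]
        intro z hz
        have := hpZ z hz
        simp only [hpdef] at this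
        simp [this]
      have h2 : Z.dualAnnihilator = L := by
        rw [hZ, Subspace.dualCoannihilator_dualAnnihilator_eq]
      exact h2 ▸ h1
    · ext x; simp [hpdef]
  have key : ∀ φ ∈ (aff V) ^ (e + 1), ∑ x, R x * (φ x - φ (p x)) = 0 := by
    intro φ hφ
    have h1 := diff_mem L' p hp hL e φ hφ
    have h2 : ∀ ψ ∈ L' * (aff V) ^ e, ∑ x, R x * ψ x = 0 := by
      intro ψ hψ
      refine Submodule.mul_induction_on hψ ?_ ?_
      · rintro a ⟨v, hv, rfl⟩ b hb
        have := h v hv b hb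
        rw [← this]
        refine Finset.sum_congr rfl fun x _ => ?_
        simp [mul_assoc]
      · intro a b ha hb
        simp only [Pi.add_apply, mul_add, Finset.sum_add_distrib, ha, hb, add_zero]
    have := h2 _ h1
    simpa using this
  refine ⟨fun x => R x - ∑ y, if p y = x then R y else 0, ?_, ?_⟩
  · intro φ hφ
    have := key φ hφ
    simp only [mul_sub, Finset.sum_sub_distrib] at this
    simp only [sub_mul, Finset.sum_sub_distrib, Finset.sum_mul]
    rw [Finset.sum_comm (γ := V)]
    refine Eq.trans ?_ this
    congr 1
    refine Finset.sum_congr rfl fun y _ => ?_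
    simp only [ite_mul, zero_mul]
    rw [Finset.sum_ite_eq]
    simp
  · intro x hx
    have : ∀ y, p y ≠ x := by
      intro y hy; apply hx; rw [← hy]; exact (π y).2
    simp [this]

lemma card_dual : Fintype.card (Module.Dual F3 V) = Fintype.card V := by
  have h1 := Module.card_eq_pow_finrank (K := F3) (V := V)
  have h2 := Module.card_eq_pow_finrank (K := F3) (V := Module.Dual F3 V)
  rw [h1, h2, Subspace.dual_finrank_eq]

lemma card_Af : Fintype.card (Af V) = 3 * Fintype.card V := by
  rw [Fintype.card_prod, card_dual, ZMod.card, mul_comm]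

lemma lemL (I : Submodule F3 (Af V)) (R : V → F3) (e : ℕ)
    (h : ∀ u ∈ I, Perp e (R * ev u)) :
    ∃ R' : V → F3, Perp (e + 1) R' ∧ dis R R' * Nat.card I ≤ Fintype.card (Af V) := by
  set L : Submodule F3 (Module.Dual F3 V) := I.comap (LinearMap.inl F3 _ _) with hL
  obtain ⟨R', h1, h2⟩ := lemL0 L R e (fun v hv => h _ hv)
  refine ⟨R', h1, ?_⟩
  have hI : Nat.card I ≤ 3 * Nat.card L := by
    have hf : Module.finrank F3 I ≤ Module.finrank F3 L + 1 := by
      let sn : I →ₗ[F3] F3 := (LinearMap.snd F3 (Module.Dual F3 V) F3) ∘ₗ I.subtype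
      have := LinearMap.finrank_range_add_finrank_ker sn
      have hr : Module.finrank F3 (LinearMap.range sn) ≤ 1 := by
        refine (Submodule.finrank_le _).trans ?_
        simp
      have hk : Module.finrank F3 (LinearMap.ker sn) ≤ Module.finrank F3 L := by
        let g : (LinearMap.ker sn) →ₗ[F3] L :=
          { toFun := fun x => ⟨(x : I).1.1, by
              have hx := x.2
              simp only [LinearMap.mem_ker, sn, LinearMap.comp_apply,
                Submodule.subtype_apply, LinearMap.snd_apply] at hx
              have h3 := (x : I).2
              rw [hL, Submodule.mem_comap]
              simp only [LinearMap.inl_apply]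
              have : (((x : I).1.1, (0 : F3)) : Af V) = (x : I).1 := by
                ext1
                · rfl
                · exact hx.symm
              rw [this]; exact h3⟩
            map_add' := by intro a b; rfl
            map_smul' := by intro a b; rfl }
        refine LinearMap.finrank_le_finrank_of_injective (f := g) ?_
        intro x y hxy
        have hx := x.2
        have hy := y.2
        simp only [LinearMap.mem_ker, sn, LinearMap.comp_apply,
                Submodule.subtype_apply, LinearMap.snd_apply] at hx hy
        have h3 : (x : I).1.1 = (y : I).1.1 := congrArg Subtype.val hxy
        apply Subtype.ext
        apply Subtype.ext
        exact Prod.ext h3 (hx.trans hy.symm)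
      omega
    rw [Module.natCard_eq_pow_finrank (K := F3) (V := I),
      Module.natCard_eq_pow_finrank (K := F3) (V := L)]
    rw [Nat.card_zmod]
    calc 3 ^ _ ≤ 3 ^ (Module.finrank F3 L + 1) := Nat.pow_le_pow_right (by norm_num) hf
      _ = _ := by ring
  have hd : dis R R' ≤ Nat.card L.dualCoannihilator := by
    unfold dis
    have : (Finset.univ.filter fun x => R x ≠ R' x) ⊆
        Finset.univ.filter fun x => x ∈ L.dualCoannihilator := by
      intro x hx
      simp only [Finset.mem_filter, Finset.mem_univ, true_and] at hx ⊢
      by_contra hc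
      exact hx (h2 x hc).symm
    refine (Finset.card_le_card this).trans ?_
    rw [Nat.card_eq_fintype_card, Fintype.card_subtype]
  have hc : Nat.card L * Nat.card L.dualCoannihilator = Fintype.card V := by
    rw [Module.natCard_eq_pow_finrank (K := F3) (V := L),
      Module.natCard_eq_pow_finrank (K := F3) (V := L.dualCoannihilator), ← pow_add,
      Subspace.finrank_add_finrank_dualCoannihilator_eq, Nat.card_zmod,
      Module.card_eq_pow_finrank (K := F3) (V := V), ZMod.card]
  rw [card_Af, ← hc]
  calc dis R R' * Nat.card I ≤ Nat.card L.dualCoannihilator * (3 * Nat.card L) :=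
        Nat.mul_le_mul hd hI
    _ = _ := by ring

end lemL

section mixing
variable {V : Type} [AddCommGroup V] [Module F3 V] [Fintype V]

lemma exists_dual_ne {x : V} (hx : x ≠ 0) : ∃ v : Module.Dual F3 V, v x = 1 := by
  exact Module.Projective.exists_dual_eq_one F3 hx

lemma shift_sum {X : Type} [AddCommGroup X] [Module F3 X] [Fintype X] (b : X) (F : X → ℝ) :
    3 * ∑ w, F w = ∑ w, ∑ t : F3, F (w + t • b) := by
  rw [Finset.sum_comm]
  have : ∀ t : F3, ∑ w, F (w + t • b) = ∑ w, F w := fun t =>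
    Equiv.sum_comp (Equiv.addRight (t • b)) F
  simp [this]

noncomputable def aa (t : F3) : ℝ := (if t = 0 then 1 else 0) - 1 / 3

lemma univ3 (F : F3 → ℝ) : ∑ t : F3, F t = F 0 + F 1 + F 2 := by
  have : (Finset.univ : Finset F3) = {0, 1, 2} := by decide
  rw [this, Finset.sum_insert (by decide), Finset.sum_insert (by decide), Finset.sum_singleton]
  ring

lemma aa_sum (s : F3) : ∑ t : F3, aa (s + t) = 0 := by
  have := Equiv.sum_comp (Equiv.addLeft s) aa
  simp only [Equiv.coe_addLeft] at this
  rw [this, univ3]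
  have h1 : (1 : F3) ≠ 0 := by decide
  have h2 : (2 : F3) ≠ 0 := by decide
  simp [aa, h1, h2]; norm_num

lemma aa_sq_sum (s : F3) : ∑ t : F3, aa (s + t) * aa (s + t) = 2 / 3 := by
  have := Equiv.sum_comp (Equiv.addLeft s) (fun t => aa t * aa t)
  simp only [Equiv.coe_addLeft] at this
  rw [this, univ3]
  have h1 : (1 : F3) ≠ 0 := by decide
  have h2 : (2 : F3) ≠ 0 := by decide
  simp [aa, h1, h2]; norm_num

lemma aa_pair (x y : V) :
    ∑ w : Af V, aa (ev w x) * aa (ev w y) = if x = y then (Fintype.card (Af V) : ℝ) * (2 / 9) else 0 := by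
  split_ifs with h
  · subst h
    have h3 := shift_sum ((0, 1) : Af V) (fun w => aa (ev w x) * aa (ev w x))
    have : ∀ w : Af V, ∑ t : F3, aa (ev (w + t • ((0, 1) : Af V)) x) * aa (ev (w + t • ((0, 1) : Af V)) x)
        = 2 / 3 := by
      intro w
      rw [← aa_sq_sum (ev w x)]
      refine Finset.sum_congr rfl fun t _ => ?_
      simp [add_assoc]
    simp only [this] at h3
    simp only [Finset.sum_const, Finset.card_univ, nsmul_eq_mul] at h3
    linarith
  · obtain ⟨v, hv⟩ := exists_dual_ne (sub_ne_zero.mpr h)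
    have h3 := shift_sum ((v, - v y) : Af V) (fun w => aa (ev w x) * aa (ev w y))
    have : ∀ w : Af V, ∑ t : F3, aa (ev (w + t • ((v, - v y) : Af V)) x) * aa (ev (w + t • ((v, - v y) : Af V)) y)
        = 0 := by
      intro w
      have e1 : ∀ t : F3, ev (w + t • ((v, - v y) : Af V)) x = ev w x + t := by
        intro t
        have hvx : v x = 1 + v y := by
          rw [map_sub] at hv; rw [← hv]; ring
        simp [hvx]; ring
      have e2 : ∀ t : F3, ev (w + t • ((v, - v y) : Af V)) y = ev w y := by
        intro t; simp; ring
      simp only [e1, e2]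
      rw [← Finset.sum_mul, aa_sum, zero_mul]
    simp only [this] at h3
    simp only [Finset.sum_const_zero] at h3
    linarith

lemma mix (S : Finset V) (W : Finset (Af V)) :
    (∑ w ∈ W, ∑ x ∈ S, aa (ev w x)) ^ 2 ≤
      W.card * ((Fintype.card (Af V) : ℝ) * S.card * (2 / 9)) := by
  refine sq_sum_le_card_mul_sum_sq.trans ?_
  refine mul_le_mul_of_nonneg_left ?_ (by positivity)
  calc ∑ w ∈ W, (∑ x ∈ S, aa (ev w x)) ^ 2 ≤ ∑ w : Af V, (∑ x ∈ S, aa (ev w x)) ^ 2 :=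
        Finset.sum_le_sum_of_subset_of_nonneg (Finset.subset_univ _) (fun _ _ _ => sq_nonneg _)
    _ = ∑ x ∈ S, ∑ y ∈ S, ∑ w : Af V, aa (ev w x) * aa (ev w y) := by
        simp only [pow_two, Finset.sum_mul_sum]
        rw [Finset.sum_comm]
        refine Finset.sum_congr rfl fun x _ => ?_
        rw [Finset.sum_comm]
    _ = (Fintype.card (Af V) : ℝ) * S.card * (2 / 9) := by
        simp only [aa_pair]
        simp only [Finset.sum_ite_eq]
        rw [Finset.sum_congr rfl (fun x hx => if_pos hx)]
        simp; ring
    _ ≤ _ := le_rfl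

/-- number of forms in `W` vanishing at `x` -/
noncomputable def nz (W : Finset (Af V)) (x : V) : ℕ := (W.filter fun w => ev w x = 0).card

lemma sum_aa (W : Finset (Af V)) (x : V) :
    ∑ w ∈ W, aa (ev w x) = nz W x - (W.card : ℝ) / 3 := by
  unfold aa nz
  rw [Finset.sum_sub_distrib, Finset.card_filter]
  push_cast
  simp; ring

lemma mix_high (S : Finset V) (W : Finset (Af V))
    (h : ∀ x ∈ S, 2 * (W.card : ℝ) ≤ 3 * nz W x) :
    (S.card : ℝ) * W.card ≤ 2 * Fintype.card (Af V) := by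
  have h1 := mix S W
  rw [Finset.sum_comm] at h1
  have h2 : (S.card : ℝ) * (W.card / 3) ≤ ∑ x ∈ S, ∑ w ∈ W, aa (ev w x) := by
    rw [← nsmul_eq_mul]
    refine Finset.card_nsmul_le_sum _ _ _ ?_
    intro x hx
    rw [sum_aa]
    have := h x hx
    linarith
  have h3 : ((S.card : ℝ) * (W.card / 3)) ^ 2 ≤ _ := (pow_le_pow_left₀ (by positivity) h2 2).trans h1
  by_cases hS : (S.card : ℝ) * W.card = 0
  · rw [hS]; positivity
  · have hp : 0 < (S.card : ℝ) * W.card := lt_of_le_of_ne (by positivity) (Ne.symm hS)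
    refine le_of_mul_le_mul_left ?_ hp
    nlinarith

lemma mix_low (S : Finset V) (W : Finset (Af V))
    (h : ∀ x ∈ S, 6 * (nz W x : ℝ) ≤ W.card) :
    (S.card : ℝ) * W.card ≤ 8 * Fintype.card (Af V) := by
  have h1 := mix S W
  rw [Finset.sum_comm] at h1
  have h2 : (S.card : ℝ) * (W.card / 6) ≤ - ∑ x ∈ S, ∑ w ∈ W, aa (ev w x) := by
    rw [← nsmul_eq_mul, ← Finset.sum_neg_distrib]
    refine Finset.card_nsmul_le_sum _ _ _ ?_
    intro x hx
    rw [sum_aa]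
    have := h x hx
    linarith
  have h3 := (pow_le_pow_left₀ (by positivity) h2 2)
  rw [neg_sq] at h3
  have h3 := h3.trans h1
  by_cases hS : (S.card : ℝ) * W.card = 0
  · rw [hS]; positivity
  · have hp : 0 < (S.card : ℝ) * W.card := lt_of_le_of_ne (by positivity) (Ne.symm hS)
    refine le_of_mul_le_mul_left ?_ hp
    nlinarith

lemma card_dual_zero (y : V) (hy : y ≠ 0) :
    3 * (∑ v : Module.Dual F3 V, if v y = 0 then (1 : ℝ) else 0) = Fintype.card (Module.Dual F3 V) := by
  obtain ⟨b, hb⟩ := exists_dual_ne hy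
  rw [shift_sum b]
  have : ∀ w : Module.Dual F3 V, ∑ t : F3, (if (w + t • b) y = 0 then (1 : ℝ) else 0) = 1 := by
    intro w
    simp only [LinearMap.add_apply, LinearMap.smul_apply, hb, smul_eq_mul, mul_one]
    have := Equiv.sum_comp (Equiv.addLeft (w y)) (fun t : F3 => if t = 0 then (1 : ℝ) else 0)
    simp only [Equiv.coe_addLeft] at this
    have h2 : ∑ t : F3, (if t = 0 then (1 : ℝ) else 0) = 1 := by simp
    refine Eq.trans ?_ (this.trans h2)
    refine Finset.sum_congr rfl fun t _ => ?_
    congr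
  simp only [this]
  simp

lemma isolate (t : ℕ) (x₀ : V) (S : Finset V) (h0 : x₀ ∉ S) (hS : S.card < 3 ^ t) :
    ∃ φ ∈ (aff V) ^ (2 * t), φ x₀ = 1 ∧ ∀ x ∈ S, φ x = 0 := by
  induction t generalizing S with
  | zero =>
    refine ⟨1, one_mem_pow _, rfl, ?_⟩
    have : S = ∅ := by rw [← Finset.card_eq_zero]; simpa using hS
    simp [this]
  | succ t ih =>
    have hex : ∃ v : Module.Dual F3 V, 3 * (∑ x ∈ S, if v (x - x₀) = 0 then (1 : ℝ) else 0) ≤ S.card := by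
      by_contra hc
      push Not at hc
      have h1 : ∑ v : Module.Dual F3 V, (S.card : ℝ) <
          ∑ v : Module.Dual F3 V, 3 * (∑ x ∈ S, if v (x - x₀) = 0 then (1 : ℝ) else 0) :=
        Finset.sum_lt_sum_of_nonempty ⟨0, Finset.mem_univ _⟩ (fun v _ => hc v)
      rw [← Finset.mul_sum, Finset.sum_comm, Finset.mul_sum] at h1
      rw [Finset.sum_congr rfl (fun x hx => card_dual_zero (x - x₀) (by
        intro h; apply h0; rw [← sub_eq_zero.mp h]; exact hx))] at h1
      simp only [Finset.sum_const, nsmul_eq_mul, Finset.card_univ] at h1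
      linarith
    obtain ⟨v, hv⟩ := hex
    set u : Af V := (v, - v x₀) with hu
    have huv : ∀ x, ev u x = v (x - x₀) := by intro x; simp [hu]; ring
    have hc : (S.filter fun x => ev u x = 0).card < 3 ^ t := by
      have h2 : ((S.filter fun x => ev u x = 0).card : ℝ) =
          ∑ x ∈ S, if v (x - x₀) = 0 then (1 : ℝ) else 0 := by
        rw [Finset.card_filter]; push_cast; simp only [huv]
      rw [← h2] at hv
      have h3 : 3 * (S.filter fun x => ev u x = 0).card ≤ S.card := by exact_mod_cast hv
      rw [pow_succ] at hS
      omega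
    obtain ⟨φ, h1, h2, h3⟩ := ih (S.filter fun x => ev u x = 0) (fun h => h0 (Finset.mem_filter.mp h).1) hc
    refine ⟨φ * ind u, ?_, ?_, ?_⟩
    · have := mul_mem_pow h1 (ind_mem u)
      rwa [show 2 * (t + 1) = 2 * t + 2 by ring]
    · simp only [Pi.mul_apply, h2, ind_eq, huv]; simp
    · intro x hx
      simp only [Pi.mul_apply, ind_eq]
      split_ifs with hh
      · rw [h3 x (by simp only [Finset.mem_filter]; exact ⟨hx, hh⟩)]; simp
      · simp

lemma min_dist (t : ℕ) (h : V → F3) (hp : Perp (2 * t) h) (S : Finset V)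
    (hS : ∀ x, h x ≠ 0 → x ∈ S) (hc : S.card ≤ 3 ^ t) : h = 0 := by
  by_contra hne
  obtain ⟨x₀, hx₀⟩ := Function.ne_iff.mp hne
  simp only [Pi.zero_apply] at hx₀
  have hm := hS x₀ hx₀
  obtain ⟨φ, h1, h2, h3⟩ := isolate t x₀ (S.erase x₀) (by simp)
    (by have := Finset.card_erase_lt_of_mem hm; omega)
  have h4 := hp φ h1
  rw [Finset.sum_eq_single x₀] at h4
  · rw [h2, mul_one] at h4; exact hx₀ h4
  · intro x _ hx
    by_cases hh : h x = 0
    · simp [hh]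
    · rw [h3 x (by simp [hx, hS x hh])]; simp
  · simp

end mixing

section sz
variable {X : Type} [AddCommGroup X] [Fintype X]

/-- Degree via derivatives. -/
def DegLe : ℕ → (X → F3) → Prop
  | 0, f => ∀ h x, f (x + h) = f x
  | e + 1, f => ∀ h, DegLe e (fun x => f (x + h) - f x)

lemma sz (e : ℕ) (f : X → F3) (hd : DegLe e f) (hf : ∃ x, f x ≠ 0) :
    Fintype.card X ≤ 2 ^ e * (Finset.univ.filter fun x => f x ≠ 0).card := by
  induction e generalizing f with
  | zero =>
    obtain ⟨x₀, hx⟩ := hf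
    have : (Finset.univ.filter fun x => f x ≠ 0) = Finset.univ := by
      ext y
      have := hd (y - x₀) x₀
      rw [add_sub_cancel] at this
      simp [this, hx]
    rw [this]; simp
  | succ e ih =>
    by_cases hc : ∃ h x, f (x + h) - f x ≠ 0
    · obtain ⟨h, x, hx⟩ := hc
      have h1 := ih _ (hd h) ⟨x, hx⟩
      have h2 : (Finset.univ.filter fun x => f (x + h) - f x ≠ 0).card ≤
          2 * (Finset.univ.filter fun x => f x ≠ 0).card := by
        have hs : (Finset.univ.filter fun x => f (x + h) - f x ≠ 0) ⊆
            (Finset.univ.filter fun x => f (x + h) ≠ 0) ∪ (Finset.univ.filter fun x => f x ≠ 0) := by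
          intro y hy
          simp only [Finset.mem_filter, Finset.mem_univ, true_and, Finset.mem_union] at hy ⊢
          by_contra hcc
          push Not at hcc
          exact hy (by rw [hcc.1, hcc.2]; simp)
        have he : (Finset.univ.filter fun x => f (x + h) ≠ 0).card =
            (Finset.univ.filter fun x => f x ≠ 0).card := by
          refine Finset.card_bij (fun x _ => x + h) ?_ ?_ ?_
          · intro a ha; simpa using ha
          · intro a _ b _ hab; exact add_right_cancel hab
          · intro b hb
            exact ⟨b - h, by simpa using hb, by simp⟩
        have := (Finset.card_le_card hs).trans (Finset.card_union_le _ _)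
        omega
      calc _ ≤ _ := h1
        _ ≤ 2 ^ e * (2 * (Finset.univ.filter fun x => f x ≠ 0).card) := Nat.mul_le_mul_left _ h2
        _ = _ := by ring
    · push Not at hc
      obtain ⟨x₀, hx⟩ := hf
      have : (Finset.univ.filter fun x => f x ≠ 0) = Finset.univ := by
        ext y
        have := hc (y - x₀) x₀
        rw [add_sub_cancel, sub_eq_zero] at this
        simp [this, hx]
      rw [this, Finset.card_univ]
      exact Nat.le_mul_of_pos_left _ (by positivity)

end sz

section core
variable {V : Type} [AddCommGroup V] [Module F3 V] [Fintype V]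

lemma dcount (S : Finset V) (W : Finset (Af V)) (hW : 0 < (W.card : ℝ)) (r : Af V → V → Prop)
    [∀ w x, Decidable (r w x)] (c K : ℝ)
    (h1 : ∀ x ∈ S, c * W.card ≤ ((W.filter fun w => r w x).card : ℝ))
    (h2 : ∀ w ∈ W, ((Finset.univ.filter fun x => r w x).card : ℝ) ≤ K) :
    c * S.card ≤ K := by
  have e1 : (S.card : ℝ) * (c * W.card) ≤ ∑ x ∈ S, ((W.filter fun w => r w x).card : ℝ) := by
    rw [← nsmul_eq_mul]
    exact Finset.card_nsmul_le_sum _ _ _ h1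
  have e2 : ∑ x ∈ S, ((W.filter fun w => r w x).card : ℝ) ≤
      ∑ w ∈ W, ((Finset.univ.filter fun x => r w x).card : ℝ) := by
    simp only [Finset.card_filter]
    push_cast
    rw [Finset.sum_comm]
    refine Finset.sum_le_sum fun w _ => ?_
    refine Finset.sum_le_sum_of_subset_of_nonneg (Finset.subset_univ _) ?_
    intro i _ _
    split_ifs <;> norm_num
  have e3 : ∑ w ∈ W, ((Finset.univ.filter fun x => r w x).card : ℝ) ≤ W.card * K := by
    rw [← nsmul_eq_mul]
    exact Finset.sum_le_card_nsmul _ _ _ h2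
  have e4 := (e1.trans e2).trans e3
  refine le_of_mul_le_mul_left ?_ hW
  linarith

lemma c1 (d : ℕ) (hd1 : 1 ≤ d) (f gu gv : V → F3) (u v : Af V)
    (su : ∀ x, ev u x ≠ 0 → gu x = 0) (sv : ∀ x, ev v x ≠ 0 → gv x = 0)
    (pu : Perp (2 * d) gu) (pv : Perp (2 * d) gv)
    (du : 12 * (Finset.univ.filter fun x => ev u x = 0 ∧ f x ≠ gu x).card < 3 ^ d)
    (dv : 12 * (Finset.univ.filter fun x => ev v x = 0 ∧ f x ≠ gv x).card < 3 ^ d)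
    (x : V) (hu : ev u x = 0) (hv : ev v x = 0) : gu x = gv x := by
  obtain ⟨e, rfl⟩ : ∃ e, d = e + 1 := ⟨d - 1, by omega⟩
  have q1 : Perp (2 * e) (gu * ind v - gv * ind u) :=
    (Perp.mul (b := 2) (by rwa [show 2 * e + 2 = 2 * (e + 1) by ring]) (ind_mem v)).sub
      (Perp.mul (b := 2) (by rwa [show 2 * e + 2 = 2 * (e + 1) by ring]) (ind_mem u))
  have q2 := min_dist e _ q1 ((Finset.univ.filter fun x => ev u x = 0 ∧ f x ≠ gu x) ∪
    (Finset.univ.filter fun x => ev v x = 0 ∧ f x ≠ gv x)) (by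
      intro y hy
      simp only [Finset.mem_union, Finset.mem_filter, Finset.mem_univ, true_and]
      simp only [Pi.sub_apply, Pi.mul_apply, ind_eq] at hy
      by_cases a1 : ev u y = 0
      · by_cases a2 : ev v y = 0
        · by_contra hc
          push Not at hc
          rw [if_pos a1, if_pos a2, ← hc.1 a1, ← hc.2 a2] at hy
          simp at hy
        · rw [if_neg a2, sv y a2] at hy; simp at hy
      · rw [if_neg a1, su y a1] at hy; simp at hy) (by
      refine (Finset.card_union_le _ _).trans ?_
      rw [pow_succ] at du dv
      omega)
  have := congrFun q2 x
  simp only [Pi.sub_apply, Pi.mul_apply, ind_eq, hu, hv, if_true, mul_one, Pi.zero_apply] at this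
  exact sub_eq_zero.mp this

/-- multiplier submodule -/
def Vw (e : ℕ) (P : V → F3) (w : Af V) : Submodule F3 (Af V) where
  carrier := {b | Perp e (P * ev w * ev b)}
  add_mem' := by
    intro a b ha hb
    have : P * ev w * ev (a + b) = P * ev w * ev a + P * ev w * ev b := by
      rw [map_add, mul_add]
    simp only [Set.mem_ofPred_eq] at *
    rw [this]; exact ha.add hb
  zero_mem' := by
    simp only [Set.mem_ofPred_eq, map_zero, mul_zero]; exact Perp.zero
  smul_mem' := by
    intro c a ha
    have : P * ev w * ev (c • a) = c • (P * ev w * ev a) := by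
      rw [map_smul, mul_smul_comm]
    simp only [Set.mem_ofPred_eq] at *
    rw [this]; exact ha.smul c

lemma mem_Vw (e : ℕ) (P : V → F3) (w b : Af V) : b ∈ Vw e P w ↔ Perp e (P * ev w * ev b) := Iff.rfl

lemma c4 (e : ℕ) (P : V → F3) (G : Finset (Af V)) (hG : ∀ u ∈ G, Perp e (P * ind u)) (η : ℝ) (h0 : 0 < η)
    (hη : η * Fintype.card (Af V) ≤ G.card) :
    ∃ W : Finset (Af V), η ^ 2 / 2 * Fintype.card (Af V) ≤ W.card ∧
      ∀ w ∈ W, η ^ 2 / 2 * Fintype.card (Af V) ≤ Nat.card (Vw e P w) := by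
  set N : ℝ := (Fintype.card (Af V) : ℝ) with hN
  have hNpos : 0 < N := by
    rw [hN]; exact_mod_cast Fintype.card_pos
  set W : Finset (Af V) := Finset.univ.filter fun w => η ^ 2 / 2 * N ≤ Nat.card (Vw e P w) with hW
  refine ⟨W, ?_, fun w hw => (Finset.mem_filter.mp hw).2⟩
  have hcard : ∀ w : Af V, (Nat.card (Vw e P w) : ℝ) = ((Finset.univ.filter fun b => b ∈ Vw e P w).card : ℝ) := by
    intro w
    rw [Nat.card_eq_fintype_card, Fintype.card_subtype]
  have h1 : (G.card : ℝ) ^ 2 ≤ ∑ w : Af V, (Nat.card (Vw e P w) : ℝ) := by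
    simp only [hcard]
    have h2 : (G ×ˢ G).card ≤ (Finset.univ.sigma fun w : Af V => Finset.univ.filter fun b => b ∈ Vw e P w).card := by
      refine Finset.card_le_card_of_injOn (fun p => ⟨p.1 - p.2, p.1 + p.2⟩) ?_ ?_
      · rintro ⟨u, v⟩ huv
        simp only [Finset.coe_product, Set.mem_prod, Finset.mem_coe] at huv
        simp only [Finset.coe_sigma, Set.mem_sigma_iff, Finset.mem_coe, Finset.mem_univ,
          Finset.mem_filter, true_and, mem_Vw]
        have : P * ev (u - v) * ev (u + v) = P * ind v - P * ind u := by
          ext x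
          rw [map_sub, map_add]
          simp only [Pi.mul_apply, Pi.sub_apply, Pi.add_apply, ind]
          ring
        rw [this]
        exact (hG v huv.2).sub (hG u huv.1)
      · rintro ⟨u, v⟩ _ ⟨u', v'⟩ _ hh
        simp only [Sigma.mk.injEq, heq_eq_eq] at hh
        obtain ⟨a1, a2⟩ := hh
        have b1 : (2 : F3) • u = (2 : F3) • u' := by
          rw [two_smul, two_smul]
          calc u + u = (u - v) + (u + v) := by abel
            _ = (u' - v') + (u' + v') := by rw [a1, a2]
            _ = _ := by abel
        have b2 : u = u' := by
          have := congrArg (fun z => (2 : F3) • z) b1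
          simp only [smul_smul] at this
          have h4 : (2 : F3) * 2 = 1 := by decide
          simpa only [h4, one_smul] using this
        subst b2
        have b3 : v = v' := add_left_cancel a2
        rw [b3]
    rw [Finset.card_product, Finset.card_sigma] at h2
    rw [pow_two]
    exact_mod_cast h2
  have h2 : ∑ w : Af V, (Nat.card (Vw e P w) : ℝ) ≤ ∑ w : Af V, ((if w ∈ W then N else 0) + η ^ 2 / 2 * N) := by
    refine Finset.sum_le_sum fun w _ => ?_
    split_ifs with h
    · have : (Nat.card (Vw e P w) : ℝ) ≤ N := by
        rw [hcard, hN]; exact_mod_cast Finset.card_le_univ _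
      have : 0 ≤ η ^ 2 / 2 * N := by positivity
      linarith
    · simp only [hW, Finset.mem_filter, Finset.mem_univ, true_and, not_le] at h
      linarith
  rw [Finset.sum_add_distrib] at h2
  simp only [Finset.sum_ite_mem, Finset.univ_inter, Finset.sum_const, Finset.card_univ, nsmul_eq_mul] at h2
  rw [← hN] at h2
  have h3 : (η * N) ^ 2 ≤ (G.card : ℝ) ^ 2 := pow_le_pow_left₀ (by positivity) hη 2
  refine le_of_mul_le_mul_right ?_ hNpos
  nlinarith

lemma c56 (d : ℕ) (hd1 : 1 ≤ d) (P : V → F3) (W : Finset (Af V)) (μ : ℝ) (hμ : 0 < μ)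
    (hW : μ * Fintype.card (Af V) ≤ W.card) (hμd : 6 ≤ μ * 3 ^ d)
    (R : Af V → V → F3) (hR : ∀ w ∈ W, Perp (2 * d + 1) (R w))
    (hdis : ∀ w ∈ W, (dis (P * ev w) (R w) : ℝ) ≤ 1 / μ) :
    ∃ Q : V → F3, Perp (2 * d + 2) Q ∧ (dis P Q : ℝ) ≤ 6 / μ := by
  have hN : (0 : ℝ) < Fintype.card (Af V) := by exact_mod_cast Fintype.card_pos
  have hWpos : (0 : ℝ) < W.card := lt_of_lt_of_le (by positivity) hW
  have high : ∀ S : Finset V, (∀ x ∈ S, 2 * (W.card : ℝ) ≤ 3 * nz W x) → (S.card : ℝ) ≤ 2 / μ := by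
    intro S hS
    have h1 := mix_high S W hS
    rw [le_div_iff₀ hμ]
    refine le_of_mul_le_mul_right ?_ hN
    calc (S.card : ℝ) * μ * Fintype.card (Af V) = S.card * (μ * Fintype.card (Af V)) := by ring
      _ ≤ S.card * W.card := by gcongr
      _ ≤ _ := h1
  obtain ⟨e, rfl⟩ : ∃ e, d = e + 1 := ⟨d - 1, by omega⟩
  have hK : 2 / μ ≤ 3 ^ e := by
    rw [div_le_iff₀ hμ]; rw [pow_succ] at hμd; linarith
  have hK' : 2 / μ ≤ 3 ^ (e + 1) := hK.trans (by rw [pow_succ]; nlinarith [pow_pos (show (0:ℝ) < 3 by norm_num) e])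
  -- C5
  have C5 : ∀ w ∈ W, ∀ w' ∈ W, ∀ x, ev w' x * R w x = ev w x * R w' x := by
    intro w hw w' hw'
    have q1 : Perp (2 * (e + 1)) (R w * ev w' - R w' * ev w) :=
      (Perp.mul (b := 1) (hR w hw) (ev_mem_one w')).sub (Perp.mul (b := 1) (hR w' hw') (ev_mem_one w))
    have q2 := min_dist (e + 1) _ q1 ((Finset.univ.filter fun x => (P * ev w) x ≠ R w x) ∪
      (Finset.univ.filter fun x => (P * ev w') x ≠ R w' x)) (by
        intro y hy
        simp only [Finset.mem_union, Finset.mem_filter, Finset.mem_univ, true_and]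
        by_contra hc
        push Not at hc
        apply hy
        simp only [Pi.sub_apply, Pi.mul_apply] at hc ⊢
        rw [← hc.1, ← hc.2]; ring) (by
        refine (Finset.card_union_le _ _).trans ?_
        have a1 := hdis w hw
        have a2 := hdis w' hw'
        unfold dis at a1 a2
        have a3 : 2 / μ = 1 / μ + 1 / μ := by ring
        have := (add_le_add a1 a2).trans (a3 ▸ hK')
        exact_mod_cast this)
    intro x
    have := congrFun q2 x
    simp only [Pi.sub_apply, Pi.mul_apply, Pi.zero_apply] at this
    linear_combination this
  set T : V → F3 := fun x => if h : ∃ w, w ∈ W ∧ ev w x ≠ 0 then R h.choose x * ev h.choose x else 0 with hT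
  have T1 : ∀ x, (∃ w, w ∈ W ∧ ev w x ≠ 0) → ∀ w ∈ W, T x * ev w x = R w x := by
    intro x hx w hw
    simp only [hT, dif_pos hx]
    have h1 := hx.choose_spec
    have h2 := C5 w hw _ h1.1 x
    have h3 := f3_sq _ h1.2
    linear_combination (R w x) * h3 - (ev hx.choose x) * h2
  have T2 : ∀ x, (¬ ∃ w, w ∈ W ∧ ev w x ≠ 0) → T x = 0 := by
    intro x hx
    simp only [hT, dif_neg hx]
  set Z : Finset V := Finset.univ.filter fun x => ¬ ∃ w, w ∈ W ∧ ev w x ≠ 0 with hZ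
  have hZc : (Z.card : ℝ) ≤ 2 / μ := by
    refine high Z ?_
    intro x hx
    simp only [hZ, Finset.mem_filter, Finset.mem_univ, true_and] at hx
    push Not at hx
    have : nz W x = W.card := by
      unfold nz
      rw [Finset.filter_true_of_mem hx]
    rw [this]; linarith
  have T3 : ∀ w ∈ W, T * ev w = R w := by
    intro w hw
    have q1 : Perp (2 * e) (R w * ind w) :=
      Perp.mul (b := 2) ((hR w hw).mono (by omega)) (ind_mem w)
    have hform : ∀ x, (R w * ind w) x = R w x - T x * ev w x := by
      intro x
      by_cases hx : ∃ w, w ∈ W ∧ ev w x ≠ 0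
      · rw [T1 x hx w hw, sub_self]
        rw [Pi.mul_apply, ind_eq]
        split_ifs with h0
        · rw [← T1 x hx w hw, h0]; simp
        · simp
      · rw [T2 x hx]
        push Not at hx
        rw [Pi.mul_apply, ind_eq, if_pos (hx w hw)]; simp
    have q2 := min_dist e _ q1 Z (by
      intro x hx
      rw [hform] at hx
      simp only [hZ, Finset.mem_filter, Finset.mem_univ, true_and]
      intro hx'
      exact hx (by rw [T1 x hx' w hw, sub_self])) (by exact_mod_cast hZc.trans hK)
    ext x
    have := hform x
    rw [q2] at this
    simp only [Pi.zero_apply] at this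
    exact (sub_eq_zero.mp this.symm).symm
  let I : Submodule F3 (Af V) := 
    { carrier := {b | Perp (2 * (e + 1) + 1) (T * ev b)}
      add_mem' := by
        intro a b ha hb
        change Perp _ _ at ha hb
        change Perp _ _
        rw [map_add, mul_add (T)]; exact ha.add hb
      zero_mem' := by
        simp only [Set.mem_ofPred_eq, map_zero, mul_zero]; exact Perp.zero
      smul_mem' := by
        intro c a ha
        simp only [Set.mem_ofPred_eq] at *
        rw [map_smul, mul_smul_comm]; exact ha.smul c }
  obtain ⟨Q, hQ1, hQ2⟩ := lemL I T (2 * (e + 1) + 1) (fun u hu => hu)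
  refine ⟨Q, hQ1, ?_⟩
  have hIW : (W.card : ℝ) ≤ Nat.card I := by
    rw [Nat.card_eq_fintype_card, Fintype.card_subtype]
    have : W ⊆ Finset.univ.filter fun b => b ∈ I := by
      intro w hw
      simp only [Finset.mem_filter, Finset.mem_univ, true_and]
      change Perp _ _
      rw [T3 w hw]; exact hR w hw
    exact_mod_cast Finset.card_le_card this
  have d1 : (dis T Q : ℝ) ≤ 1 / μ := by
    rw [le_div_iff₀ hμ]
    refine le_of_mul_le_mul_right ?_ hN
    have h2 : (dis T Q : ℝ) * Nat.card I ≤ Fintype.card (Af V) := by exact_mod_cast hQ2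
    calc (dis T Q : ℝ) * μ * Fintype.card (Af V) = dis T Q * (μ * Fintype.card (Af V)) := by ring
      _ ≤ dis T Q * Nat.card I := by gcongr; exact hW.trans hIW
      _ ≤ _ := by linarith
  -- C7
  set S1 : Finset V := Finset.univ.filter fun x => 2 * (W.card : ℝ) ≤ 3 * nz W x with hS1
  set S2 : Finset V := Finset.univ.filter fun x => P x ≠ T x ∧ ¬ (2 * (W.card : ℝ) ≤ 3 * nz W x) with hS2
  have s1 : (S1.card : ℝ) ≤ 2 / μ := high S1 (fun x hx => (Finset.mem_filter.mp hx).2)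
  have s2 : (1 / 3) * (S2.card : ℝ) ≤ 1 / μ := by
    refine dcount S2 W hWpos (fun w x => (P * ev w) x ≠ R w x) (1 / 3) (1 / μ) ?_ (fun w hw => hdis w hw)
    intro x hx
    obtain ⟨hx1, hx2⟩ := (Finset.mem_filter.mp hx).2
    have a1 : (W.filter fun w => ¬ ev w x = 0) ⊆ (W.filter fun w => (P * ev w) x ≠ R w x) := by
      intro w hw
      simp only [Finset.mem_filter] at hw ⊢
      refine ⟨hw.1, ?_⟩
      rw [← T3 w hw.1]
      simp only [Pi.mul_apply]
      intro hc
      exact hx1 (mul_right_cancel₀ hw.2 hc)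
    have a2 := Finset.card_le_card a1
    have a3 := Finset.card_filter_add_card_filter_not (s := W) (fun w => ev w x = 0)
    have a4 : ((W.filter fun w => ev w x = 0).card : ℝ) + ((W.filter fun w => ¬ ev w x = 0).card : ℝ) = W.card := by
      exact_mod_cast a3
    have a5 : ((W.filter fun w => ¬ ev w x = 0).card : ℝ) ≤ ((W.filter fun w => (P * ev w) x ≠ R w x).card : ℝ) := by
      exact_mod_cast a2
    unfold nz at hx2
    linarith
  have hsub : (Finset.univ.filter fun x => P x ≠ Q x) ⊆
      (S1 ∪ S2) ∪ (Finset.univ.filter fun x => T x ≠ Q x) := by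
    intro x hx
    simp only [hS1, hS2, Finset.mem_union, Finset.mem_filter, Finset.mem_univ, true_and] at hx ⊢
    by_cases h1 : T x ≠ Q x
    · exact Or.inr h1
    · push Not at h1
      rw [← h1] at hx
      by_cases h2 : 2 * (W.card : ℝ) ≤ 3 * nz W x
      · exact Or.inl (Or.inl h2)
      · exact Or.inl (Or.inr ⟨hx, h2⟩)
  have h5 : dis P Q ≤ S1.card + S2.card + dis T Q := by
    unfold dis
    refine (Finset.card_le_card hsub).trans ((Finset.card_union_le _ _).trans ?_)
    have := Finset.card_union_le S1 S2
    omega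
  have h6 : (dis P Q : ℝ) ≤ S1.card + S2.card + dis T Q := by exact_mod_cast h5
  have : 6 / μ = 2 / μ + 3 * (1 / μ) + 1 / μ := by ring
  linarith

lemma core (d : ℕ) (hd1 : 1 ≤ d) (f : V → F3) (G : Finset (Af V)) (g : Af V → V → F3)
    (hs : ∀ u ∈ G, ∀ x, ev u x ≠ 0 → g u x = 0) (hp : ∀ u ∈ G, Perp (2 * d) (g u))
    (hd : ∀ u ∈ G, 12 * (Finset.univ.filter fun x => ev u x = 0 ∧ f x ≠ g u x).card < 3 ^ d)
    (η : ℝ) (h0 : 0 < η) (h1 : η ≤ 1) (hη : η * Fintype.card (Af V) ≤ G.card)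
    (hbig : 20 ≤ η ^ 2 * 3 ^ d) :
    ∃ Q : V → F3, Perp (2 * d + 2) Q ∧ 2 * dis f Q ≤ 3 ^ (d + 1) := by
  have hN : (0 : ℝ) < Fintype.card (Af V) := by exact_mod_cast Fintype.card_pos
  have hGpos : (0 : ℝ) < G.card := lt_of_lt_of_le (by positivity) hη
  have C1 : ∀ u ∈ G, ∀ v ∈ G, ∀ x, ev u x = 0 → ev v x = 0 → g u x = g v x := fun u hu v hv x =>
    c1 d hd1 f _ _ u v (hs u hu) (hs v hv) (hp u hu) (hp v hv) (hd u hu) (hd v hv) x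
  set P : V → F3 := fun x => if h : ∃ u, u ∈ G ∧ ev u x = 0 then g h.choose x else 0 with hP
  have P1 : ∀ u ∈ G, ∀ x, ev u x = 0 → P x = g u x := by
    intro u hu x hx
    have hex : ∃ u, u ∈ G ∧ ev u x = 0 := ⟨u, hu, hx⟩
    simp only [hP, dif_pos hex]
    exact C1 _ hex.choose_spec.1 u hu x hex.choose_spec.2 hx
  have P2 : ∀ u ∈ G, P * ind u = g u := by
    intro u hu
    ext x
    rw [Pi.mul_apply, ind_eq]
    split_ifs with h
    · rw [mul_one, P1 u hu x h]
    · rw [hs u hu x h, mul_zero]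
  -- C3
  set S1 : Finset V := Finset.univ.filter fun x => 6 * (nz G x : ℝ) ≤ G.card with hS1
  set S2 : Finset V := Finset.univ.filter fun x => f x ≠ P x ∧ ¬ (6 * (nz G x : ℝ) ≤ G.card) with hS2
  have s1 : (S1.card : ℝ) ≤ 8 / η := by
    have h1 := mix_low S1 G (fun x hx => (Finset.mem_filter.mp hx).2)
    rw [le_div_iff₀ h0]
    refine le_of_mul_le_mul_right ?_ hN
    calc (S1.card : ℝ) * η * Fintype.card (Af V) = S1.card * (η * Fintype.card (Af V)) := by ring
      _ ≤ S1.card * G.card := by gcongr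
      _ ≤ _ := h1
  have s2 : (1 / 6) * (S2.card : ℝ) ≤ 3 ^ d / 12 := by
    refine dcount S2 G hGpos (fun u x => ev u x = 0 ∧ f x ≠ g u x) (1 / 6) _ ?_ ?_
    · intro x hx
      obtain ⟨hx1, hx2⟩ := (Finset.mem_filter.mp hx).2
      have : (G.filter fun u => ev u x = 0) ⊆ (G.filter fun u => ev u x = 0 ∧ f x ≠ g u x) := by
        intro u hu
        simp only [Finset.mem_filter] at hu ⊢
        exact ⟨hu.1, hu.2, by rw [← P1 u hu.1 x hu.2]; exact hx1⟩
      have a1 : ((G.filter fun u => ev u x = 0).card : ℝ) ≤ ((G.filter fun u => ev u x = 0 ∧ f x ≠ g u x).card : ℝ) := by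
        exact_mod_cast Finset.card_le_card this
      unfold nz at hx2
      linarith
    · intro u hu
      have := hd u hu
      have h2 : 12 * ((Finset.univ.filter fun x => ev u x = 0 ∧ f x ≠ g u x).card : ℝ) < 3 ^ d := by
        exact_mod_cast this
      linarith
  obtain ⟨W, hW1, hW2⟩ := c4 (2 * d) P G (fun u hu => by rw [P2 u hu]; exact hp u hu) η h0 hη
  set μ : ℝ := η ^ 2 / 2 with hμ
  have hμ0 : 0 < μ := by positivity
  have hRex : ∀ w : Af V, ∃ R : V → F3, w ∈ W → (Perp (2 * d + 1) R ∧ (dis (P * ev w) R : ℝ) ≤ 1 / μ) := by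
    intro w
    by_cases hw : w ∈ W
    · obtain ⟨R, r1, r2⟩ := lemL (Vw (2 * d) P w) (P * ev w) (2 * d) (fun u hu => hu)
      refine ⟨R, fun _ => ⟨r1, ?_⟩⟩
      rw [le_div_iff₀ hμ0]
      refine le_of_mul_le_mul_right ?_ hN
      have h2 : (dis (P * ev w) R : ℝ) * Nat.card (Vw (2 * d) P w) ≤ Fintype.card (Af V) := by exact_mod_cast r2
      calc (dis (P * ev w) R : ℝ) * μ * Fintype.card (Af V) = dis (P * ev w) R * (μ * Fintype.card (Af V)) := by ring
        _ ≤ dis (P * ev w) R * Nat.card (Vw (2 * d) P w) := by gcongr; exact hW2 w hw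
        _ ≤ _ := by linarith
    · exact ⟨0, fun h => absurd h hw⟩
  choose R hR using hRex
  obtain ⟨Q, Q1, Q2⟩ := c56 d hd1 P W μ hμ0 hW1 (by rw [hμ]; linarith) R
    (fun w hw => (hR w hw).1) (fun w hw => (hR w hw).2)
  refine ⟨Q, Q1, ?_⟩
  have hsub : (Finset.univ.filter fun x => f x ≠ Q x) ⊆
      (S1 ∪ S2) ∪ (Finset.univ.filter fun x => P x ≠ Q x) := by
    intro x hx
    simp only [hS1, hS2, Finset.mem_union, Finset.mem_filter, Finset.mem_univ, true_and] at hx ⊢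
    by_cases h1 : P x ≠ Q x
    · exact Or.inr h1
    · push Not at h1
      rw [← h1] at hx
      by_cases h2 : 6 * (nz G x : ℝ) ≤ G.card
      · exact Or.inl (Or.inl h2)
      · exact Or.inl (Or.inr ⟨hx, h2⟩)
  have h5 : dis f Q ≤ S1.card + S2.card + dis P Q := by
    unfold dis
    refine (Finset.card_le_card hsub).trans ((Finset.card_union_le _ _).trans ?_)
    have := Finset.card_union_le S1 S2
    omega
  have h6 : (dis f Q : ℝ) ≤ S1.card + S2.card + dis P Q := by exact_mod_cast h5
  have h7 : 8 / η ≤ 8 / η ^ 2 := by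
    apply div_le_div_of_nonneg_left (by norm_num) (by positivity)
    nlinarith
  have h8 : 6 / μ = 12 / η ^ 2 := by rw [hμ]; field_simp; norm_num
  have h9 : 20 / η ^ 2 ≤ 3 ^ d := by
    rw [div_le_iff₀ (by positivity)]; linarith
  have h10 : 20 / η ^ 2 = 8 / η ^ 2 + 12 / η ^ 2 := by ring
  have : 2 * (dis f Q : ℝ) ≤ 3 ^ (d + 1) := by
    rw [pow_succ]; linarith
  exact_mod_cast this

end core

section tuples
variable {V : Type} [AddCommGroup V] [Module F3 V]

/-- linear parts independent -/
def LI {d : ℕ} (u : Fin d → Af V) : Prop := LinearIndependent F3 (fun i => (u i).1)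

variable [Fintype V]

/-- the test rejects -/
def Rj {d : ℕ} (f : V → F3) (u : Fin d → Af V) : Prop := ∑ x, f x * ∏ i, ind (u i) x ≠ 0

noncomputable def TT (d : ℕ) (V : Type) [AddCommGroup V] [Module F3 V] [Fintype V] : ℕ :=
  (Finset.univ.filter fun u : Fin d → Af V => LI u).card

noncomputable def NN (d : ℕ) (f : V → F3) : ℕ :=
  (Finset.univ.filter fun u : Fin d → Af V => LI u ∧ Rj f u).card

/-- conditioned versions -/
noncomputable def Tu (d : ℕ) (u : Af V) : ℕ :=
  (Finset.univ.filter fun w : Fin d → Af V => LI (Fin.cons u w : Fin (d + 1) → Af V)).card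

noncomputable def Nu (d : ℕ) (f : V → F3) (u : Af V) : ℕ :=
  (Finset.univ.filter fun w : Fin d → Af V => LI (Fin.cons u w : Fin (d + 1) → Af V) ∧
    Rj f (Fin.cons u w : Fin (d + 1) → Af V)).card

lemma cons_card (d : ℕ) (p : (Fin (d + 1) → Af V) → Prop) [DecidablePred p] :
    (Finset.univ.filter fun u => p u).card =
      ∑ u : Af V, (Finset.univ.filter fun w : Fin d → Af V => p (Fin.cons u w)).card := by
  simp only [Finset.card_filter]
  rw [← (Fin.consEquiv (fun _ : Fin (d + 1) => Af V)).sum_comp, Fintype.sum_prod_type]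
  rfl

lemma TT_succ (d : ℕ) : TT (d + 1) V = ∑ u : Af V, Tu d u := cons_card d _

lemma NN_succ (d : ℕ) (f : V → F3) : NN (d + 1) f = ∑ u : Af V, Nu d f u := cons_card d _

lemma Tu_zero (d : ℕ) (u : Af V) (hu : u.1 = 0) : Tu d u = 0 := by
  unfold Tu
  rw [Finset.card_eq_zero, Finset.filter_eq_empty_iff]
  intro w _ h
  exact LinearIndependent.ne_zero 0 h (by simpa using hu)

lemma prod_ind_mem {d : ℕ} (u : Fin d → Af V) : (fun x => ∏ i, ind (u i) x) ∈ (aff V) ^ (2 * d) := by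
  induction d with
  | zero => exact one_mem_pow (V := V) (2 * 0)
  | succ d ih =>
    have h1 := mul_mem_pow (ind_mem (u 0)) (ih (Fin.tail u))
    rw [show 2 * (d + 1) = 2 + 2 * d by ring]
    convert h1 using 1
    ext x
    rw [Fin.prod_univ_succ]; rfl

/-- all vectors with the linear parts independent -/
noncomputable def LL (d : ℕ) (V : Type) [AddCommGroup V] [Module F3 V] [Fintype V] : ℕ :=
  (Finset.univ.filter fun v : Fin d → Module.Dual F3 V => LinearIndependent F3 v).card

lemma card_one_pt (d : ℕ) (x : V) :
    (Finset.univ.filter fun u : Fin d → Af V => LI u ∧ ∀ i, ev (u i) x = 0).card = LL d V := by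
  unfold LL
  symm
  refine Finset.card_bij (fun v _ => fun i => (v i, - v i x)) ?_ ?_ ?_
  · intro v hv
    simp only [Finset.mem_filter, Finset.mem_univ, true_and] at hv ⊢
    exact ⟨hv, fun i => by simp⟩
  · intro v _ v' _ h
    ext1 i
    exact congrArg Prod.fst (congrFun h i)
  · intro u hu
    simp only [Finset.mem_filter, Finset.mem_univ, true_and] at hu
    refine ⟨fun i => (u i).1, by simp only [Finset.mem_filter, Finset.mem_univ, true_and]; exact hu.1, ?_⟩
    ext1 i
    refine Prod.ext rfl ?_
    have := hu.2 i
    simp only [ev_apply] at this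
    exact (eq_neg_of_add_eq_zero_right this).symm

lemma TT_eq (d : ℕ) : TT d V = LL d V * 3 ^ d := by
  unfold TT LL
  have : 3 ^ d = (Finset.univ : Finset (Fin d → F3)).card := by simp [ZMod.card]
  rw [this, ← Finset.card_product]
  refine Finset.card_bij' (fun u _ => (fun i => (u i).1, fun i => (u i).2))
    (fun p _ => fun i => (p.1 i, p.2 i)) ?_ ?_ ?_ ?_
  · intro u hu
    simp only [Finset.mem_filter, Finset.mem_univ, true_and, Finset.mem_product, and_true] at hu ⊢
    exact hu
  · intro u hu
    simp only [Finset.mem_filter, Finset.mem_univ, true_and, Finset.mem_product, and_true] at hu ⊢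
    exact hu
  · intro u _; rfl
  · intro u _; rfl

lemma card_two_pt (d : ℕ) (x y : V) (hxy : x ≠ y) :
    (Finset.univ.filter fun u : Fin d → Af V => LI u ∧ (∀ i, ev (u i) x = 0) ∧ ∀ i, ev (u i) y = 0).card * 3 ^ d
      ≤ LL d V := by
  obtain ⟨b, hb⟩ := exists_dual_ne (sub_ne_zero.mpr hxy)
  have : 3 ^ d = (Finset.univ : Finset (Fin d → F3)).card := by simp [ZMod.card]
  rw [this, ← Finset.card_product]
  unfold LL
  have hz : ∀ u : Fin d → Af V, (∀ i, ev (u i) x = 0) → (∀ i, ev (u i) y = 0) →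
      ∀ i, (u i).1 (x - y) = 0 := by
    intro u h1 h2 i
    have e1 := h1 i
    have e2 := h2 i
    simp only [ev_apply] at e1 e2
    rw [map_sub]
    linear_combination e1 - e2
  refine Finset.card_le_card_of_injOn (fun p => fun i => (p.1 i).1 + p.2 i • b) ?_ ?_
  · rintro ⟨u, t⟩ h
    simp only [Finset.mem_coe, Finset.mem_product, Finset.mem_filter, Finset.mem_univ, true_and, and_true] at h ⊢
    obtain ⟨h1, h2, h3⟩ := h
    rw [Fintype.linearIndependent_iff]
    intro a ha
    have hz' := hz u h2 h3
    have e1 : ∑ i, a i * t i = 0 := by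
      have := LinearMap.congr_fun ha (x - y)
      simp only [LinearMap.sum_apply, LinearMap.smul_apply, LinearMap.add_apply, hz', hb, zero_add,
        smul_eq_mul, mul_one, LinearMap.zero_apply] at this
      exact this
    have e2 : ∑ i, a i • (u i).1 = 0 := by
      simp only [smul_add, Finset.sum_add_distrib, smul_smul, ← Finset.sum_smul, e1, zero_smul, add_zero] at ha
      exact ha
    exact Fintype.linearIndependent_iff.mp h1 a e2
  · rintro ⟨u, t⟩ h ⟨u', t'⟩ h' heq
    simp only [Finset.mem_coe, Finset.mem_product, Finset.mem_filter, Finset.mem_univ, true_and, and_true] at h h'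
    have z1 := hz u h.2.1 h.2.2
    have z2 := hz u' h'.2.1 h'.2.2
    have ht : t = t' := by
      ext1 i
      have := LinearMap.congr_fun (congrFun heq i) (x - y)
      simpa [z1 i, z2 i, hb] using this
    subst ht
    have hu : u = u' := by
      ext1 i
      have e1 : (u i).1 = (u' i).1 := by
        have := congrFun heq i
        exact add_right_cancel this
      refine Prod.ext e1 ?_
      have a1 := h.2.1 i
      have a2 := h'.2.1 i
      simp only [ev_apply] at a1 a2
      rw [e1] at a1
      linear_combination a1 - a2
    rw [hu]

lemma stepA (d : ℕ) (f g : V → F3) (hg : Perp (2 * d) g) :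
    (TT d V : ℝ) * ((dis f g : ℝ) / 3 ^ d - ((dis f g : ℝ) / 3 ^ d) ^ 2) ≤ NN d f := by
  set S : Finset V := Finset.univ.filter fun x => f x ≠ g x with hS
  set m : ℝ := (dis f g : ℝ) with hm
  have hmS : (S.card : ℝ) = m := rfl
  let on : (Fin d → Af V) → V → Prop := fun u x => ∀ i, ev (u i) x = 0
  let c : (Fin d → Af V) → ℝ := fun u => ∑ x ∈ S, if on u x then 1 else 0
  set U : Finset (Fin d → Af V) := Finset.univ.filter fun u => LI u with hU
  have hprod : ∀ (u : Fin d → Af V) x, ∏ i, ind (u i) x = if on u x then 1 else 0 := by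
    intro u x
    split_ifs with h
    · exact Finset.prod_eq_one fun i _ => by rw [ind_eq, if_pos (h i)]
    · simp only [on] at h
      push Not at h
      obtain ⟨i, hi⟩ := h
      exact Finset.prod_eq_zero (Finset.mem_univ i) (by rw [ind_eq, if_neg hi])
  have h1 : ∑ u ∈ U, (2 * c u - c u * c u) ≤ NN d f := by
    have : (NN d f : ℝ) = ∑ u ∈ U, if Rj f u then (1 : ℝ) else 0 := by
      unfold NN
      rw [Finset.card_filter]
      push_cast
      rw [hU, Finset.sum_filter]
      refine Finset.sum_congr rfl fun u _ => ?_
      by_cases h1 : LI u <;> by_cases h2 : Rj f u <;> simp [h1, h2]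
    rw [this]
    refine Finset.sum_le_sum fun u _ => ?_
    have hc : c u = ((S.filter fun x => on u x).card : ℝ) := by
      simp only [c]
      rw [Finset.card_filter]; push_cast; rfl
    generalize hk : (S.filter fun x => on u x).card = k at hc
    rcases Nat.lt_trichotomy k 1 with h | h | h
    · have : k = 0 := by omega
      rw [hc, this]
      split_ifs <;> norm_num
    · have hr : Rj f u := by
        rw [h, Finset.card_eq_one] at hk
        obtain ⟨x₀, hx₀⟩ := hk
        have hx0 : x₀ ∈ S.filter fun x => on u x := by rw [hx₀]; simp
        obtain ⟨a1, a2⟩ := Finset.mem_filter.mp hx0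
        have hgz := hg _ (prod_ind_mem u)
        unfold Rj
        intro hfz
        have hdz : ∑ x, (f x - g x) * ∏ i, ind (u i) x = 0 := by
          simp only [sub_mul, Finset.sum_sub_distrib, hfz, hgz, sub_zero]
        rw [Finset.sum_eq_single x₀] at hdz
        · rw [hprod, if_pos a2, mul_one] at hdz
          exact (Finset.mem_filter.mp a1).2 (sub_eq_zero.mp hdz)
        · intro x _ hx
          by_cases hxS : x ∈ S
          · have : ¬ on u x := by
              intro ho
              have : x ∈ S.filter fun x => on u x := Finset.mem_filter.mpr ⟨hxS, ho⟩
              rw [hx₀] at this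
              exact hx (Finset.mem_singleton.mp this)
            rw [hprod, if_neg this, mul_zero]
          · have : f x = g x := by
              by_contra hne
              exact hxS (Finset.mem_filter.mpr ⟨Finset.mem_univ _, hne⟩)
            rw [this]; simp
        · simp
      rw [if_pos hr, hc, h]; norm_num
    · have : (2 : ℝ) ≤ k := by exact_mod_cast h
      rw [hc]
      split_ifs <;> nlinarith
  refine le_trans ?_ h1
  have e1 : ∑ u ∈ U, c u = m * LL d V := by
    simp only [c]
    rw [Finset.sum_comm]
    have : ∀ x ∈ S, (∑ u ∈ U, if on u x then (1 : ℝ) else 0) = LL d V := by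
      intro x _
      rw [← card_one_pt d x, Finset.card_filter]
      push_cast
      rw [hU, Finset.sum_filter]
      refine Finset.sum_congr rfl fun u _ => ?_
      by_cases h1 : LI u <;> by_cases h2 : on u x <;>
                simp only [on] at h2 <;> simp only [on, h1, h2] <;> simp
    rw [Finset.sum_congr rfl this]
    simp [hmS]
  have e2 : ∑ u ∈ U, c u * c u ≤ m * LL d V + m * (m * (LL d V / 3 ^ d)) := by
    simp only [c, Finset.sum_mul_sum]
    rw [Finset.sum_comm]
    have key : ∀ x ∈ S, ∑ u ∈ U, ∑ y ∈ S, (if on u x then (1 : ℝ) else 0) * (if on u y then 1 else 0) ≤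
        LL d V + m * (LL d V / 3 ^ d) := by
      intro x hx
      rw [Finset.sum_comm]
      have k2 : ∀ y ∈ S, ∑ u ∈ U, (if on u x then (1 : ℝ) else 0) * (if on u y then 1 else 0) ≤
          (if x = y then (LL d V : ℝ) else 0) + LL d V / 3 ^ d := by
        intro y _
        by_cases hxy : x = y
        · subst hxy
          rw [if_pos rfl]
          have : ∑ u ∈ U, (if on u x then (1 : ℝ) else 0) * (if on u x then 1 else 0) = LL d V := by
            rw [← card_one_pt d x, Finset.card_filter]
            push_cast
            rw [hU, Finset.sum_filter]
            refine Finset.sum_congr rfl fun u _ => ?_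
            by_cases h1 : LI u <;> by_cases h2 : on u x <;>
                simp only [on] at h2 <;> simp only [on, h1, h2] <;> simp
          rw [this]
          have : (0 : ℝ) ≤ LL d V / 3 ^ d := by positivity
          linarith
        · rw [if_neg hxy, zero_add]
          have : ∑ u ∈ U, (if on u x then (1 : ℝ) else 0) * (if on u y then 1 else 0) =
              ((Finset.univ.filter fun u : Fin d → Af V => LI u ∧ (∀ i, ev (u i) x = 0) ∧ ∀ i, ev (u i) y = 0).card : ℝ) := by
            rw [Finset.card_filter]
            push_cast
            rw [hU, Finset.sum_filter]
            refine Finset.sum_congr rfl fun u _ => ?_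
            by_cases h1 : LI u <;> by_cases h2 : on u x <;> by_cases h3 : on u y <;> 
              simp only [on] at h2 h3 <;> simp only [on, h1, h2, h3] <;> simp
          rw [this, le_div_iff₀ (by positivity)]
          exact_mod_cast card_two_pt d x y hxy
      refine (Finset.sum_le_sum k2).trans ?_
      rw [Finset.sum_add_distrib, Finset.sum_ite_eq, if_pos hx]
      simp [hmS]
    refine (Finset.sum_le_sum key).trans ?_
    simp only [Finset.sum_const, nsmul_eq_mul, hmS]
    linarith
  rw [Finset.sum_sub_distrib, ← Finset.mul_sum, e1, TT_eq]
  push_cast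
  have e3 : (LL d V : ℝ) * 3 ^ d * (m / 3 ^ d - (m / 3 ^ d) ^ 2) = m * LL d V - m * (m * (LL d V / 3 ^ d)) := by
    field_simp
  rw [e3]
  linarith

end tuples

section hyper
variable {V : Type} [AddCommGroup V] [Module F3 V] [Fintype V]

/-- a base point of the hyperplane `u = 0` -/
noncomputable def x0 (u : Af V) : V := if h : ∃ x, ev u x = 0 then h.choose else 0

lemma x0_spec (u : Af V) (hu : u.1 ≠ 0) : ev u (x0 u) = 0 := by
  have h : ∃ x, ev u x = 0 := by
    obtain ⟨y, hy⟩ : ∃ y, u.1 y ≠ 0 := by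
      by_contra hc
      push Not at hc
      exact hu (LinearMap.ext hc)
    refine ⟨(-u.2 * (u.1 y)) • y, ?_⟩
    have := f3_sq _ hy
    simp only [ev_apply, map_smul, smul_eq_mul]
    linear_combination (-u.2) * this
  unfold x0
  rw [dif_pos h]; exact h.choose_spec

abbrev K (u : Af V) : Submodule F3 V := LinearMap.ker u.1

noncomputable def mm (u : Af V) (y : K u) : V := (y : V) + x0 u

lemma ev_mm (u : Af V) (hu : u.1 ≠ 0) (y : K u) : ev u (mm u y) = 0 := by
  have h1 := x0_spec u hu
  have h2 : u.1 (y : V) = 0 := y.2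
  simp only [ev_apply, mm, map_add] at *
  rw [h2, zero_add, h1]

lemma mm_inj (u : Af V) : Function.Injective (mm u) := by
  intro a b h
  exact Subtype.ext (add_right_cancel h)

lemma mm_surj (u : Af V) (hu : u.1 ≠ 0) (x : V) (hx : ev u x = 0) : ∃ y, mm u y = x := by
  have h1 := x0_spec u hu
  refine ⟨⟨x - x0 u, ?_⟩, by simp [mm]⟩
  simp only [ev_apply] at *
  rw [LinearMap.mem_ker, map_sub]
  linear_combination hx - h1

lemma sum_H (u : Af V) (hu : u.1 ≠ 0) (F : V → F3) :
    ∑ x, F x * ind u x = ∑ y : K u, F (mm u y) := by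
  have h1 : ∑ x, F x * ind u x = ∑ x ∈ Finset.univ.filter (fun x => ev u x = 0), F x := by
    rw [Finset.sum_filter]
    refine Finset.sum_congr rfl fun x _ => ?_
    rw [ind_eq]; split_ifs <;> simp
  rw [h1]
  symm
  refine Finset.sum_bij (fun y _ => mm u y) ?_ ?_ ?_ ?_
  · intro y _
    simp only [Finset.mem_filter, Finset.mem_univ, true_and]
    exact ev_mm u hu y
  · intro a _ b _ h; exact mm_inj u h
  · intro x hx
    obtain ⟨y, hy⟩ := mm_surj u hu x (Finset.mem_filter.mp hx).2
    exact ⟨y, Finset.mem_univ _, hy⟩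
  · intro y _; rfl

/-- restriction of affine forms -/
noncomputable def res (u : Af V) : Af V →ₗ[F3] Af (K u) where
  toFun w := (w.1 ∘ₗ (K u).subtype, ev w (x0 u))
  map_add' := by
    intro a b
    rw [map_add]; rfl
  map_smul' := by
    intro a b
    rw [map_smul]; rfl

lemma ev_res (u w : Af V) (y : K u) : ev (res u w) y = ev w (mm u y) := by
  simp [res, mm]; ring

lemma ind_res (u w : Af V) (y : K u) : ind (res u w) y = ind w (mm u y) := by
  unfold ind; rw [ev_res]

lemma res_surj (u : Af V) : Function.Surjective (res u) := by
  rintro ⟨v, c⟩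
  obtain ⟨π, hπ⟩ := (K u).subtype.exists_leftInverse_of_injective (by simp)
  refine ⟨(v ∘ₗ π, c - v (π (x0 u))), ?_⟩
  refine Prod.ext ?_ ?_
  · change (v ∘ₗ π) ∘ₗ (K u).subtype = v
    rw [LinearMap.comp_assoc, hπ, LinearMap.comp_id]
  · simp [res]

lemma res_fst_zero (u : Af V) (hu : u.1 ≠ 0) (v : Module.Dual F3 V) (h : v ∘ₗ (K u).subtype = 0) :
    ∃ t : F3, v = t • u.1 := by
  have h1 : LinearMap.ker u.1 ≤ LinearMap.ker v := by
    intro x hx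
    exact LinearMap.congr_fun h ⟨x, hx⟩
  obtain ⟨y, hy⟩ : ∃ y, u.1 y ≠ 0 := by
      by_contra hc
      push Not at hc
      exact hu (LinearMap.ext hc)
  refine ⟨v y * u.1 y, ?_⟩
  ext x
  have h2 : x - (u.1 x * u.1 y) • y ∈ LinearMap.ker u.1 := by
    have := f3_sq _ hy
    rw [LinearMap.mem_ker, map_sub, map_smul, smul_eq_mul]
    linear_combination (-(u.1 x)) * this
  have h3 := h1 h2
  rw [LinearMap.mem_ker, map_sub, map_smul, smul_eq_mul] at h3
  simp only [LinearMap.smul_apply, smul_eq_mul]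
  linear_combination h3

lemma LI_cons (d : ℕ) (u : Af V) (hu : u.1 ≠ 0) (w : Fin d → Af V) :
    LI (Fin.cons u w : Fin (d + 1) → Af V) ↔ LI (fun i => res u (w i)) := by
  have hform : (fun i => ((Fin.cons u w : Fin (d + 1) → Af V) i).1) =
      (Fin.cons u.1 (fun i => (w i).1) : Fin (d + 1) → Module.Dual F3 V) := by
    ext1 i
    refine Fin.cases ?_ (fun j => ?_) i <;> simp
  unfold LI
  rw [hform]
  constructor
  · intro h
    rw [Fintype.linearIndependent_iff] at h ⊢
    intro a ha
    have h1 : (∑ i, a i • (w i).1) ∘ₗ (K u).subtype = 0 := by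
      rw [← ha]
      ext y
      simp [res, LinearMap.sum_apply]
    obtain ⟨t, ht⟩ := res_fst_zero u hu _ h1
    have h2 := h (Fin.cons (-t) a) (by
      rw [Fin.sum_univ_succ]
      simp only [Fin.cons_zero, Fin.cons_succ]
      rw [ht]; simp)
    intro i
    simpa using h2 i.succ
  · intro h
    rw [Fintype.linearIndependent_iff] at h ⊢
    intro a ha
    rw [Fin.sum_univ_succ] at ha
    simp only [Fin.cons_zero, Fin.cons_succ] at ha
    have h1 := h (fun i => a i.succ) (by
      ext y
      have := LinearMap.congr_fun ha (y : V)
      have hy : u.1 (y : V) = 0 := y.2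
      simp only [LinearMap.add_apply, LinearMap.smul_apply, hy, smul_zero, zero_add, LinearMap.sum_apply] at this
      simpa [res, LinearMap.sum_apply] using this)
    have h0 : a 0 = 0 := by
      simp only [h1, zero_smul, Finset.sum_const_zero, add_zero] at ha
      exact (smul_eq_zero.mp ha).resolve_right hu
    intro i
    refine Fin.cases h0 h1 i

lemma Rj_cons (d : ℕ) (u : Af V) (hu : u.1 ≠ 0) (f : V → F3) (w : Fin d → Af V) :
    Rj f (Fin.cons u w : Fin (d + 1) → Af V) ↔ Rj (fun y => f (mm u y)) (fun i => res u (w i)) := by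
  unfold Rj
  have : ∑ x, f x * ∏ i, ind ((Fin.cons u w : Fin (d + 1) → Af V) i) x =
      ∑ y : K u, f (mm u y) * ∏ i, ind (res u (w i)) y := by
    simp only [ind_res]
    rw [← sum_H u hu (fun x => f x * ∏ i, ind (w i) x)]
    refine Finset.sum_congr rfl fun x _ => ?_
    rw [Fin.prod_univ_succ]
    simp only [Fin.cons_zero, Fin.cons_succ]
    ring
  rw [this]

noncomputable def kc {A B : Type} [AddCommGroup A] [AddCommGroup B] [Fintype A] (φ : A →+ B) : ℕ :=
  (Finset.univ.filter fun a => φ a = 0).card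

lemma fiber_card {A B : Type} [AddCommGroup A] [AddCommGroup B] [Fintype A] [Fintype B]
    (φ : A →+ B) (hφ : Function.Surjective φ) (p : B → Prop) [DecidablePred p] :
    (Finset.univ.filter fun a => p (φ a)).card =
      kc φ * (Finset.univ.filter fun b => p b).card := by
  have h1 := Finset.card_eq_sum_card_fiberwise (s := Finset.univ.filter fun a => p (φ a))
    (t := Finset.univ.filter fun b => p b) (f := φ) (by
      intro a ha
      simpa using ha)
  rw [h1, mul_comm, ← smul_eq_mul]
  refine Finset.sum_eq_card_nsmul ?_
  intro b hb
  obtain ⟨a₀, rfl⟩ := hφ b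
  unfold kc
  refine Finset.card_bij (fun a _ => a - a₀) ?_ ?_ ?_
  · intro a ha
    simp only [Finset.mem_filter, Finset.mem_univ, true_and] at ha ⊢
    rw [map_sub, ha.2, sub_self]
  · intro a _ b _ h; exact sub_left_inj.mp h
  · intro a ha
    simp only [Finset.mem_filter, Finset.mem_univ, true_and] at ha hb
    refine ⟨a + a₀, ?_, by simp⟩
    simp only [Finset.mem_filter, Finset.mem_univ, true_and, map_add, ha, zero_add]
    exact ⟨hb, trivial⟩

/-- tuple restriction -/
noncomputable def resT (d : ℕ) (u : Af V) : (Fin d → Af V) →+ (Fin d → Af (K u)) where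
  toFun w := fun i => res u (w i)
  map_zero' := by ext1 i; simp
  map_add' := by intro a b; ext1 i; simp

lemma resT_surj (d : ℕ) (u : Af V) : Function.Surjective (resT d u) := by
  intro w
  choose g hg using fun i => res_surj u (w i)
  exact ⟨g, funext hg⟩

lemma card_A (d : ℕ) (u : Af V) (hu : u.1 ≠ 0) :
    Tu d u = kc (resT d u) * TT d (K u) := by
  unfold Tu TT
  rw [← fiber_card (resT d u) (resT_surj d u)]
  congr 1
  ext w
  simp only [Finset.mem_filter, Finset.mem_univ, true_and]
  exact LI_cons d u hu w

lemma card_B (d : ℕ) (u : Af V) (hu : u.1 ≠ 0) (f : V → F3) :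
    Nu d f u = kc (resT d u) * NN d (fun y => f (mm u y)) := by
  unfold Nu NN
  rw [← fiber_card (resT d u) (resT_surj d u)]
  congr 1
  ext w
  simp only [Finset.mem_filter, Finset.mem_univ, true_and]
  rw [LI_cons d u hu w, Rj_cons d u hu f w]
  rfl

lemma ratio (d : ℕ) (u : Af V) (hu : u.1 ≠ 0) (f : V → F3) (κ : ℝ)
    (h : κ * TT d (K u) ≤ NN d (fun y => f (mm u y))) : κ * Tu d u ≤ Nu d f u := by
  rw [card_A d u hu, card_B d u hu]
  push_cast
  calc κ * ((kc (resT d u) : ℝ) * TT d (K u)) 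
      = (kc (resT d u) : ℝ) * (κ * TT d (K u)) := by ring
    _ ≤ _ := by gcongr

lemma LL_congr (d : ℕ) {V' : Type} [AddCommGroup V'] [Module F3 V'] [Fintype V'] (e : V ≃ₗ[F3] V') :
    LL d V = LL d V' := by
  unfold LL
  refine Finset.card_bij (fun v _ => fun i => e.symm.dualMap (v i)) ?_ ?_ ?_
  · intro v hv
    simp only [Finset.mem_filter, Finset.mem_univ, true_and] at hv ⊢
    exact hv.map' e.symm.dualMap.toLinearMap (LinearEquiv.ker _)
  · intro a _ b _ h
    ext1 i
    exact e.symm.dualMap.injective (congrFun h i)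
  · intro v hv
    simp only [Finset.mem_filter, Finset.mem_univ, true_and] at hv
    refine ⟨fun i => e.dualMap (v i), ?_, ?_⟩
    · simp only [Finset.mem_filter, Finset.mem_univ, true_and]
      exact hv.map' e.dualMap.toLinearMap (LinearEquiv.ker _)
    · ext i x; simp

lemma finrank_K (u : Af V) (hu : u.1 ≠ 0) : Module.finrank F3 (K u) + 1 = Module.finrank F3 V := by
  exact Module.Dual.finrank_ker_add_one_of_ne_zero hu

lemma Tu_const (d : ℕ) (u u' : Af V) (hu : u.1 ≠ 0) (hu' : u'.1 ≠ 0) : Tu d u = Tu d u' := by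
  have hf : Module.finrank F3 (K u) = Module.finrank F3 (K u') := by
    have h1 := finrank_K u hu
    have h2 := finrank_K u' hu'
    omega
  have e := LinearEquiv.ofFinrankEq (K u) (K u') hf
  have hT : TT d (K u) = TT d (K u') := by rw [TT_eq, TT_eq, LL_congr d e]
  have hc : ∀ u : Af V, kc (resT d u) *
      Fintype.card (Fin d → Af (K u)) = Fintype.card (Fin d → Af V) := by
    intro u
    have := fiber_card (resT d u) (resT_surj d u) (fun _ => True)
    simpa using this.symm
  have hcard : Fintype.card (Fin d → Af (K u)) = Fintype.card (Fin d → Af (K u')) := by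
    simp only [Fintype.card_pi, card_Af]
    rw [Fintype.card_congr e.toEquiv]
  have h1 := hc u
  have h2 := hc u'
  rw [hcard, ← h2] at h1
  have h3 := Nat.eq_of_mul_eq_mul_right Fintype.card_pos h1
  rw [card_A d u hu, card_A d u' hu', hT, h3]

/-- extension by zero -/
noncomputable def ext0 (u : Af V) (g : K u → F3) : V → F3 :=
  fun x => if h : ∃ y, mm u y = x then g h.choose else 0

lemma ext0_mm (u : Af V) (g : K u → F3) (y : K u) : ext0 u g (mm u y) = g y := by
  have h : ∃ y', mm u y' = mm u y := ⟨y, rfl⟩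
  unfold ext0
  rw [dif_pos h]
  congr 1
  exact mm_inj u h.choose_spec

lemma ext0_off (u : Af V) (hu : u.1 ≠ 0) (g : K u → F3) (x : V) (hx : ev u x ≠ 0) : ext0 u g x = 0 := by
  unfold ext0
  rw [dif_neg]
  rintro ⟨y, rfl⟩
  exact hx (ev_mm u hu y)

lemma pull_mm (u : Af V) (e : ℕ) (φ : V → F3) (hφ : φ ∈ (aff V) ^ e) : φ ∘ mm u ∈ (aff (K u)) ^ e := by
  refine pull_pow (mm u) ?_ e φ hφ
  intro w
  exact ⟨res u w, funext fun y => ev_res u w y⟩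

lemma perp_mul_ind (u : Af V) (hu : u.1 ≠ 0) (e : ℕ) (f : V → F3)
    (h : Perp e (fun y : K u => f (mm u y))) : Perp e (f * ind u) := by
  intro φ hφ
  have h1 := h _ (pull_mm u e φ hφ)
  simp only [Function.comp] at h1
  rw [← sum_H u hu (fun x => f x * φ x)] at h1
  rw [← h1]
  exact Finset.sum_congr rfl fun x _ => by simp only [Pi.mul_apply]; ring

lemma perp_ext0 (u : Af V) (hu : u.1 ≠ 0) (e : ℕ) (g : K u → F3) (h : Perp e g) :
    Perp e (ext0 u g) := by
  have h1 : ext0 u g = ext0 u g * ind u := by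
    ext x
    rw [Pi.mul_apply, ind_eq]
    split_ifs with hx
    · simp
    · rw [ext0_off u hu g x hx]; simp
  rw [h1]
  apply perp_mul_ind u hu
  simpa only [ext0_mm] using h

lemma dis_ext0 (u : Af V) (hu : u.1 ≠ 0) (f : V → F3) (g : K u → F3) :
    (Finset.univ.filter fun x => ev u x = 0 ∧ f x ≠ ext0 u g x).card ≤ dis (fun y => f (mm u y)) g := by
  unfold dis
  rw [← Finset.card_image_of_injective _ (mm_inj u)]
  refine Finset.card_le_card ?_
  intro x hx
  simp only [Finset.mem_filter, Finset.mem_univ, true_and] at hx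
  obtain ⟨y, rfl⟩ := mm_surj u hu x hx.1
  rw [Finset.mem_image]
  refine ⟨y, ?_, rfl⟩
  simp only [Finset.mem_filter, Finset.mem_univ, true_and]
  have := hx.2
  rwa [ext0_mm] at this

end hyper

section induct

lemma exists_bad {V : Type} [AddCommGroup V] [Module F3 V] [Fintype V] (e : ℕ) (f : V → F3)
    (hne : ∃ u : Af V, u.1 ≠ 0) (h : ∀ u : Af V, u.1 ≠ 0 → Perp e (f * ind u)) : Perp (e + 2) f := by
  have h0 : Perp e f := by
    obtain ⟨u, hu⟩ := hne
    have h1 := ((h u hu).add (h (u + (0, 1)) (by simpa using hu))).add (h (u + (0, 2)) (by simpa using hu))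
    have h2 : f * ind u + f * ind (u + (0, 1)) + f * ind (u + (0, 2)) = f := by
      ext x
      have key : ∀ t : F3, (1 - t ^ 2) + (1 - (t + 1) ^ 2) + (1 - (t + 2) ^ 2) = 1 := by decide
      have := key (ev u x)
      simp only [Pi.add_apply, Pi.mul_apply, ind, map_add]
      have e1 : ev ((0, 1) : Af V) x = 1 := by simp
      have e2 : ev ((0, 2) : Af V) x = 2 := by simp
      rw [e1, e2]
      linear_combination (f x) * this
    rwa [h2] at h1
  have hsq : ∀ u : Af V, Perp e (f * (ev u * ev u)) := by
    intro u
    by_cases hu : u.1 = 0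
    · have : f * (ev u * ev u) = (u.2 * u.2) • f := by
        ext x
        simp [hu]; ring
      rw [this]; exact h0.smul _
    · have : f * (ev u * ev u) = f - f * ind u := by
        ext x
        simp only [Pi.mul_apply, Pi.sub_apply, ind]; ring
      rw [this]; exact h0.sub (h u hu)
  have hpol : ∀ u w : Af V, Perp e (f * (ev u * ev w)) := by
    intro u w
    have h1 := (((hsq (u + w)).sub (hsq u)).sub (hsq w)).smul 2
    have : (2 : F3) • (f * (ev (u + w) * ev (u + w)) - f * (ev u * ev u) - f * (ev w * ev w)) =
        f * (ev u * ev w) := by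
      ext x
      have h4 : (4 : F3) = 1 := by decide
      rw [map_add]
      simp only [Pi.smul_apply, Pi.sub_apply, Pi.mul_apply, Pi.add_apply, smul_eq_mul]
      linear_combination (f x * (ev u x * ev w x)) * h4
    rwa [this] at h1
  intro φ hφ
  rw [pow_succ] at hφ
  refine Submodule.mul_induction_on hφ ?_ ?_
  · rintro a ha b ⟨w, rfl⟩
    rw [pow_succ] at ha
    refine Submodule.mul_induction_on ha ?_ ?_
    · rintro a ha b ⟨u, rfl⟩
      have := hpol u w a ha
      rw [← this]
      refine Finset.sum_congr rfl fun x _ => ?_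
      simp only [Pi.mul_apply]; ring
    · intro a b h1 h2
      simp only [Pi.add_apply, Pi.mul_apply, add_mul, mul_add, Finset.sum_add_distrib] at h1 h2 ⊢
      rw [h1, h2, add_zero]
  · intro a b h1 h2
    simp only [Pi.add_apply, mul_add, Finset.sum_add_distrib] at h1 h2 ⊢
    rw [h1, h2, add_zero]

lemma many_bad {V : Type} [AddCommGroup V] [Module F3 V] [Fintype V] (e : ℕ) (f : V → F3)
    (hne : ∃ u : Af V, u.1 ≠ 0) (h : ¬ Perp (e + 2) f) :
    Fintype.card (Af V) ≤ 8 * (Finset.univ.filter fun u : Af V => u.1 ≠ 0 ∧ ¬ Perp e (f * ind u)).card := by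
  have h1 : ∃ u : Af V, u.1 ≠ 0 ∧ ¬ Perp e (f * ind u) := by
    by_contra hc
    push Not at hc
    exact h (exists_bad e f hne hc)
  obtain ⟨u₀, hu₀, hp⟩ := h1
  unfold Perp at hp
  push Not at hp
  obtain ⟨φ, hφ, hs⟩ := hp
  obtain ⟨y, hy⟩ : ∃ y, u₀.1 y ≠ 0 := by
      by_contra hc
      push Not at hc
      exact hu₀ (LinearMap.ext hc)
  have hdeg : DegLe 3 (fun u : Af V => ∑ x, (u.1 y) * ((f * ind u) x * φ x)) := by
    intro h1 h2 h3 h4 u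
    simp only [← Finset.sum_sub_distrib]
    refine Finset.sum_congr rfl fun x _ => ?_
    simp only [Pi.mul_apply, ind, map_add, Pi.add_apply, Prod.fst_add, LinearMap.add_apply]
    ring_nf
  have := sz 3 _ hdeg ⟨u₀, by
    rw [← Finset.mul_sum]
    exact mul_ne_zero hy hs⟩
  refine this.trans ?_
  refine Nat.mul_le_mul_left 8 (Finset.card_le_card ?_)
  intro u hu
  simp only [Finset.mem_filter, Finset.mem_univ, true_and] at hu ⊢
  rw [← Finset.mul_sum] at hu
  constructor
  · intro h0
    apply hu
    rw [h0]; simp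
  · intro hpp
    apply hu
    rw [hpp φ hφ, mul_zero]

lemma TT_bound {V : Type} [AddCommGroup V] [Module F3 V] [Fintype V] (d : ℕ) (u₀ : Af V) (hu₀ : u₀.1 ≠ 0) :
    TT (d + 1) V = (Finset.univ.filter fun u : Af V => u.1 ≠ 0).card * Tu d u₀ := by
  rw [TT_succ, ← Finset.sum_filter_add_sum_filter_not Finset.univ (fun u : Af V => u.1 ≠ 0)]
  rw [Finset.sum_eq_zero (s := Finset.univ.filter fun u : Af V => ¬ u.1 ≠ 0), add_zero]
  · rw [← smul_eq_mul]
    refine Finset.sum_eq_card_nsmul ?_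
    intro u hu
    exact Tu_const d u u₀ (Finset.mem_filter.mp hu).2 hu₀
  · intro u hu
    have := (Finset.mem_filter.mp hu).2
    push Not at this
    exact Tu_zero d u this

lemma TT_triv {V : Type} [AddCommGroup V] [Module F3 V] [Fintype V] (d : ℕ) (h : ¬ ∃ u : Af V, u.1 ≠ 0) :
    TT (d + 1) V = 0 := by
  push Not at h
  rw [TT_succ]
  exact Finset.sum_eq_zero fun u _ => Tu_zero d u (h u)

lemma NN_lower {V : Type} [AddCommGroup V] [Module F3 V] [Fintype V] (d : ℕ) (u₀ : Af V) (hu₀ : u₀.1 ≠ 0)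
    (f : V → F3) (κ : ℝ) (H : Finset (Af V)) (hH : ∀ u ∈ H, u.1 ≠ 0 ∧ κ * TT d (K u) ≤ NN d (fun y => f (mm u y))) :
    (H.card : ℝ) * (κ * Tu d u₀) ≤ NN (d + 1) f := by
  rw [NN_succ]
  push_cast
  refine le_trans ?_ (Finset.sum_le_sum_of_subset_of_nonneg (Finset.subset_univ H) (fun _ _ _ => Nat.cast_nonneg _))
  rw [← nsmul_eq_mul]
  refine Finset.card_nsmul_le_sum _ _ _ ?_
  intro u hu
  rw [Tu_const d u₀ u hu₀ (hH u hu).1]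
  exact ratio d u (hH u hu).1 f κ (hH u hu).2

lemma base (d : ℕ) : ∀ (V : Type) [AddCommGroup V] [Module F3 V] [Fintype V] (f : V → F3),
    ¬ Perp (2 * d) f → (1 / 8 : ℝ) ^ d * TT d V ≤ NN d f := by
  induction d with
  | zero =>
    intro V _ _ _ f hf
    have h1 : ∑ x, f x ≠ 0 := by
      intro h0
      apply hf
      intro φ hφ
      rw [mul_zero, pow_zero] at hφ
      obtain ⟨c, rfl⟩ := Submodule.mem_one.mp hφ
      simp only [Pi.algebraMap_apply]
      rw [← Finset.sum_mul, h0, zero_mul]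
    have h2 : TT 0 V ≤ NN 0 f := by
      unfold TT NN
      refine Finset.card_le_card ?_
      intro u hu
      simp only [Finset.mem_filter, Finset.mem_univ, true_and] at hu ⊢
      refine ⟨hu, ?_⟩
      unfold Rj
      simpa using h1
    simpa using h2
  | succ d ih =>
    intro V _ _ _ f hf
    by_cases hne : ∃ u : Af V, u.1 ≠ 0
    · have h1 := many_bad (2 * d) f hne (by rwa [show 2 * d + 2 = 2 * (d + 1) by ring])
      obtain ⟨u₀, hu₀⟩ := hne
      have h2 := NN_lower d u₀ hu₀ f ((1 / 8) ^ d) (Finset.univ.filter fun u : Af V => u.1 ≠ 0 ∧ ¬ Perp (2 * d) (f * ind u)) (by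
        intro u hu
        obtain ⟨a1, a2⟩ := (Finset.mem_filter.mp hu).2
        refine ⟨a1, ih _ _ ?_⟩
        intro hp
        exact a2 (perp_mul_ind u a1 _ f hp))
      refine le_trans ?_ h2
      rw [TT_bound d u₀ hu₀]
      have h3 : ((Finset.univ.filter fun u : Af V => u.1 ≠ 0).card : ℝ) ≤
          8 * ((Finset.univ.filter fun u : Af V => u.1 ≠ 0 ∧ ¬ Perp (2 * d) (f * ind u)).card : ℝ) := by
        exact_mod_cast (Finset.card_le_univ _).trans h1
      push_cast
      rw [pow_succ]
      have h4 : (0 : ℝ) ≤ (1 / 8) ^ d * Tu d u₀ := by positivity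
      nlinarith
    · rw [TT_triv d hne]; simp

noncomputable def ε0 : ℝ := (1 / 8) ^ 26 / 2

lemma nonconst_card {V : Type} [AddCommGroup V] [Module F3 V] [Fintype V] (u₀ : Af V) (hu₀ : u₀.1 ≠ 0) :
    2 * Fintype.card (Af V) ≤ 3 * (Finset.univ.filter fun u : Af V => u.1 ≠ 0).card := by
  have h1 : (Finset.univ.filter fun u : Af V => ¬ u.1 ≠ 0).card ≤ 3 := by
    have : (3 : ℕ) = (Finset.univ : Finset F3).card := by simp [ZMod.card]
    refine le_trans ?_ this.symm.le
    refine Finset.card_le_card_of_injOn (fun u => u.2) (fun _ _ => Finset.mem_coe.mpr (Finset.mem_univ _)) ?_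
    intro a ha b hb h
    simp only [Finset.coe_filter, Finset.mem_univ, true_and, not_not] at ha hb
    exact Prod.ext (ha.trans hb.symm) h
  have h2 := Finset.card_filter_add_card_filter_not (s := (Finset.univ : Finset (Af V))) (fun u : Af V => u.1 ≠ 0)
  have h3 : 9 ≤ Fintype.card (Af V) := by
    rw [card_Af, Module.card_eq_pow_finrank (K := F3) (V := V), ← finrank_K u₀ hu₀, ZMod.card, pow_succ]
    have := Nat.pow_pos (n := Module.finrank F3 (K u₀)) (show 0 < 3 by norm_num)
    omega
  rw [Finset.card_univ] at h2
  omega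

lemma mainInd (d : ℕ) : ∀ (V : Type) [AddCommGroup V] [Module F3 V] [Fintype V] (f : V → F3),
    (∀ g, Perp (2 * d) g → 3 ^ d ≤ 12 * dis f g) → ε0 * (1 + (2 / 3) ^ d) * TT d V ≤ NN d f := by
  induction d with
  | zero =>
    intro V _ _ _ f hf
    have := base 0 V f (by
      intro hp
      have := hf f hp
      simp [dis] at this)
    have h2 : ε0 * (1 + (2 / 3) ^ 0) ≤ 1 := by unfold ε0; norm_num
    have h3 : (0 : ℝ) ≤ TT 0 V := by positivity
    nlinarith
  | succ d ih =>
    intro V _ _ _ f hf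
    by_cases hd : d + 1 ≤ 26
    · have := base (d + 1) V f (by
        intro hp
        have := hf f hp
        simp [dis] at this)
      refine le_trans ?_ this
      refine mul_le_mul_of_nonneg_right ?_ (by positivity)
      have h1 : (1 / 8 : ℝ) ^ 26 ≤ (1 / 8) ^ (d + 1) := pow_le_pow_of_le_one (by norm_num) (by norm_num) hd
      have h2 : (2 / 3 : ℝ) ^ (d + 1) ≤ 1 := pow_le_one₀ (by norm_num) (by norm_num)
      unfold ε0
      have : (0 : ℝ) < (1 / 8) ^ 26 := by positivity
      nlinarith
    · have hd' : 26 ≤ d := by omega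
      by_cases hc : ∃ g, Perp (2 * (d + 1)) g ∧ 2 * dis f g ≤ 3 ^ (d + 1)
      · obtain ⟨g, hg1, hg2⟩ := hc
        have h1 := stepA (d + 1) f g hg1
        have h2 := hf g hg1
        refine le_trans ?_ h1
        rw [mul_comm]
        refine mul_le_mul_of_nonneg_left ?_ (by positivity)
        set s : ℝ := (dis f g : ℝ) / 3 ^ (d + 1) with hs
        have s1 : s ≤ 1 / 2 := by
          rw [hs, div_le_iff₀ (by positivity)]
          have : 2 * (dis f g : ℝ) ≤ 3 ^ (d + 1) := by exact_mod_cast hg2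
          linarith
        have s2 : 1 / 12 ≤ s := by
          rw [hs, le_div_iff₀ (by positivity)]
          have : 3 ^ (d + 1) ≤ 12 * (dis f g : ℝ) := by exact_mod_cast h2
          linarith
        have s3 : (2 / 3 : ℝ) ^ (d + 1) ≤ 1 := pow_le_one₀ (by norm_num) (by norm_num)
        have s4 : ε0 ≤ 1 / 48 := by unfold ε0; norm_num
        have s5 : 0 < ε0 := by unfold ε0; positivity
        nlinarith
      · by_cases hne : ∃ u : Af V, u.1 ≠ 0
        swap
        · rw [TT_triv d hne]; simp
        obtain ⟨u₀, hu₀⟩ := hne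
        set q : ℝ := (2 / 3) ^ d with hq
        have q0 : 0 < q := by positivity
        have q1 : q ≤ 1 := pow_le_one₀ (by norm_num) (by norm_num)
        set η : ℝ := q / 9 with hη
        set G : Finset (Af V) := Finset.univ.filter fun u => u.1 ≠ 0 ∧
          ∃ g : K u → F3, Perp (2 * d) g ∧ 12 * dis (fun y => f (mm u y)) g < 3 ^ d with hG
        have hGsmall : (G.card : ℝ) < η * Fintype.card (Af V) := by
          by_contra hcon
          push Not at hcon
          have hgex : ∀ u : Af V, ∃ g : K u → F3, u ∈ G → (Perp (2 * d) g ∧ 12 * dis (fun y => f (mm u y)) g < 3 ^ d) := by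
            intro u
            by_cases hu : u ∈ G
            · obtain ⟨g, hg⟩ := (Finset.mem_filter.mp hu).2.2
              exact ⟨g, fun _ => hg⟩
            · exact ⟨0, fun h => absurd h hu⟩
          choose g hg using hgex
          have hnc : ∀ u ∈ G, u.1 ≠ 0 := fun u hu => (Finset.mem_filter.mp hu).2.1
          obtain ⟨Q, Q1, Q2⟩ := core d (by omega) f G (fun u => ext0 u (g u))
            (fun u hu x hx => ext0_off u (hnc u hu) (g u) x hx)
            (fun u hu => perp_ext0 u (hnc u hu) _ _ (hg u hu).1)
            (fun u hu => by
              have a1 := dis_ext0 u (hnc u hu) f (g u)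
              have a2 := (hg u hu).2
              omega) η (by positivity) (by linarith) hcon (by
              have e1 : η ^ 2 * 3 ^ d = (4 / 3) ^ d / 81 := by
                rw [hη, hq, div_pow, ← pow_mul, mul_comm d 2, pow_mul]
                rw [show ((4 : ℝ) / 3) = (2 / 3) ^ 2 * 3 by norm_num, mul_pow]
                ring
              have e2 : (4 / 3 : ℝ) ^ 26 ≤ (4 / 3) ^ d := pow_le_pow_right₀ (by norm_num) hd'
              rw [e1]
              have e3 : (1620 : ℝ) ≤ (4 / 3) ^ 26 := by norm_num
              linarith)
          exact hc ⟨Q, Q1, Q2⟩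
        set κ : ℝ := ε0 * (1 + q) with hκ
        set M : Finset (Af V) := Finset.univ.filter fun u : Af V => u.1 ≠ 0 with hM
        have hL := NN_lower d u₀ hu₀ f κ (M \ G) (by
          intro u hu
          obtain ⟨a1, a2⟩ := Finset.mem_sdiff.mp hu
          have a3 := (Finset.mem_filter.mp a1).2
          refine ⟨a3, ih _ _ ?_⟩
          intro g hg
          by_contra hlt
          push Not at hlt
          exact a2 (Finset.mem_filter.mpr ⟨Finset.mem_univ _, a3, g, hg, hlt⟩))
        refine le_trans ?_ hL
        rw [TT_bound d u₀ hu₀, ← hM]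
        have b1 : (M.card : ℝ) - G.card ≤ ((M \ G).card : ℝ) := by
          have := Finset.le_card_sdiff G M
          have h2 : M.card ≤ (M \ G).card + G.card := by omega
          have h3 : (M.card : ℝ) ≤ (M \ G).card + G.card := by exact_mod_cast h2
          linarith
        have b2 : 2 * (Fintype.card (Af V) : ℝ) ≤ 3 * M.card := by exact_mod_cast nonconst_card u₀ hu₀
        have s5 : 0 < ε0 := by unfold ε0; positivity
        push_cast
        rw [pow_succ, ← hq]
        have b3 : (M.card : ℝ) * (1 - q / 6) ≤ ((M \ G).card : ℝ) := by
          have : η * Fintype.card (Af V) ≤ q / 6 * M.card := by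
            rw [hη]; nlinarith
          linarith
        have b4 : (1 + q * (2 / 3)) ≤ (1 - q / 6) * (1 + q) := by nlinarith
        calc ε0 * (1 + q * (2 / 3)) * (M.card * (Tu d u₀ : ℝ))
            ≤ ε0 * ((1 - q / 6) * (1 + q)) * (M.card * (Tu d u₀ : ℝ)) := by gcongr
          _ = ((M.card : ℝ) * (1 - q / 6)) * (κ * Tu d u₀) := by rw [hκ]; ring
          _ ≤ _ := by
            refine mul_le_mul_of_nonneg_right b3 ?_
            positivity

end induct

section poly

lemma prod_mem_pow {V : Type} [AddCommGroup V] [Module F3 V] {ι : Type} (s : Finset ι)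
    (φ : ι → V → F3) (n : ι → ℕ) (h : ∀ i ∈ s, φ i ∈ (aff V) ^ (n i)) :
    ∏ i ∈ s, φ i ∈ (aff V) ^ (∑ i ∈ s, n i) := by
  induction s using Finset.induction_on with
  | empty => simpa using one_mem_pow (V := V) 0
  | insert a s ha ih =>
    rw [Finset.prod_insert ha, Finset.sum_insert ha]
    exact mul_mem_pow (h a (Finset.mem_insert_self a s))
      (ih fun i hi => h i (Finset.mem_insert_of_mem hi))

/-- coefficients of the interpolation polynomial in one variable -/
def cc (a : Fin 3) (y : F3) : F3 := if a = 0 then 1 - y * y else if a = 1 then 2 * y else -1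

lemma cc_sum (x y : F3) : ∑ a : Fin 3, cc a y * x ^ (a : ℕ) = if x = y then 1 else 0 := by
  revert x y; decide

def co {r : ℕ} (f : Fn r) (a : Fin r → Fin 3) : F3 := ∑ y, f y * ∏ i, cc (a i) (y i)

lemma cc_mem {r : ℕ} (i : Fin r) (a : Fin 3) :
    (fun y : Pt r => cc a (y i)) ∈ (aff (Pt r)) ^ (2 - (a : ℕ)) := by
  have hev : (fun y : Pt r => y i) ∈ (aff (Pt r)) ^ 1 := by
    have := ev_mem_one (V := Pt r) (LinearMap.proj i, 0)
    convert this using 1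
    ext y; simp
  have h3 : a = 0 ∨ a = 1 ∨ a = 2 := by revert a; decide
  rcases h3 with rfl | rfl | rfl
  · have := Submodule.sub_mem _ (one_mem_pow (V := Pt r) 2) (mul_mem_pow hev hev)
    have e : (fun y : Pt r => cc 0 (y i)) = 1 - (fun y : Pt r => y i) * fun y : Pt r => y i := by
      funext y; simp [cc]
    rw [e]; exact this
  · have := Submodule.smul_mem _ (2 : F3) hev
    have e : (fun y : Pt r => cc 1 (y i)) = (2 : F3) • fun y : Pt r => y i := by
      funext y; simp [cc]
    rw [e]; exact this
  · have := Submodule.smul_mem _ (-1 : F3) (one_mem_pow (V := Pt r) 0)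
    have e : (fun y : Pt r => cc 2 (y i)) = (-1 : F3) • (1 : Pt r → F3) := by
      funext y; simp [cc]
    rw [e]; exact this

lemma co_zero {r d : ℕ} {f : Fn r} (hf : Perp (2 * d) f) (a : Fin r → Fin 3)
    (h : 2 * r ≤ ∑ i, (a i : ℕ) + 2 * d) : co f a = 0 := by
  have h1 := prod_mem_pow (V := Pt r) Finset.univ (fun i y => cc (a i) (y i))
    (fun i => 2 - (a i : ℕ)) (fun i _ => cc_mem i (a i))
  have h2 : ∑ i, (2 - (a i : ℕ)) ≤ 2 * d := by
    have : ∑ i, (2 - (a i : ℕ)) + ∑ i, (a i : ℕ) = 2 * r := by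
      rw [← Finset.sum_add_distrib]
      rw [Finset.sum_congr rfl (g := fun _ => 2) (fun i _ => by have := (a i).2; omega)]
      simp [mul_comm]
    omega
  have h3 := hf _ (aff_pow_mono h2 h1)
  rw [← h3]
  unfold co
  refine Finset.sum_congr rfl fun y _ => ?_
  rw [Finset.prod_apply]

noncomputable def mono {r : ℕ} (a : Fin r → Fin 3) : Fin r →₀ ℕ :=
  Finsupp.equivFunOnFinite.symm fun i => (a i : ℕ)

noncomputable def interp {r : ℕ} (f : Fn r) : MvPolynomial (Fin r) F3 :=
  ∑ a : Fin r → Fin 3, MvPolynomial.monomial (mono a) (co f a)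

lemma interp_eval {r : ℕ} (f : Fn r) (x : Pt r) : MvPolynomial.eval x (interp f) = f x := by
  unfold interp
  rw [map_sum]
  have h1 : ∀ a : Fin r → Fin 3, MvPolynomial.eval x (MvPolynomial.monomial (mono a) (co f a)) =
      ∑ y, f y * ∏ i, (cc (a i) (y i) * x i ^ (a i : ℕ)) := by
    intro a
    rw [MvPolynomial.eval_monomial, Finsupp.prod_fintype _ _ (by simp), co, Finset.sum_mul]
    refine Finset.sum_congr rfl fun y _ => ?_
    rw [Finset.prod_mul_distrib, mul_assoc]
    rfl
  rw [Finset.sum_congr rfl fun a _ => h1 a, Finset.sum_comm]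
  have h2 : ∀ y : Pt r, ∑ a : Fin r → Fin 3, f y * ∏ i, (cc (a i) (y i) * x i ^ (a i : ℕ)) =
      if y = x then f y else 0 := by
    intro y
    rw [← Finset.mul_sum, ← Fintype.prod_sum (fun (i : Fin r) (j : Fin 3) => cc j (y i) * x i ^ (j : ℕ)),
      Finset.prod_congr rfl fun i _ => cc_sum (x i) (y i)]
    split_ifs with h
    · subst h; simp
    · obtain ⟨i, hi⟩ := Function.ne_iff.mp h
      rw [Finset.prod_eq_zero (Finset.mem_univ i) (if_neg (Ne.symm hi)), mul_zero]
  rw [Finset.sum_congr rfl fun y _ => h2 y]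
  simp

lemma interp_supp {r : ℕ} (f : Fn r) (m : Fin r →₀ ℕ) (hm : m ∈ (interp f).support) :
    ∃ a : Fin r → Fin 3, m = mono a ∧ co f a ≠ 0 := by
  have := MvPolynomial.support_sum hm
  rw [Finset.mem_biUnion] at this
  obtain ⟨a, -, ha⟩ := this
  rw [MvPolynomial.support_monomial] at ha
  split_ifs at ha with h
  · simp at ha
  · exact ⟨a, by simpa using ha, h⟩

lemma perp_poly {r d : ℕ} (f : Fn r) (hf : Perp (2 * d) f) :
    f ∈ PolySet r (2 * r - 2 * d - 1) := by
  refine ⟨interp f, ?_, ?_, fun x => (interp_eval f x).symm⟩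
  · unfold MvPolynomial.totalDegree
    refine Finset.sup_le fun m hm => ?_
    obtain ⟨a, rfl, ha⟩ := interp_supp f m hm
    rw [Finsupp.sum_fintype _ _ (by simp)]
    by_contra hc
    refine ha (co_zero hf a ?_)
    have : ∑ i, (mono a) i = ∑ i, (a i : ℕ) := rfl
    omega
  · intro i
    rw [MvPolynomial.degreeOf_le_iff]
    intro m hm
    obtain ⟨a, rfl, ha⟩ := interp_supp f m hm
    have : mono a i = (a i : ℕ) := rfl
    have := (a i).2
    omega

end poly

section bridge

lemma NN_upper {V : Type} [AddCommGroup V] [Module F3 V] [Fintype V] (d : ℕ) (f : V → F3) :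
    NN d f ≤ (Finset.univ.filter fun x => f x ≠ 0).card * LL d V := by
  unfold NN
  calc _ ≤ ((Finset.univ.filter fun x => f x ≠ 0).biUnion fun x =>
        Finset.univ.filter fun u : Fin d → Af V => LI u ∧ ∀ i, ev (u i) x = 0).card := by
        refine Finset.card_le_card fun u hu => ?_
        rw [Finset.mem_filter] at hu
        obtain ⟨-, hu, hr⟩ := hu
        obtain ⟨x, -, hx⟩ := Finset.exists_ne_zero_of_sum_ne_zero hr
        rw [Finset.mem_biUnion]
        refine ⟨x, by simpa using left_ne_zero_of_mul hx, ?_⟩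
        rw [Finset.mem_filter]
        refine ⟨Finset.mem_univ _, hu, fun i => ?_⟩
        have h1 := Finset.prod_ne_zero_iff.mp (right_ne_zero_of_mul hx) i (Finset.mem_univ i)
        rw [ind_eq] at h1
        by_contra h
        exact h1 (if_neg h)
    _ ≤ _ := by
        refine Finset.card_biUnion_le_card_mul _ _ _ fun x _ => ?_
        rw [card_one_pt]

lemma omega_sum (t : F3) : ∑ a : F3, ω ^ (a * t).val = if t = 0 then 3 else 0 := by
  have hp : IsPrimitiveRoot ω 3 := by
    have := Complex.isPrimitiveRoot_exp 3 (by norm_num)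
    unfold ω
    exact_mod_cast this
  have h0 := hp.geom_sum_eq_zero (by norm_num)
  rw [Finset.sum_range_succ, Finset.sum_range_succ, Finset.sum_range_one] at h0
  have hu : (Finset.univ : Finset F3) = {0, 1, 2} := by decide
  rw [hu, Finset.sum_insert (by decide), Finset.sum_insert (by decide), Finset.sum_singleton]
  have h3 : ∀ t : F3, t = 0 ∨ t = 1 ∨ t = 2 := by decide
  rcases h3 t with rfl | rfl | rfl
  · simp; norm_num
  · rw [if_neg (by decide), ← h0]
    have e0 : ((0 : F3) * 1).val = 0 := by decide
    have e1 : ((1 : F3) * 1).val = 1 := by decide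
    have e2 : ((2 : F3) * 1).val = 2 := by decide
    rw [e0, e1, e2]; ring
  · rw [if_neg (by decide), ← h0]
    have e0 : ((0 : F3) * 2).val = 0 := by decide
    have e1 : ((1 : F3) * 2).val = 2 := by decide
    have e2 : ((2 : F3) * 2).val = 1 := by decide
    rw [e0, e1, e2]; ring

/-- the tuple of affine forms associated with `(v, c)` -/
noncomputable def toAf {r d : ℕ} (p : (Fin d → Pt r) × (Fin d → F3)) : Fin d → Af (Pt r) :=
  fun i => (dotProductEquiv F3 (Fin r) (p.1 i), p.2 i)

lemma toAf_bij {r d : ℕ} : Function.Bijective (toAf (r := r) (d := d)) := by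
  constructor
  · intro p q h
    have h' : ∀ i, toAf p i = toAf q i := fun i => congrFun h i
    simp only [toAf, Prod.mk.injEq, EmbeddingLike.apply_eq_iff_eq] at h'
    exact Prod.ext (funext fun i => (h' i).1) (funext fun i => (h' i).2)
  · intro u
    refine ⟨(fun i => (dotProductEquiv F3 (Fin r)).symm (u i).1, fun i => (u i).2), ?_⟩
    funext i
    simp only [toAf, LinearEquiv.apply_symm_apply]

lemma toAf_LI {r d : ℕ} (p : (Fin d → Pt r) × (Fin d → F3)) :
    LI (toAf p) ↔ LinearIndependent F3 p.1 := by
  unfold LI toAf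
  exact LinearMap.linearIndependent_iff_of_injOn (v := p.1)
    (dotProductEquiv F3 (Fin r)).toLinearMap (dotProductEquiv F3 (Fin r)).injective.injOn

lemma dot_iff {r d : ℕ} (α : Fn r) (p : (Fin d → Pt r) × (Fin d → F3)) :
    dotF α (ellProd p.1 p.2) = 0 ↔ ¬ Rj α (toAf p) := by
  have key : ∀ t : F3, (t - 1) * (t - 2) = (-1) * (1 - t ^ 2) := by decide
  have h : dotF α (ellProd p.1 p.2) = (-1) ^ d * ∑ x, α x * ∏ i, ind (toAf p i) x := by
    unfold dotF ellProd
    rw [Finset.mul_sum]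
    refine Finset.sum_congr rfl fun x _ => ?_
    rw [Finset.prod_congr rfl fun i _ => key _, Finset.prod_mul_distrib, Finset.prod_const,
      Finset.card_univ, Fintype.card_fin, mul_left_comm]
    rfl
  rw [h]
  unfold Rj
  have h1 : ((-1 : F3)) ^ d ≠ 0 := pow_ne_zero _ (by decide)
  simp [h1]

lemma TT_card {r d : ℕ} : (LIset r d).card * 3 ^ d = TT d (Pt r) := by
  unfold TT LIset
  have : 3 ^ d = (Finset.univ : Finset (Fin d → F3)).card := by simp [ZMod.card]
  rw [this, ← Finset.card_product]
  refine Finset.card_bij (fun p _ => toAf p) ?_ ?_ ?_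
  · intro p hp
    simp only [Finset.mem_product, Finset.mem_filter, Finset.mem_univ, true_and, and_true] at hp ⊢
    exact (toAf_LI p).mpr hp
  · intro p _ q _ h; exact toAf_bij.1 h
  · intro u hu
    obtain ⟨p, rfl⟩ := toAf_bij.2 u
    refine ⟨p, ?_, rfl⟩
    simp only [Finset.mem_product, Finset.mem_filter, Finset.mem_univ, true_and, and_true] at hu ⊢
    exact (toAf_LI p).mp hu

lemma acc_card {r d : ℕ} (α : Fn r) :
    ((LIset r d ×ˢ (Finset.univ : Finset (Fin d → F3))).filter
      fun p => dotF α (ellProd p.1 p.2) = 0).card =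
    (Finset.univ.filter fun u : Fin d → Af (Pt r) => LI u ∧ ¬ Rj α u).card := by
  refine Finset.card_bij (fun p _ => toAf p) ?_ ?_ ?_
  · intro p hp
    simp only [LIset, Finset.mem_product, Finset.mem_filter, Finset.mem_univ, true_and, and_true] at hp ⊢
    exact ⟨(toAf_LI p).mpr hp.1, (dot_iff α p).mp hp.2⟩
  · intro p _ q _ h; exact toAf_bij.1 h
  · intro u hu
    obtain ⟨p, rfl⟩ := toAf_bij.2 u
    refine ⟨p, ?_, rfl⟩
    simp only [LIset, Finset.mem_product, Finset.mem_filter, Finset.mem_univ, true_and, and_true] at hu ⊢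
    exact ⟨(toAf_LI p).mp hu.1, (dot_iff α p).mpr hu.2⟩

lemma acc_add {r d : ℕ} (α : Fn r) :
    NN d α + (Finset.univ.filter fun u : Fin d → Af (Pt r) => LI u ∧ ¬ Rj α u).card
      = TT d (Pt r) := by
  unfold NN TT
  rw [← Finset.filter_filter, ← Finset.filter_filter]
  exact Finset.card_filter_add_card_filter_not _

lemma TT_pos {r d : ℕ} (h : d ≤ r) : 0 < TT d (Pt r) := by
  rw [← TT_card]
  refine Nat.mul_pos (Finset.card_pos.mpr ?_) (by positivity)
  refine ⟨fun i => Pi.basisFun F3 (Fin r) (Fin.castLE h i), ?_⟩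
  unfold LIset
  rw [Finset.mem_filter]
  exact ⟨Finset.mem_univ _, (Pi.basisFun F3 (Fin r)).linearIndependent.comp _
    (Fin.castLE_injective h)⟩

lemma rho_eq {r d : ℕ} (h : d ≤ r) (α : Fn r) :
    rho r d α = 1 - (NN d α : ℝ) / TT d (Pt r) := by
  have hT : (0 : ℝ) < TT d (Pt r) := by exact_mod_cast TT_pos h
  have h1 : (∑ v ∈ LIset r d, ∑ c : Fin d → F3, ∑ a : F3, ω ^ (a * dotF α (ellProd v c)).val) =
      (((TT d (Pt r) : ℝ) - NN d α) * 3 : ℝ) := by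
    simp_rw [omega_sum]
    rw [← Finset.sum_product', ← Finset.sum_filter, Finset.sum_const, nsmul_eq_mul]
    have h2 := acc_add (d := d) α
    rw [← acc_card] at h2
    rw [← h2]
    push_cast
    ring_nf
    try congr
  have h3 : (((LIset r d).card : ℂ) * 3 ^ d * 3) = ((TT d (Pt r) : ℝ) * 3 : ℝ) := by
    rw [← TT_card]; push_cast; ring
  unfold rho
  rw [h1, h3, ← Complex.ofReal_div, Complex.ofReal_re]
  field_simp

end bridge

lemma final : ∃ C₁ C₂ : ℝ, 0 < C₁ ∧ 0 < C₂ ∧ C₂ < 1 ∧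
      ∀ r d : ℕ, 1 ≤ d → d ≤ r → ∀ α : Fn r,
        1 - 2 * (supp α : ℝ) / 3 ^ d ≤ rho r d α ∧
        rho r d α ≤
          max (1 - C₁ * (distToSet α (PolySet r (2 * r - 2 * d - 1)) : ℝ) / 3 ^ d) C₂ := by
  have he0 : 0 < ε0 := by unfold ε0; positivity
  have he1 : ε0 < 1 := by unfold ε0; norm_num
  refine ⟨1 / 2, 1 - ε0, by norm_num, by linarith, by linarith, ?_⟩
  intro r d _ hdr α
  have hTn := TT_pos hdr
  have hT : (0 : ℝ) < TT d (Pt r) := by exact_mod_cast hTn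
  rw [rho_eq hdr]
  have h3 : (0 : ℝ) < 3 ^ d := by positivity
  constructor
  · have h1 : NN d α ≤ supp α * LL d (Pt r) := by
      have := NN_upper d α
      unfold supp
      convert this
    have h2 : (NN d α : ℝ) / TT d (Pt r) ≤ supp α / 3 ^ d := by
      rw [div_le_div_iff₀ hT h3, TT_eq]
      have : (NN d α : ℝ) ≤ supp α * LL d (Pt r) := by exact_mod_cast h1
      push_cast
      nlinarith
    have h4 : (0 : ℝ) ≤ supp α / 3 ^ d := by positivity
    rw [mul_div_assoc]
    linarith
  · by_cases hc : ∃ g, Perp (2 * d) g ∧ 2 * dis α g ≤ 3 ^ d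
    · obtain ⟨g, hg, hg2⟩ := hc
      refine le_trans ?_ (le_max_left _ _)
      have h1 := stepA d α g hg
      have h2 : distToSet α (PolySet r (2 * r - 2 * d - 1)) ≤ dis α g := by
        unfold distToSet
        refine Nat.sInf_le ⟨g, perp_poly g hg, ?_⟩
        unfold hammingD dis
        congr
      have h2' : (distToSet α (PolySet r (2 * r - 2 * d - 1)) : ℝ) / 3 ^ d ≤ dis α g / 3 ^ d := by
        gcongr
      have hg2' : (2 : ℝ) * dis α g ≤ 3 ^ d := by exact_mod_cast hg2
      set s : ℝ := (dis α g : ℝ) / 3 ^ d with hs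
      have hs0 : 0 ≤ s := by positivity
      have hs1 : s ≤ 1 / 2 := by
        rw [hs, div_le_iff₀ h3]; linarith
      have h4 : s / 2 ≤ (NN d α : ℝ) / TT d (Pt r) := by
        rw [le_div_iff₀ hT]
        nlinarith [mul_nonneg hT.le (mul_nonneg hs0 (sub_nonneg.mpr hs1))]
      rw [mul_div_assoc]
      linarith
    · refine le_trans ?_ (le_max_right _ _)
      push Not at hc
      have h1 := mainInd d (Pt r) α fun g hg => by have := hc g hg; omega
      have h2 : ε0 ≤ (NN d α : ℝ) / TT d (Pt r) := by
        rw [le_div_iff₀ hT]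
        refine le_trans ?_ h1
        refine mul_le_mul_of_nonneg_right ?_ hT.le
        have : (0 : ℝ) ≤ (2 / 3) ^ d := by positivity
        nlinarith
      linarith

end T17

/-- Eigenvalue bounds for the operator `S_{r,d}` (Lemma 4.5): there exist universal
`C₁ > 0` and `C₂ ∈ (0,1)` such that for `1 ≤ d ≤ r` and all `α`,
`1 − 2|α|/3^d ≤ ρ_{r,d}(α) ≤ max{1 − C₁·Δ(α, P_{r,2r−2d−1})/3^d, C₂}`. -/
theorem stmt17 :
    ∃ C₁ C₂ : ℝ, 0 < C₁ ∧ 0 < C₂ ∧ C₂ < 1 ∧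
      ∀ r d : ℕ, 1 ≤ d → d ≤ r → ∀ α : Fn r,
        1 - 2 * (supp α : ℝ) / 3 ^ d ≤ rho r d α ∧
        rho r d α ≤
          max (1 - C₁ * (distToSet α (PolySet r (2 * r - 2 * d - 1)) : ℝ) / 3 ^ d) C₂ := by
  exact T17.final
end

section
/- There exists a universal constant d₀ ∈ ℕ such that the following holds for all r, d, t ∈ ℕ with d₀ ≤ d ≤ r and t ≥ 1. For all functions A, B : P_{r,2d} → [0,1], letting A' := S_{r,d}^t A and B' := S_{r,d}^t B (the t-fold iterate of S_{r,d}), one has |⟨A, T_{r,d} B⟩ − ⟨A', T_{r,d} B'⟩| ≤ 2dt/3^d. -/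
open scoped BigOperators

open scoped Classical

/-- The Cayley operator `T_{r,d}`: `(T_{r,d}F)(f) = E_{p,a}[F(f + a(p²+1))]`. -/
noncomputable def Trd (r d : ℕ) (F : Fn r → ℝ) : Fn r → ℝ := fun f =>
  (∑ p ∈ polyFinset r d, ∑ a ∈ ({1, 2} : Finset F3), F (f + shift p a)) /
    (((polyFinset r d).card : ℝ) * 2)

/-- The Cayley operator `S_{r,d}`:
`(S_{r,d}F)(f) = E_{v,c,a}[F(f + a·Π_i (ℓ_i−1)(ℓ_i−2))]`. -/
noncomputable def Sop (r d : ℕ) (F : Fn r → ℝ) : Fn r → ℝ := fun f =>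
  (∑ v ∈ LIset r d, ∑ c : Fin d → F3, ∑ a : F3,
      F (f + fun x => a * ellProd v c x)) /
    (((LIset r d).card : ℝ) * 3 ^ d * 3)

/-- Inner product `⟨F,G⟩ = E_{f ∈ P_{r,2d}}[F(f)·G(f)]`. -/
noncomputable def innerP (r d : ℕ) (F G : Fn r → ℝ) : ℝ :=
  (∑ f ∈ polyFinset r (2 * d), F f * G f) / ((polyFinset r (2 * d)).card : ℝ)


namespace St18

variable {r : ℕ}

noncomputable def mon (α : Fin r →₀ ℕ) : Fn r := fun x => ∏ i, x i ^ α i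

lemma mon_add (α γ : Fin r →₀ ℕ) : mon (α + γ) = mon α * mon γ := by
  funext x
  simp [mon, pow_add, Finset.prod_mul_distrib]

lemma mon_zero : mon (0 : Fin r →₀ ℕ) = 1 := by
  funext x
  simp [mon]

def coordFn (i : Fin r) : Fn r := fun x => x i

lemma mon_single (i : Fin r) : mon (Finsupp.single i 1) = coordFn i := by
  funext x
  simp only [mon, coordFn]
  rw [Finset.prod_eq_single i]
  · simp
  · intro j _ hj
    simp [Finsupp.single_apply, hj.symm]
  · simp

lemma f3_cube (y : F3) : y ^ 3 = y := by revert y; decide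

lemma coord_cube (i : Fin r) : coordFn i * (coordFn i * coordFn i) = coordFn i := by
  funext x
  have := f3_cube (x i)
  simp only [Pi.mul_apply, coordFn]
  rw [← this]
  ring_nf
  rw [show x i ^ 9 = ((x i ^ 3) ^ 3) by ring, this, this]

/-- reduction of a monomial with a large exponent -/
lemma mon_reduce (α : Fin r →₀ ℕ) (i : Fin r) (h : 3 ≤ α i) :
    ∃ α' γ : Fin r →₀ ℕ, α = α' + γ ∧ γ ≠ 0 ∧ mon α' = mon α := by
  refine ⟨α - Finsupp.single i 2, Finsupp.single i 2, ?_, ?_, ?_⟩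
  · rw [tsub_add_cancel_of_le]
    rw [Finsupp.single_le_iff]; omega
  · simp
  · have h1 : α = (α - Finsupp.single i 3) + (Finsupp.single i 1 + (Finsupp.single i 1 + Finsupp.single i 1)) := by
      ext j
      by_cases hj : i = j
      · subst hj; simp; omega
      · simp [Finsupp.single_apply, hj]
    have h2 : α - Finsupp.single i 2 = (α - Finsupp.single i 3) + Finsupp.single i 1 := by
      ext j
      by_cases hj : i = j
      · subst hj; simp; omega
      · simp [Finsupp.single_apply, hj]
    rw [h2, mon_add]
    conv_rhs => rw [h1]
    rw [mon_add, mon_add, mon_add, mon_single, coord_cube]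

noncomputable def PP (r j : ℕ) : Submodule F3 (Fn r) :=
  Submodule.span F3 (mon '' {α : Fin r →₀ ℕ | α.degree ≤ j})

lemma mon_mem {α : Fin r →₀ ℕ} {j : ℕ} (h : α.degree ≤ j) : mon α ∈ PP r j :=
  Submodule.subset_span ⟨α, h, rfl⟩

lemma PP_mono {i j : ℕ} (h : i ≤ j) : PP r i ≤ PP r j :=
  Submodule.span_mono (Set.image_mono fun _ hα => le_trans hα h)

lemma one_mem (j : ℕ) : (1 : Fn r) ∈ PP r j := by
  rw [← mon_zero]; exact mon_mem (by simp)

lemma mul_mem {i j : ℕ} {p q : Fn r} (hp : p ∈ PP r i) (hq : q ∈ PP r j) :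
    p * q ∈ PP r (i + j) := by
  have h := Submodule.mul_mem_mul hp hq
  rw [PP, PP, Submodule.span_mul_span] at h
  refine Submodule.span_mono ?_ h
  rintro _ ⟨_, ⟨α, hα, rfl⟩, _, ⟨γ, hγ, rfl⟩, rfl⟩
  refine ⟨α + γ, ?_, mon_add _ _⟩
  simp only [Set.mem_ofPred_eq, map_add] at *
  omega

lemma coord_mem (i : Fin r) : coordFn i ∈ PP r 1 := by
  rw [← mon_single]; exact mon_mem (by simp)

lemma const_mem (c : F3) (j : ℕ) : (fun _ => c : Fn r) ∈ PP r j := by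
  have := (PP r j).smul_mem c (one_mem j)
  convert this using 1
  funext x; simp

lemma poly_sub {j : ℕ} {g : Fn r} (h : g ∈ PolySet r j) : g ∈ PP r j := by
  obtain ⟨P, hP, -, hg⟩ := h
  have : g = ∑ α ∈ P.support, P.coeff α • mon α := by
    funext x
    rw [hg, MvPolynomial.eval_eq']
    simp [mon, Finset.sum_apply]
  rw [this]
  refine Submodule.sum_mem _ fun α hα => Submodule.smul_mem _ _ (mon_mem ?_)
  refine le_trans ?_ hP
  have := MvPolynomial.le_totalDegree hα
  simpa [Finsupp.degree_apply, Finsupp.sum] using this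

lemma mon_poly {j : ℕ} : ∀ n : ℕ, ∀ α : Fin r →₀ ℕ, α.degree = n → α.degree ≤ j →
    mon α ∈ PolySet r j := by
  intro n
  induction n using Nat.strong_induction_on with
  | _ n ih =>
    intro α hn hj
    by_cases h : ∃ i, 3 ≤ α i
    · obtain ⟨i, hi⟩ := h
      obtain ⟨α', γ, h1, h2, h3⟩ := mon_reduce α i hi
      rw [← h3]
      have h4 : γ.degree ≠ 0 := by rwa [Ne, Finsupp.degree_eq_zero_iff]
      have h5 : α.degree = α'.degree + γ.degree := by rw [h1]; simp
      exact ih α'.degree (by omega) α' rfl (by omega)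
    · push Not at h
      refine ⟨MvPolynomial.monomial α 1, ?_, ?_, ?_⟩
      · refine le_trans (MvPolynomial.totalDegree_monomial_le _ _) ?_
        simpa [Finsupp.degree_apply, Finsupp.sum] using hj
      · intro i
        rw [MvPolynomial.degreeOf_monomial_eq _ _ one_ne_zero]
        have := h i; omega
      · intro x
        simp [mon, MvPolynomial.eval_monomial, Finsupp.prod_fintype]

lemma PP_sub {j : ℕ} {g : Fn r} (h : g ∈ PP r j) : g ∈ PolySet r j := by
  refine Submodule.span_induction (p := fun g _ => g ∈ PolySet r j) ?_ ?_ ?_ ?_ h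
  · rintro _ ⟨α, hα, rfl⟩
    exact mon_poly _ α rfl hα
  · exact ⟨0, by simp, by simp, by simp⟩
  · rintro f g - - ⟨P, h1, h2, h3⟩ ⟨Q, h4, h5, h6⟩
    refine ⟨P + Q, ?_, ?_, ?_⟩
    · exact le_trans (MvPolynomial.totalDegree_add _ _) (max_le h1 h4)
    · intro i
      exact le_trans (MvPolynomial.degreeOf_add_le _ _ _) (max_le (h2 i) (h5 i))
    · intro x; simp [h3, h6]
  · rintro c f - ⟨P, h1, h2, h3⟩
    refine ⟨c • P, le_trans (MvPolynomial.totalDegree_smul_le _ _) h1, ?_, ?_⟩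
    · intro i
      rw [MvPolynomial.smul_eq_C_mul]
      exact le_trans (MvPolynomial.degreeOf_C_mul_le _ _ _) (h2 i)
    · intro x; simp [h3, MvPolynomial.smul_eval]

lemma mem_polyFinset {j : ℕ} {g : Fn r} : g ∈ polyFinset r j ↔ g ∈ PP r j := by
  simp only [polyFinset, Set.Finite.mem_toFinset]
  exact ⟨poly_sub, PP_sub⟩

end St18

namespace St18

variable {r : ℕ}

lemma dotF_add (β f g : Fn r) : dotF β (f + g) = dotF β f + dotF β g := by
  simp [dotF, mul_add, Finset.sum_add_distrib]

lemma dotF_smul (β f : Fn r) (c : F3) : dotF β (c • f) = c * dotF β f := by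
  simp only [dotF, Finset.mul_sum, Pi.smul_apply, smul_eq_mul]
  exact Finset.sum_congr rfl fun x _ => by ring

noncomputable def dotL (β : Fn r) : Fn r →ₗ[F3] F3 where
  toFun := dotF β
  map_add' := dotF_add β
  map_smul' c f := by simp [dotF_smul]

lemma dotF_sub_left (β γ f : Fn r) : dotF (β - γ) f = dotF β f - dotF γ f := by
  simp [dotF, sub_mul, Finset.sum_sub_distrib]

lemma dotF_zero (β : Fn r) : dotF β 0 = 0 := by simp [dotF]

noncomputable def low (α : DegLex (Fin r →₀ ℕ)) : Submodule F3 (Fn r) :=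
  Submodule.span F3 ((fun u => mon (ofDegLex u)) '' {u : DegLex (Fin r →₀ ℕ) | u < α})

lemma indep (K : Submodule F3 (Fn r)) (a : ℕ) (hK : K ≤ PP r a)
    (U : Finset (DegLex (Fin r →₀ ℕ))) (hU : ∀ u ∈ U, (ofDegLex u).degree ≤ a)
    (h : ∀ u ∈ U, mon (ofDegLex u) ∉ low u ⊔ K) :
    U.card + Module.finrank F3 K ≤ Module.finrank F3 (PP r a) := by
  have key : ∀ U : Finset (DegLex (Fin r →₀ ℕ)), (∀ u ∈ U, mon (ofDegLex u) ∉ low u ⊔ K) →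
      U.card + Module.finrank F3 K ≤
      Module.finrank F3 ↥(Submodule.span F3 ((fun u => mon (ofDegLex u)) '' (U : Set (DegLex (Fin r →₀ ℕ)))) ⊔ K) := by
    intro U
    induction U using Finset.induction_on_max with
    | empty => intro _; simpa using Submodule.finrank_mono (le_sup_right : K ≤ _ ⊔ K)
    | insert u s hs ih =>
      intro h
      have ih' := ih fun v hv => h v (Finset.mem_insert_of_mem hv)
      have hu : u ∉ s := fun hh => lt_irrefl _ (hs u hh)
      rw [Finset.card_insert_of_notMem hu]
      have hlt : Submodule.span F3 ((fun u => mon (ofDegLex u)) '' (s : Set (DegLex (Fin r →₀ ℕ)))) ⊔ K <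
          Submodule.span F3 ((fun u => mon (ofDegLex u)) '' ((insert u s : Finset _) : Set (DegLex (Fin r →₀ ℕ)))) ⊔ K := by
        refine lt_of_le_of_ne ?_ ?_
        · refine sup_le_sup_right (Submodule.span_mono (Set.image_mono ?_)) _
          simp
        · intro heq
          apply h u (Finset.mem_insert_self _ _)
          have h1 : mon (ofDegLex u) ∈ Submodule.span F3 ((fun u => mon (ofDegLex u)) '' ((insert u s : Finset _) : Set (DegLex (Fin r →₀ ℕ)))) ⊔ K :=
            Submodule.mem_sup_left (Submodule.subset_span ⟨u, by simp, rfl⟩)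
          rw [← heq] at h1
          refine (sup_le_sup_right (Submodule.span_mono (Set.image_mono ?_)) K : _ ≤ low u ⊔ K) h1
          intro v hv
          exact hs v hv
      have := Submodule.finrank_lt_finrank_of_lt hlt
      omega
  refine le_trans (key U h) (Submodule.finrank_mono ?_)
  refine sup_le ?_ hK
  rw [Submodule.span_le]
  rintro _ ⟨u, hu, rfl⟩
  exact mon_mem (hU u hu)

noncomputable def KK (β : Fn r) (a b : ℕ) : Submodule F3 (Fn r) where
  carrier := {p | p ∈ PP r a ∧ ∀ q ∈ PP r b, dotF β (p * q) = 0}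
  add_mem' := by
    rintro p p' ⟨h1, h2⟩ ⟨h3, h4⟩
    refine ⟨(PP r a).add_mem h1 h3, fun q hq => ?_⟩
    rw [add_mul, dotF_add, h2 q hq, h4 q hq, add_zero]
  zero_mem' := ⟨(PP r a).zero_mem, fun q _ => by rw [zero_mul, dotF_zero]⟩
  smul_mem' := by
    rintro c p ⟨h1, h2⟩
    refine ⟨(PP r a).smul_mem c h1, fun q hq => ?_⟩
    rw [smul_mul_assoc, dotF_smul, h2 q hq, mul_zero]

lemma mem_KK {β : Fn r} {a b : ℕ} {p : Fn r} :
    p ∈ KK β a b ↔ p ∈ PP r a ∧ ∀ q ∈ PP r b, dotF β (p * q) = 0 := Iff.rfl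

lemma KK_le (β : Fn r) (a b : ℕ) : KK β a b ≤ PP r a := fun _ h => h.1

lemma KK_anti (β : Fn r) (a : ℕ) {b b' : ℕ} (h : b ≤ b') : KK β a b' ≤ KK β a b :=
  fun _ hp => ⟨hp.1, fun q hq => hp.2 q (PP_mono h hq)⟩

noncomputable def rho (β : Fn r) (a b : ℕ) : ℕ :=
  Module.finrank F3 (PP r a) - Module.finrank F3 (KK β a b)

lemma rho_add (β : Fn r) (a b : ℕ) :
    rho β a b + Module.finrank F3 (KK β a b) = Module.finrank F3 (PP r a) :=
  Nat.sub_add_cancel (Submodule.finrank_mono (KK_le β a b))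

noncomputable def bil (β : Fn r) (a b : ℕ) : PP r a →ₗ[F3] Module.Dual F3 (PP r b) :=
  LinearMap.mk₂ F3 (fun p q => dotF β ((p : Fn r) * (q : Fn r)))
    (fun p p' q => by simp [add_mul, dotF_add])
    (fun c p q => by simp [smul_mul_assoc, dotF_smul])
    (fun p q q' => by simp [mul_add, dotF_add])
    (fun c p q => by simp [mul_smul_comm, dotF_smul])

lemma rho_eq (β : Fn r) (a b : ℕ) :
    rho β a b = Module.finrank F3 (LinearMap.range (bil β a b)) := by
  have h1 : KK β a b = (LinearMap.ker (bil β a b)).map (PP r a).subtype := by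
    ext p
    simp only [Submodule.mem_map, LinearMap.mem_ker, Submodule.subtype_apply, Subtype.exists,
      exists_and_right, exists_eq_right, mem_KK]
    constructor
    · rintro ⟨hp, h⟩
      exact ⟨hp, LinearMap.ext fun q => h q q.2⟩
    · rintro ⟨hp, h⟩
      exact ⟨hp, fun q hq => LinearMap.congr_fun h ⟨q, hq⟩⟩
  have h2 := LinearMap.finrank_range_add_finrank_ker (bil β a b)
  have h3 := rho_add β a b
  rw [h1, Submodule.finrank_map_subtype_eq] at h3
  omega

lemma rho_symm (β : Fn r) (a b : ℕ) : rho β a b = rho β b a := by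
  rw [rho_eq, rho_eq, ← LinearMap.finrank_range_dualMap_eq_finrank_range]
  have : bil β b a = (bil β a b).dualMap ∘ₗ (Module.evalEquiv F3 (PP r b)).toLinearMap := by
    ext q p
    simp [bil, LinearMap.dualMap_apply, mul_comm]
  rw [this, LinearMap.range_comp_of_range_eq_top]
  exact LinearEquiv.range _

lemma rho_mono_right (β : Fn r) (a : ℕ) {b b' : ℕ} (h : b ≤ b') : rho β a b ≤ rho β a b' := by
  have h1 := rho_add β a b
  have h2 := rho_add β a b'
  have h3 := Submodule.finrank_mono (KK_anti β a h)
  omega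

lemma rho_mono (β : Fn r) {a a' b b' : ℕ} (h' : a ≤ a') (h : b ≤ b') : rho β a b ≤ rho β a' b' := by
  refine (rho_mono_right β a h).trans ?_
  rw [rho_symm β a, rho_symm β a']
  exact rho_mono_right β b' h'

lemma KK_flat (β : Fn r) (a b : ℕ) (h : rho β a b = rho β a (b + 1)) : KK β a (b + 1) = KK β a b := by
  refine Submodule.eq_of_le_of_finrank_eq (KK_anti β a (Nat.le_succ b)) ?_
  have h1 := rho_add β a b
  have h2 := rho_add β a (b + 1)
  omega

/-- truncated ideals -/
def Closed (K : Submodule F3 (Fn r)) (a : ℕ) : Prop :=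
  K ≤ PP r a ∧ ∀ j, j + 1 ≤ a → ∀ p ∈ K, p ∈ PP r j → ∀ i, coordFn i * p ∈ K

lemma closed_of_flat (β : Fn r) (a b : ℕ) (h : rho β a b = rho β a (b + 1)) :
    Closed (KK β a b) a := by
  refine ⟨KK_le _ _ _, fun j hj p hp hpj i => ?_⟩
  refine ⟨PP_mono hj (add_comm 1 j ▸ mul_mem (coord_mem i) hpj), fun q hq => ?_⟩
  rw [← KK_flat β a b h] at hp
  rw [show coordFn i * p * q = p * (coordFn i * q) by ring]
  exact hp.2 _ (add_comm 1 b ▸ mul_mem (coord_mem i) hq)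

lemma closed_mon {K : Submodule F3 (Fn r)} {a : ℕ} (hK : Closed K a) :
    ∀ n (α : Fin r →₀ ℕ), α.degree = n → ∀ j p, j + n ≤ a → p ∈ K → p ∈ PP r j → mon α * p ∈ K := by
  intro n
  induction n with
  | zero =>
    intro α hα j p _ hp _
    rw [Finsupp.degree_eq_zero_iff] at hα
    rw [hα, mon_zero, one_mul]; exact hp
  | succ n ih =>
    intro α hα j p hj hp hpj
    have : ∃ i, α i ≠ 0 := by
      by_contra hh
      push Not at hh
      have : α = 0 := Finsupp.ext hh
      simp [this] at hα
    obtain ⟨i, hi⟩ := this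
    have h1 : α = (α - Finsupp.single i 1) + Finsupp.single i 1 := by
      rw [tsub_add_cancel_of_le]
      rw [Finsupp.single_le_iff]; omega
    have h2 : (α - Finsupp.single i 1).degree = n := by
      have := congrArg Finsupp.degree h1
      rw [map_add, Finsupp.degree_single] at this
      omega
    rw [h1, mon_add, mon_single, mul_assoc]
    exact ih _ h2 (j + 1) _ (by omega) (hK.2 j (by omega) p hp hpj i)
      (add_comm 1 j ▸ mul_mem (coord_mem i) hpj)

lemma closed_mul {K : Submodule F3 (Fn r)} {a : ℕ} (hK : Closed K a) {n j : ℕ} {g p : Fn r}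
    (hg : g ∈ PP r n) (hj : j + n ≤ a) (hp : p ∈ K) (hpj : p ∈ PP r j) : g * p ∈ K := by
  refine Submodule.span_induction (p := fun g _ => g * p ∈ K) ?_ ?_ ?_ ?_ hg
  · rintro _ ⟨α, hα, rfl⟩
    have hα' : α.degree ≤ n := hα
    exact closed_mon hK _ α rfl j p (by omega) hp hpj
  · simp
  · intro x y _ _ hx hy
    rw [add_mul]; exact K.add_mem hx hy
  · intro c x _ hx
    rw [smul_mul_assoc]; exact K.smul_mem c hx

end St18

namespace St18

variable {r : ℕ}

noncomputable def ind (A : Finset (Fin r)) : Fin r →₀ ℕ := ∑ i ∈ A, Finsupp.single i 1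

lemma ind_apply (A : Finset (Fin r)) (j : Fin r) : ind A j = if j ∈ A then 1 else 0 := by
  simp [ind, Finsupp.finsetSum_apply, Finsupp.single_apply]

lemma ind_degree (A : Finset (Fin r)) : (ind A).degree = A.card := by
  simp [ind]

lemma ind_inj {A B : Finset (Fin r)} (h : ind A = ind B) : A = B := by
  ext j
  have := DFunLike.congr_fun h j
  rw [ind_apply, ind_apply] at this
  by_cases h1 : j ∈ A <;> by_cases h2 : j ∈ B <;> simp_all

noncomputable def pairU (T : Finset (Fin r)) (w : Fin r →₀ ℕ) : Finset (DegLex (Fin r →₀ ℕ)) :=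
  (T.powersetCard 2).image fun A => toDegLex (w + ind A)

lemma pairU_card (T : Finset (Fin r)) (w : Fin r →₀ ℕ) : (pairU T w).card = T.card.choose 2 := by
  rw [pairU, Finset.card_image_of_injective, Finset.card_powersetCard]
  intro A B h
  exact ind_inj (add_left_cancel (toDegLex_injective h))

lemma mem_pairU {T : Finset (Fin r)} {w : Fin r →₀ ℕ} {u : DegLex (Fin r →₀ ℕ)} (h : u ∈ pairU T w) :
    (ofDegLex u).degree = w.degree + 2 ∧ ofDegLex u ≤ w + ind T := by
  simp only [pairU, Finset.mem_image, Finset.mem_powersetCard] at h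
  obtain ⟨A, ⟨h1, h2⟩, rfl⟩ := h
  refine ⟨by simp [ind_degree, h2], ?_⟩
  simp only [ofDegLex_toDegLex]
  refine add_le_add_right ?_ _
  intro j
  rw [ind_apply, ind_apply]
  by_cases h3 : j ∈ A
  · simp [h3, h1 h3]
  · simp [h3]

lemma low_mul {u : DegLex (Fin r →₀ ℕ)} {s : Fn r} (γ : Fin r →₀ ℕ) (hs : s ∈ low u) :
    mon γ * s ∈ low (toDegLex γ + u) := by
  refine Submodule.span_induction (p := fun s _ => mon γ * s ∈ low (toDegLex γ + u)) ?_ ?_ ?_ ?_ hs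
  · rintro _ ⟨v, hv, rfl⟩
    refine Submodule.subset_span ⟨toDegLex γ + v, ?_, ?_⟩
    · exact add_lt_add_right (show v < u from hv) _
    · simp only [ofDegLex_add, ofDegLex_toDegLex, mon_add]
  · simp
  · intro x y _ _ hx hy
    rw [mul_add]; exact Submodule.add_mem _ hx hy
  · intro c x _ hx
    rw [mul_smul_comm]; exact Submodule.smul_mem _ c hx

lemma low_le (u : DegLex (Fin r →₀ ℕ)) : low u ≤ PP r (ofDegLex u).degree := by
  rw [low, Submodule.span_le]
  rintro _ ⟨v, hv, rfl⟩
  exact mon_mem (Finsupp.DegLex.monotone_degree (le_of_lt hv))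

lemma reduce_lt {α : Fin r →₀ ℕ} {i : Fin r} (h : 3 ≤ α i) :
    ∃ α' : Fin r →₀ ℕ, toDegLex α' < toDegLex α ∧ mon α' = mon α := by
  obtain ⟨α', γ, h1, h2, h3⟩ := mon_reduce α i h
  refine ⟨α', ?_, h3⟩
  rw [Finsupp.DegLex.lt_iff]
  left
  have h4 : γ.degree ≠ 0 := by rwa [Ne, Finsupp.degree_eq_zero_iff]
  have h5 : α.degree = α'.degree + γ.degree := by rw [h1]; simp
  simp only [ofDegLex_toDegLex]
  omega

lemma supp_card {α : Fin r →₀ ℕ} (h : ∀ i, α i ≤ 2) : α.degree ≤ 2 * α.support.card := by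
  rw [Finsupp.degree_apply, mul_comm]
  exact Finset.sum_le_card_nsmul _ _ _ fun i _ => h i

lemma reduceStep {K : Submodule F3 (Fn r)} {a : ℕ} (hK : Closed K a) (e : ℕ) (he : e + 1 ≤ a)
    (h : Module.finrank F3 (PP r a) < (e / 2).choose 2 + Module.finrank F3 K) :
    PP r (e + 1) ≤ PP r e ⊔ K := by
  by_contra hcon
  have : ∃ u : DegLex (Fin r →₀ ℕ), (ofDegLex u).degree ≤ e + 1 ∧ mon (ofDegLex u) ∉ PP r e ⊔ K := by
    by_contra hh
    push Not at hh
    apply hcon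
    rw [PP, Submodule.span_le]
    rintro _ ⟨u, hu, rfl⟩
    exact hh (toDegLex u) hu
  obtain ⟨α, ⟨hα1, hα2⟩, hmin⟩ := WellFounded.has_min
    (wellFounded_lt : WellFounded ((· < ·) : DegLex (Fin r →₀ ℕ) → DegLex (Fin r →₀ ℕ) → Prop))
    {u | (ofDegLex u).degree ≤ e + 1 ∧ mon (ofDegLex u) ∉ PP r e ⊔ K} this
  have hmin' : ∀ u < α, mon (ofDegLex u) ∈ PP r e ⊔ K := by
    intro u hu
    by_contra hh
    exact hmin u ⟨le_trans (Finsupp.DegLex.monotone_degree (le_of_lt hu)) hα1, hh⟩ hu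
  have hdeg : (ofDegLex α).degree = e + 1 := by
    by_contra hh
    exact hα2 (Submodule.mem_sup_left (mon_mem (by omega)))
  have hα3 : ∀ i, (ofDegLex α) i ≤ 2 := by
    intro i
    by_contra hh
    obtain ⟨α', h1, h2⟩ := reduce_lt (α := ofDegLex α) (i := i) (by omega)
    apply hα2
    rw [← h2]
    exact hmin' _ h1
  have hlow : low α ⊔ K ≤ PP r e ⊔ K := by
    refine sup_le ?_ le_sup_right
    rw [low, Submodule.span_le]
    rintro _ ⟨u, hu, rfl⟩
    exact hmin' u hu
  have hc := supp_card hα3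
  have hind : ind (ofDegLex α).support ≤ ofDegLex α := by
    intro j
    rw [ind_apply]
    split_ifs with hj
    · rw [Finsupp.mem_support_iff] at hj; omega
    · omega
  have key := indep K a hK.1 (pairU (ofDegLex α).support 0) ?_ ?_
  · rw [pairU_card] at key
    have : (e / 2).choose 2 ≤ ((ofDegLex α).support.card).choose 2 := Nat.choose_le_choose 2 (by omega)
    omega
  · intro u hu
    have h1 := (mem_pairU hu).2
    rw [zero_add] at h1
    have h2 := Finsupp.degree_mono (h1.trans hind)
    omega
  · intro u hu hmem
    have h1 := (mem_pairU hu).2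
    rw [zero_add] at h1
    have h2 := h1.trans hind
    apply hα2
    apply hlow
    obtain ⟨s, hs, k, hk, hsk⟩ := Submodule.mem_sup.1 hmem
    have hk2 : k ∈ PP r (ofDegLex u).degree := by
      have : k = mon (ofDegLex u) - s := by rw [← hsk]; simp
      rw [this]
      exact Submodule.sub_mem _ (mon_mem le_rfl) (low_le u hs)
    have hsum : ofDegLex α = (ofDegLex α - ofDegLex u) + ofDegLex u := (tsub_add_cancel_of_le h2).symm
    have hd : (ofDegLex α).degree = (ofDegLex α - ofDegLex u).degree + (ofDegLex u).degree := by
      conv_lhs => rw [hsum]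
      simp
    have hk3 := closed_mon hK _ (ofDegLex α - ofDegLex u) rfl (ofDegLex u).degree k (by omega) hk hk2
    have hs2 := low_mul (ofDegLex α - ofDegLex u) hs
    have e1 : toDegLex (ofDegLex α - ofDegLex u) + u = α := by
      apply ofDegLex_injective
      rw [ofDegLex_add, ofDegLex_toDegLex, ← hsum]
    rw [e1] at hs2
    rw [hsum, mon_add, ← hsk, mul_add]
    exact Submodule.add_mem_sup hs2 hk3

lemma reduceAll {K : Submodule F3 (Fn r)} {a : ℕ} (hK : Closed K a) (e : ℕ)
    (h : Module.finrank F3 (PP r a) < (e / 2).choose 2 + Module.finrank F3 K) :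
    ∀ j, j ≤ a → PP r j ≤ PP r e ⊔ K := by
  intro j
  induction j with
  | zero => intro _; exact (PP_mono (Nat.zero_le _)).trans le_sup_left
  | succ j ih =>
    intro hj
    by_cases hje : j + 1 ≤ e
    · exact (PP_mono hje).trans le_sup_left
    · have h1 := reduceStep hK j hj (lt_of_lt_of_le h (by
        have : (e / 2).choose 2 ≤ (j / 2).choose 2 := Nat.choose_le_choose 2 (by omega)
        omega))
      exact h1.trans (sup_le (ih (by omega)) le_sup_right)

end St18

namespace St18

variable {r : ℕ}

lemma delta_ne (y b : F3) : (y - b) * (1 - (y - b) ^ 2) = 0 := by revert y b; decide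

lemma delta_sum (y : F3) : ∑ b : F3, (1 - (y - b) ^ 2) = 1 := by revert y; decide

noncomputable def del (i : Fin r) (b : F3) : Fn r := fun x => 1 - (x i - b) ^ 2

lemma lin_mem (i : Fin r) (b : F3) : (coordFn i - fun _ => b) ∈ PP r 1 :=
  Submodule.sub_mem _ (coord_mem i) (const_mem b 1)

lemma del_mem (i : Fin r) (b : F3) : del i b ∈ PP r 2 := by
  have : del i b = 1 - (coordFn i - fun _ => b) * (coordFn i - fun _ => b) := by
    funext x; simp [del, coordFn, sq]
  rw [this]
  exact Submodule.sub_mem _ (one_mem 2) (PP_mono (by norm_num : 1 + 1 ≤ 2) (mul_mem (lin_mem i b) (lin_mem i b)))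

noncomputable def VV (K : Submodule F3 (Fn r)) (n : ℕ) : Finset (Pt r) :=
  Finset.univ.filter fun c => ∀ k ∈ K, k ∈ PP r n → k c = 0

lemma null_aux {K : Submodule F3 (Fn r)} {a e n : ℕ} (hK : Closed K a)
    (hred : ∀ j, j ≤ a → PP r j ≤ PP r e ⊔ K) (hn : n + e + 2 ≤ a) (hn1 : 1 ≤ n)
    (p : Fn r) (hp : p ∈ PP r n) (hpK : p ∉ K) (I : Finset (Fin r)) :
    ∃ h ∈ PP r e, ∃ c : Pt r, p * h ∉ K ∧ ∀ i ∈ I, (coordFn i - fun _ => c i) * h ∈ K := by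
  induction I using Finset.induction_on with
  | empty => exact ⟨1, one_mem e, 0, by simpa using hpK, by simp⟩
  | insert i I hi ih =>
    obtain ⟨h, hh, c, h1, h2⟩ := ih
    have hb : ∃ b : F3, p * (h * del i b) ∉ K := by
      by_contra hcon
      push Not at hcon
      apply h1
      have : p * h = ∑ b : F3, p * (h * del i b) := by
        rw [← Finset.mul_sum, ← Finset.mul_sum]
        have : ∑ b : F3, del i b = (1 : Fn r) := by
          funext x
          simpa [del, Finset.sum_apply] using delta_sum (x i)
        rw [this, mul_one]
      rw [this]
      exact Submodule.sum_mem _ fun b _ => hcon b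
    obtain ⟨b, hb⟩ := hb
    have hhd : h * del i b ∈ PP r (e + 2) := mul_mem hh (del_mem i b)
    obtain ⟨h', hh', k, hk, hsum⟩ := Submodule.mem_sup.1 (hred (e + 2) (by omega) hhd)
    have hk2 : k ∈ PP r (e + 2) := by
      have : k = h * del i b - h' := by rw [← hsum]; simp
      rw [this]
      exact Submodule.sub_mem _ hhd (PP_mono (by omega) hh')
    have hh'eq : h' = h * del i b - k := by rw [← hsum]; simp
    refine ⟨h', hh', Function.update c i b, ?_, ?_⟩
    · intro hcon
      apply hb
      rw [← hsum, mul_add]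
      exact K.add_mem hcon (closed_mul hK hp (by omega) hk hk2)
    · intro j hj
      have hkj : ∀ z : F3, (coordFn j - fun _ => z) * k ∈ K := fun z =>
        closed_mul hK (lin_mem j z) (by omega) hk hk2
      rw [hh'eq, mul_sub]
      refine K.sub_mem ?_ (hkj _)
      by_cases hji : j = i
      · subst hji
        have : (coordFn j - fun _ => (Function.update c j b) j) * (h * del j b) = 0 := by
          funext x
          have := delta_ne (x j) b
          simp only [Pi.mul_apply, Pi.sub_apply, coordFn, del, Function.update_self, Pi.zero_apply]
          rw [show (x j - b) * (h x * (1 - (x j - b) ^ 2)) = h x * ((x j - b) * (1 - (x j - b) ^ 2)) by ring,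
            this, mul_zero]
        rw [this]; exact K.zero_mem
      · have hjI : j ∈ I := by
          rcases Finset.mem_insert.1 hj with h | h
          · exact absurd h hji
          · exact h
        rw [Function.update_of_ne hji]
        rw [show (coordFn j - fun _ => c j) * (h * del i b) = del i b * ((coordFn j - fun _ => c j) * h) by ring]
        refine closed_mul hK (del_mem i b) (j := 1 + e) (by omega) (h2 j hjI) (mul_mem (lin_mem j _) hh)

lemma eval_aux {K : Submodule F3 (Fn r)} {a e : ℕ} (hK : Closed K a) (h : Fn r) (hh : h ∈ PP r e)
    (c : Pt r) (hc : ∀ i, (coordFn i - fun _ => c i) * h ∈ K) :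
    ∀ n (α : Fin r →₀ ℕ), α.degree = n → n + e ≤ a → mon α * h - (mon α c) • h ∈ K := by
  intro n
  induction n with
  | zero =>
    intro α hα _
    rw [Finsupp.degree_eq_zero_iff] at hα
    rw [hα, mon_zero]
    simp
  | succ n ih =>
    intro α hα hn
    have : ∃ i, α i ≠ 0 := by
      by_contra hh
      push Not at hh
      have : α = 0 := Finsupp.ext hh
      simp [this] at hα
    obtain ⟨i, hi⟩ := this
    have h1 : α = (α - Finsupp.single i 1) + Finsupp.single i 1 := by
      rw [tsub_add_cancel_of_le]
      rw [Finsupp.single_le_iff]; omega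
    have h2 : (α - Finsupp.single i 1).degree = n := by
      have := congrArg Finsupp.degree h1
      rw [map_add, Finsupp.degree_single] at this
      omega
    have ih' := ih _ h2 (by omega)
    have h3 := closed_mul hK (mon_mem (le_of_eq h2)) (j := 1 + e) (by omega) (hc i) (mul_mem (lin_mem i _) hh)
    have h4 := K.add_mem h3 (K.smul_mem (c i) ih')
    rw [h1, mon_add, mon_single]
    convert h4 using 1
    funext x
    simp [coordFn]
    ring

lemma null {K : Submodule F3 (Fn r)} {a e n : ℕ} (hK : Closed K a)
    (hred : ∀ j, j ≤ a → PP r j ≤ PP r e ⊔ K) (hn : n + e + 2 ≤ a) (hn1 : 1 ≤ n)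
    (p : Fn r) (hp : p ∈ PP r n) (hpV : ∀ c ∈ VV K n, p c = 0) : p ∈ K := by
  by_contra hpK
  obtain ⟨h, hh, c, h1, h2⟩ := null_aux hK hred hn hn1 p hp hpK Finset.univ
  have key : ∀ g ∈ PP r n, g * h - (g c) • h ∈ K := by
    intro g hg
    refine Submodule.span_induction (p := fun g _ => g * h - (g c) • h ∈ K) ?_ ?_ ?_ ?_ hg
    · rintro _ ⟨α, hα, rfl⟩
      have hα' : α.degree ≤ n := hα
      exact eval_aux hK h hh c (fun i => h2 i (Finset.mem_univ i)) _ α rfl (by omega)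
    · simp
    · intro x y _ _ hx hy
      convert K.add_mem hx hy using 1
      rw [Pi.add_apply, add_smul]; ring
    · intro z x _ hx
      convert K.smul_mem z hx using 1
      rw [Pi.smul_apply, smul_mul_assoc, smul_sub, smul_assoc]
  have hcV : c ∈ VV K n := by
    rw [VV, Finset.mem_filter]
    refine ⟨Finset.mem_univ _, fun k hk hkn => ?_⟩
    by_contra hkc
    have h3 : h * k ∈ K := closed_mul hK hh (by omega) hk hkn
    have h4 := K.sub_mem h3 (key k hkn)
    rw [mul_comm h k, sub_sub_cancel] at h4
    have h5 : h ∈ K := by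
      have := K.smul_mem (k c)⁻¹ h4
      rwa [smul_smul, inv_mul_cancel₀ hkc, one_smul] at this
    exact h1 (closed_mul hK hp (by omega) h5 hh)
  have := key p hp
  rw [hpV c hcV, zero_smul, sub_zero] at this
  exact h1 this

noncomputable def res (V : Finset (Pt r)) : Fn r →ₗ[F3] (V → F3) :=
  LinearMap.funLeft F3 F3 (fun x : V => (x : Pt r))

lemma res_apply (V : Finset (Pt r)) (f : Fn r) (x : V) : res V f x = f x := rfl

lemma all_PP : ∃ N, PP r N = ⊤ := by
  have hd : ∀ (c : Pt r) (I : Finset (Fin r)), (∏ i ∈ I, del i (c i)) ∈ PP r (2 * I.card) := by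
    intro c I
    induction I using Finset.induction_on with
    | empty => simpa using one_mem 0
    | insert i I hi ih =>
      rw [Finset.prod_insert hi, Finset.card_insert_of_notMem hi]
      rw [show 2 * (I.card + 1) = 2 + 2 * I.card by ring]
      exact mul_mem (del_mem i _) ih
  refine ⟨2 * (Finset.univ : Finset (Fin r)).card, ?_⟩
  rw [eq_top_iff]
  intro f _
  have : f = ∑ c : Pt r, f c • ∏ i, del i (c i) := by
    funext x
    rw [Finset.sum_apply, Finset.sum_eq_single x]
    · simp [del, Finset.prod_apply]
    · intro c _ hc
      have : ∃ i, x i ≠ c i := by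
        by_contra hh
        push Not at hh
        exact hc (funext hh).symm
      obtain ⟨i, hi⟩ := this
      rw [Pi.smul_apply, Finset.prod_apply, Finset.prod_eq_zero (Finset.mem_univ i), smul_zero]
      have h2 := delta_ne (x i) (c i)
      exact (mul_eq_zero.1 h2).resolve_left (sub_ne_zero.2 hi)
    · simp
  rw [this]
  exact Submodule.sum_mem _ fun c _ => Submodule.smul_mem _ _ (hd c _)

lemma res_surj {K : Submodule F3 (Fn r)} {a e n : ℕ}
    (hred : ∀ j, j ≤ a → PP r j ≤ PP r e ⊔ K) (hn : n ≤ a) (hn1 : e + 1 ≤ n) :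
    (PP r e).map (res (VV K n)) = ⊤ := by
  have key : ∀ m (α : Fin r →₀ ℕ), α.degree = m → res (VV K n) (mon α) ∈ (PP r e).map (res (VV K n)) := by
    intro m
    induction m with
    | zero =>
      intro α hα
      exact Submodule.mem_map_of_mem (mon_mem (by omega))
    | succ m ih =>
      intro α hα
      have : ∃ i, α i ≠ 0 := by
        by_contra hh
        push Not at hh
        have : α = 0 := Finsupp.ext hh
        simp [this] at hα
      obtain ⟨i, hi⟩ := this
      have h1 : α = (α - Finsupp.single i 1) + Finsupp.single i 1 := by
        rw [tsub_add_cancel_of_le]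
        rw [Finsupp.single_le_iff]; omega
      have h2 : (α - Finsupp.single i 1).degree = m := by
        have := congrArg Finsupp.degree h1
        rw [map_add, Finsupp.degree_single] at this
        omega
      obtain ⟨q, hq, hqe⟩ := ih _ h2
      have hxq : q * coordFn i ∈ PP r (e + 1) := mul_mem hq (coord_mem i)
      obtain ⟨q', hq', k, hk, hsum⟩ := Submodule.mem_sup.1 (hred (e + 1) (by omega) hxq)
      have hk2 : k ∈ PP r (e + 1) := by
        have : k = q * coordFn i - q' := by rw [← hsum]; simp
        rw [this]
        exact Submodule.sub_mem _ hxq (PP_mono (by omega) hq')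
      refine ⟨q', hq', ?_⟩
      funext x
      have hx := (Finset.mem_filter.1 x.2).2 k hk (PP_mono hn1 hk2)
      have hqx := congrFun hqe x
      rw [res_apply, res_apply] at hqx
      rw [h1, mon_add, mon_single, res_apply, res_apply, Pi.mul_apply, ← hqx]
      have := congrFun hsum x
      rw [Pi.add_apply, hx, add_zero, Pi.mul_apply] at this
      exact this
  obtain ⟨N, hN⟩ := all_PP (r := r)
  rw [eq_top_iff]
  intro f _
  have hsurj : Function.Surjective (res (VV K n)) :=
    LinearMap.funLeft_surjective_of_injective _ _ _ Subtype.val_injective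
  obtain ⟨g, rfl⟩ := hsurj f
  have hg : g ∈ PP r N := by rw [hN]; trivial
  refine Submodule.span_induction (p := fun g _ => res (VV K n) g ∈ (PP r e).map (res (VV K n))) ?_ ?_ ?_ ?_ hg
  · rintro _ ⟨α, hα, rfl⟩
    exact key _ α rfl
  · simp
  · intro x y _ _ hx hy
    rw [map_add]; exact Submodule.add_mem _ hx hy
  · intro c x _ hx
    rw [map_smul]; exact Submodule.smul_mem _ c hx

lemma VV_card {K : Submodule F3 (Fn r)} {a e n : ℕ} (hK : K ≤ PP r a)
    (hred : ∀ j, j ≤ a → PP r j ≤ PP r e ⊔ K) (hn : n ≤ a) (hn1 : e + 1 ≤ n) :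
    (VV K n).card + Module.finrank F3 K ≤ Module.finrank F3 (PP r a) := by
  have h1 := res_surj hred hn hn1
  have h2 := LinearMap.finrank_range_add_finrank_ker ((res (VV K n)).domRestrict (PP r e))
  rw [LinearMap.range_domRestrict, h1, finrank_top, Module.finrank_fintype_fun_eq_card,
    Fintype.card_coe] at h2
  have h3 : Module.finrank F3 ↥(PP r e ⊓ K) ≤
      Module.finrank F3 (LinearMap.ker ((res (VV K n)).domRestrict (PP r e))) := by
    rw [← Submodule.finrank_map_subtype_eq (PP r e) (LinearMap.ker _)]
    refine Submodule.finrank_mono ?_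
    rintro k ⟨hk1, hk2⟩
    refine ⟨⟨k, hk1⟩, ?_, rfl⟩
    simp only [SetLike.mem_coe, LinearMap.mem_ker]
    funext x
    exact (Finset.mem_filter.1 x.2).2 k hk2 (PP_mono (by omega) hk1)
  have h4 := Submodule.finrank_sup_add_finrank_inf_eq (PP r e) K
  have h5 : Module.finrank F3 (PP r a) ≤ Module.finrank F3 ↥(PP r e ⊔ K) :=
    Submodule.finrank_mono (hred a le_rfl)
  have h6 : Module.finrank F3 ↥(PP r e ⊔ K) ≤ Module.finrank F3 (PP r a) :=
    Submodule.finrank_mono (sup_le (PP_mono (by omega)) hK)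
  omega

lemma exists_rep (β : Fn r) (V : Finset (Pt r)) (n : ℕ)
    (h : ∀ p ∈ PP r n, (∀ c ∈ V, p c = 0) → dotF β p = 0) :
    ∃ β' : Fn r, (∀ x, x ∉ V → β' x = 0) ∧ ∀ p ∈ PP r n, dotF β' p = dotF β p := by
  have h1 : (dotL β).domRestrict (PP r n) ∈
      (LinearMap.ker ((res V).domRestrict (PP r n))).dualAnnihilator := by
    rw [Submodule.mem_dualAnnihilator]
    intro w hw
    refine h w w.2 fun c hc => ?_
    exact congrFun (LinearMap.mem_ker.1 hw) ⟨c, hc⟩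
  rw [← LinearMap.range_dualMap_eq_dualAnnihilator_ker] at h1
  obtain ⟨g, hg⟩ := h1
  refine ⟨fun x => if hx : x ∈ V then g (Pi.single ⟨x, hx⟩ 1) else 0, ?_, ?_⟩
  · intro x hx; simp [hx]
  · intro p hp
    have h2 := LinearMap.congr_fun hg ⟨p, hp⟩
    have h3 : g (res V p) = dotF β p := h2
    rw [← h3]
    have h4 : res V p = ∑ x : V, p x • (Pi.single x 1 : V → F3) := by
      funext y
      simp [res_apply, Finset.sum_apply, Pi.single_apply]
    rw [h4, map_sum, dotF, ← Finset.sum_subset (Finset.subset_univ V), ← Finset.sum_coe_sort]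
    · refine Finset.sum_congr rfl fun x _ => ?_
      simp [mul_comm]
    · intro x _ hx; simp [hx]

lemma top_rank (γ : Fn r) (D : ℕ) (h0 : ∀ p ∈ PP r D, dotF γ p = 0)
    (h1 : ∃ p ∈ PP r (D + 1), dotF γ p ≠ 0) (b b' t : ℕ) (hb : b + b' = D + 1) (ht : 2 * t ≤ D + 1)
    (htb : t ≤ b') (h2b : 2 ≤ b) : t.choose 2 ≤ rho γ b b' := by
  have : ∃ u : DegLex (Fin r →₀ ℕ), (ofDegLex u).degree ≤ D + 1 ∧ dotF γ (mon (ofDegLex u)) ≠ 0 := by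
    by_contra hh
    push Not at hh
    obtain ⟨p, hp, hne⟩ := h1
    apply hne
    have : PP r (D + 1) ≤ LinearMap.ker (dotL γ) := by
      rw [PP, Submodule.span_le]
      rintro _ ⟨u, hu, rfl⟩
      exact hh (toDegLex u) hu
    exact this hp
  obtain ⟨α, ⟨hα1, hα2⟩, hmin⟩ := WellFounded.has_min
    (wellFounded_lt : WellFounded ((· < ·) : DegLex (Fin r →₀ ℕ) → DegLex (Fin r →₀ ℕ) → Prop))
    {u | (ofDegLex u).degree ≤ D + 1 ∧ dotF γ (mon (ofDegLex u)) ≠ 0} this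
  have hmin' : ∀ u < α, dotF γ (mon (ofDegLex u)) = 0 := by
    intro u hu
    by_contra hh
    exact hmin u ⟨le_trans (Finsupp.DegLex.monotone_degree (le_of_lt hu)) hα1, hh⟩ hu
  have hdeg : (ofDegLex α).degree = D + 1 := by
    by_contra hh
    exact hα2 (h0 _ (mon_mem (by omega)))
  have hα3 : ∀ i, (ofDegLex α) i ≤ 2 := by
    intro i
    by_contra hh
    obtain ⟨α', h1, h2⟩ := reduce_lt (α := ofDegLex α) (i := i) (by omega)
    apply hα2
    rw [← h2]
    exact hmin' _ h1
  have hlow : low α ≤ LinearMap.ker (dotL γ) := by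
    rw [low, Submodule.span_le]
    rintro _ ⟨u, hu, rfl⟩
    exact hmin' u hu
  have hc := supp_card hα3
  obtain ⟨T, hT1, hT2⟩ := Finset.exists_subset_card_eq (s := (ofDegLex α).support) (n := t) (by omega)
  have hind : ind T ≤ ofDegLex α := by
    intro j
    rw [ind_apply]
    split_ifs with hj
    · have := hT1 hj
      rw [Finsupp.mem_support_iff] at this; omega
    · omega
  have hd1 : (ofDegLex α).degree = (ofDegLex α - ind T).degree + t := by
    conv_lhs => rw [← tsub_add_cancel_of_le hind]
    rw [map_add, ind_degree, hT2]
  obtain ⟨w, hw1, hw2⟩ := Finsupp.exists_le_degree_eq (ofDegLex α - ind T) (b - 2) (by omega)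
  have hUle : ∀ u ∈ pairU T w, ofDegLex u ≤ ofDegLex α := by
    intro u hu
    refine (mem_pairU hu).2.trans ?_
    rw [← tsub_add_cancel_of_le hind]
    exact add_le_add_left hw1 _
  have hUdeg : ∀ u ∈ pairU T w, (ofDegLex u).degree = b := by
    intro u hu
    rw [(mem_pairU hu).1, hw2]; omega
  have key := indep (KK γ b b') b (KK_le _ _ _) (pairU T w) (fun u hu => (hUdeg u hu).le) ?_
  · rw [pairU_card, hT2] at key
    have := rho_add γ b b'
    omega
  · intro u hu hmem
    have h2 := hUle u hu
    apply hα2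
    obtain ⟨s, hs, k, hk, hsk⟩ := Submodule.mem_sup.1 hmem
    have hsum : ofDegLex α = (ofDegLex α - ofDegLex u) + ofDegLex u := (tsub_add_cancel_of_le h2).symm
    have hd : (ofDegLex α).degree = (ofDegLex α - ofDegLex u).degree + (ofDegLex u).degree := by
      conv_lhs => rw [hsum]
      simp
    have hs2 := low_mul (ofDegLex α - ofDegLex u) hs
    have e1 : toDegLex (ofDegLex α - ofDegLex u) + u = α := by
      apply ofDegLex_injective
      rw [ofDegLex_add, ofDegLex_toDegLex, ← hsum]
    rw [e1] at hs2
    have hud := hUdeg u hu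
    rw [hsum, mon_add, ← hsk, mul_add, dotF_add, mul_comm _ k,
      hk.2 _ (mon_mem (by omega)), add_zero]
    exact hlow hs2

end St18

namespace St18

variable {r : ℕ}

lemma choose_big (K m : ℕ) (h : 2 * K + 1 ≤ m) : K * m ≤ m.choose 2 := by
  rw [Nat.choose_two_right, Nat.le_div_iff_mul_le (by norm_num)]
  have : 2 * K ≤ m - 1 := by omega
  calc K * m * 2 = m * (2 * K) := by ring
    _ ≤ m * (m - 1) := Nat.mul_le_mul_left _ this

lemma rho_sub (β β' : Fn r) (V : Finset (Pt r)) (h : ∀ x, x ∉ V → β' x = 0) (a b : ℕ) :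
    rho (β - β') a b ≤ rho β a b + V.card := by
  have h1 := rho_add β a b
  have h2 := rho_add (β - β') a b
  have h3 := LinearMap.finrank_range_add_finrank_ker ((res V).domRestrict (KK β a b))
  have h4 : Module.finrank F3 (LinearMap.range ((res V).domRestrict (KK β a b))) ≤ V.card := by
    refine (Submodule.finrank_le _).trans ?_
    rw [Module.finrank_fintype_fun_eq_card, Fintype.card_coe]
  have h5 : Module.finrank F3 (LinearMap.ker ((res V).domRestrict (KK β a b))) ≤
      Module.finrank F3 (KK (β - β') a b) := by
    rw [← Submodule.finrank_map_subtype_eq (KK β a b) (LinearMap.ker _)]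
    refine Submodule.finrank_mono ?_
    rintro _ ⟨⟨k, hk⟩, hk2, rfl⟩
    refine ⟨hk.1, fun q hq => ?_⟩
    rw [dotF_sub_left]
    have e1 : dotF β (k * q) = 0 := hk.2 q hq
    have e2 : dotF β' (k * q) = 0 := by
      refine Finset.sum_eq_zero fun x _ => ?_
      by_cases hx : x ∈ V
      · have : k x = 0 := congrFun (LinearMap.mem_ker.1 hk2) ⟨x, hx⟩
        simp [this]
      · simp [h x hx]
    simp only [Submodule.subtype_apply, e1, e2, sub_zero]
  omega

/-- the balanced rank profile -/
noncomputable def prof (β : Fn r) (s : ℕ) : ℕ := rho β ((s + 1) / 2) (s / 2)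

lemma prof_mono (β : Fn r) {s t : ℕ} (h : s ≤ t) : prof β s ≤ prof β t :=
  rho_mono β (by omega) (by omega)

lemma structure_thm (d : ℕ) (β : Fn r) (hR : rho β d d + 8000 < 2 * d) :
    ∃ β' : Fn r, (∀ p ∈ PP r (2 * d), dotF β' p = dotF β p) ∧ supp β' ≤ rho β d d := by
  have hRp : rho β d d = prof β (2 * d) := by
    rw [prof]; congr 1 <;> omega
  have hex : ∃ j, ∀ D, j ≤ D → D ≤ 2 * d → prof β D + 8000 < D := by
    refine ⟨2 * d, fun D h1 h2 => ?_⟩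
    have : D = 2 * d := le_antisymm h2 h1
    rw [this, ← hRp]; exact hR
  classical
  obtain ⟨j, hj, hjmin⟩ : ∃ j, (∀ D, j ≤ D → D ≤ 2 * d → prof β D + 8000 < D) ∧
      ∀ i, i < j → ¬ (∀ D, i ≤ D → D ≤ 2 * d → prof β D + 8000 < D) :=
    ⟨Nat.find hex, Nat.find_spec hex, fun i hi => Nat.find_min hex hi⟩
  have hj2 : j ≤ 2 * d := by
    by_contra hcon
    refine hjmin (2 * d) (by omega) fun D h1 h2 => ?_
    have : D = 2 * d := le_antisymm h2 h1
    rw [this, ← hRp]; exact hR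
  have hj0 := hj j le_rfl hj2
  obtain ⟨s, rfl⟩ : ∃ s, j = s + 1 := ⟨j - 1, by omega⟩
  have hs : s ≤ prof β s + 8000 := by
    by_contra hcon
    refine hjmin s (by omega) fun D h1 h2 => ?_
    rcases Nat.eq_or_lt_of_le h1 with h | h
    · subst h; omega
    · exact hj D h h2
  have hmono := prof_mono β (Nat.le_succ s)
  have hflat : prof β s = prof β (s + 1) := by simp only [Nat.succ_eq_add_one] at hmono; omega
  have hsR : prof β s ≤ rho β d d := by rw [hRp]; exact prof_mono β (by omega)
  set a := (s + 1) / 2 with ha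
  set b := s / 2 with hb
  have hab : rho β a b = rho β a (b + 1) := by
    have : prof β (s + 1) = rho β a (b + 1) := by
      rw [prof]
      rcases Nat.even_or_odd' s with ⟨k, hk | hk⟩
      · rw [rho_symm]; congr 1 <;> omega
      · congr 1 <;> omega
    rw [← this, ← hflat, prof]
  have hps : prof β s = rho β a b := rfl
  have hK := closed_of_flat β a b hab
  have hadd := rho_add β a b
  have hc1 := choose_big 40 (a / 4 / 2) (by omega)
  have hred := reduceAll hK (a / 4) (by omega)
  set n := a - a / 4 - 2 with hn
  have hVc := VV_card (n := n) (KK_le β a b) hred (by omega) (by omega)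
  obtain ⟨β', hsup, hβ'⟩ := exists_rep β (VV (KK β a b) n) n fun p hp hpV => by
    have := null hK hred (n := n) (by omega) (by omega) p hp hpV
    simpa using this.2 1 (one_mem b)
  have hsupp : supp β' ≤ (VV (KK β a b) n).card := by
    refine Finset.card_le_card fun x hx => ?_
    by_contra hxV
    exact (Finset.mem_filter.1 hx).2 (hsup x hxV)
  refine ⟨β', ?_, by omega⟩
  by_contra hcon
  have hex2 : ∃ D, ¬ (∀ p ∈ PP r D, dotF (β - β') p = 0) := by
    refine ⟨2 * d, fun hh => hcon fun p hp => ?_⟩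
    have := hh p hp
    rw [dotF_sub_left] at this
    exact (sub_eq_zero.1 this).symm
  obtain ⟨D, hD, hDmin⟩ : ∃ D, ¬ (∀ p ∈ PP r D, dotF (β - β') p = 0) ∧
      ∀ i, i < D → (∀ p ∈ PP r i, dotF (β - β') p = 0) :=
    ⟨Nat.find hex2, Nat.find_spec hex2, fun i hi => not_not.1 (Nat.find_min hex2 hi)⟩
  have hDn : n < D := by
    by_contra hcon
    apply hD
    intro p hp
    rw [dotF_sub_left, hβ' p (PP_mono (by omega) hp), sub_self]
  have hD2 : D ≤ 2 * d := by
    by_contra hlt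
    apply hcon
    intro p hp
    have := hDmin (2 * d) (by omega) p hp
    rw [dotF_sub_left] at this
    exact (sub_eq_zero.1 this).symm
  obtain ⟨D', rfl⟩ : ∃ D', D = D' + 1 := ⟨D - 1, by omega⟩
  push Not at hD
  have htop := top_rank (β - β') D' (hDmin D' (by omega)) hD ((D' + 1 + 1) / 2) ((D' + 1) / 2)
    ((D' + 1) / 4) (by omega) (by omega) (by omega) (by omega)
  have hdiff := rho_sub β β' _ hsup ((D' + 1 + 1) / 2) ((D' + 1) / 2)
  have hprofD : prof β (D' + 1) = rho β ((D' + 1 + 1) / 2) ((D' + 1) / 2) := rfl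
  have hc2 := choose_big 40 ((D' + 1) / 4) (by omega)
  have hpD : prof β (D' + 1) ≤ s + (D' + 1) := by
    rcases Nat.lt_or_ge s (D' + 1) with h | h
    · have := hj (D' + 1) h hD2; omega
    · have := prof_mono β h; omega
  omega

end St18

namespace St18

variable {r : ℕ}

noncomputable def psi : AddChar F3 ℂ := ZMod.stdAddChar

noncomputable def ch (β : Fn r) : AddChar (Fn r) ℂ :=
  psi.compAddMonoidHom (dotL β).toAddMonoidHom

lemma ch_apply (β f : Fn r) : ch β f = psi (dotF β f) := rfl

lemma ch_norm (β f : Fn r) : ‖ch β f‖ = 1 := AddChar.norm_apply _ _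

lemma psi_eq_one {y : F3} (h : ∀ c : F3, psi (c * y) = 1) : y = 0 := by
  by_contra hy
  have h1 := ZMod.isPrimitive_stdAddChar 3 (a := y) hy
  apply h1
  ext c
  rw [AddChar.mulShift_apply, mul_comm]
  exact h c

lemma shift_eq (p : Fn r) (a : F3) : shift p a = a • (p * p + 1) := by
  funext x; simp [shift, sq]

lemma gsum (d : ℕ) (β : Fn r) (a : F3) (ha : a ≠ 0) :
    ‖∑ p : PP r d, ch β (shift (p : Fn r) a)‖ ^ 2 ≤
      (Fintype.card (PP r d) : ℝ) * (Fintype.card (KK β d d) : ℝ) := by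
  have h2a : (2 * a : F3) ≠ 0 := by revert a; decide
  -- the inner sums
  let inn : PP r d → AddChar (PP r d) ℂ := fun h =>
    (ch β).compAddMonoidHom
      (((2 * a) • (LinearMap.mulLeft F3 (h : Fn r))).comp (PP r d).subtype).toAddMonoidHom
  have hinn : ∀ h q : PP r d, inn h q = ch β ((2 * a) • ((h : Fn r) * (q : Fn r))) := fun h q => rfl
  have hzero : ∀ h : PP r d, inn h = 0 → (h : Fn r) ∈ KK β d d := by
    intro h hh
    refine ⟨h.2, fun q hq => ?_⟩
    apply psi_eq_one
    intro c
    have h1 := DFunLike.congr_fun hh ((((2 * a)⁻¹ * c) • (⟨q, hq⟩ : PP r d)))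
    rw [hinn, ch_apply] at h1
    rw [← dotF_smul]
    rw [AddChar.zero_apply] at h1
    convert h1 using 3
    simp only [Submodule.coe_smul, mul_smul_comm, smul_smul]
    rw [← mul_assoc, mul_inv_cancel₀ h2a, one_mul]
  have hexp : (‖∑ p : PP r d, ch β (shift (p : Fn r) a)‖ ^ 2 : ℝ) =
      ‖∑ h : PP r d, ch β (a • ((h : Fn r) * h)) * ∑ q : PP r d, inn h q‖ := by
    have hsq : ∀ z : ℂ, ‖z‖ ^ 2 = ‖(starRingEnd ℂ) z * z‖ := fun z => by
      rw [norm_mul, RCLike.norm_conj, sq]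
    rw [hsq]
    congr 1
    rw [map_sum, Finset.sum_mul_sum]
    simp_rw [Finset.mul_sum]
    rw [Finset.sum_comm (s := (Finset.univ : Finset (PP r d))) (f := fun h q => ch β (a • ((h : Fn r) * h)) * inn h q)]
    refine Finset.sum_congr rfl fun q _ => ?_
    rw [← Equiv.sum_comp (Equiv.addLeft q)]
    refine Finset.sum_congr rfl fun h _ => ?_
    rw [hinn, ← AddChar.map_add_eq_mul, ← AddChar.map_neg_eq_conj, ← AddChar.map_add_eq_mul]
    congr 1
    simp only [Equiv.coe_addLeft, Submodule.coe_add, shift_eq]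
    funext x
    simp only [Pi.add_apply, Pi.neg_apply, Pi.smul_apply, Pi.mul_apply, Pi.one_apply, smul_eq_mul]
    ring
  rw [hexp]
  refine (norm_sum_le _ _).trans ?_
  have hb : ∀ h : PP r d, ‖ch β (a • ((h : Fn r) * h)) * ∑ q : PP r d, inn h q‖ ≤
      if (h : Fn r) ∈ KK β d d then (Fintype.card (PP r d) : ℝ) else 0 := by
    intro h
    rw [norm_mul, ch_norm, one_mul, AddChar.sum_eq_ite]
    by_cases h0 : inn h = 0
    · rw [if_pos h0, if_pos (hzero h h0)]; simp
    · rw [if_neg h0]; simp; split_ifs <;> positivity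
  refine (Finset.sum_le_sum fun h _ => hb h).trans ?_
  rw [← Finset.sum_filter, Finset.sum_const, nsmul_eq_mul, mul_comm]
  refine mul_le_mul_of_nonneg_left ?_ (by positivity)
  norm_cast
  rw [← Fintype.card_coe]
  refine Fintype.card_le_of_injective (fun h => ⟨h.1, (Finset.mem_filter.1 h.2).2⟩) ?_
  intro x y hxy
  have := congrArg Subtype.val hxy
  exact Subtype.ext (Subtype.ext this)

noncomputable def lamT (r d : ℕ) (β : Fn r) : ℂ :=
  (∑ p ∈ polyFinset r d, ∑ a ∈ ({1, 2} : Finset F3), ch β (shift p a)) /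
    (((polyFinset r d).card : ℂ) * 2)

lemma sum_poly {M : Type*} [AddCommMonoid M] (d : ℕ) (g : Fn r → M) :
    ∑ p ∈ polyFinset r d, g p = ∑ p : PP r d, g p := by
  rw [← Finset.sum_subtype (polyFinset r d) (p := fun x => x ∈ PP r d) (fun x => mem_polyFinset)]

lemma card_poly (d : ℕ) : (polyFinset r d).card = Fintype.card (PP r d) := by
  have := sum_poly (r := r) d (fun _ => (1 : ℕ))
  simpa using this

lemma card_KK (β : Fn r) (d : ℕ) :
    Fintype.card (PP r d) = 3 ^ rho β d d * Fintype.card (KK β d d) := by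
  rw [Module.card_eq_pow_finrank (K := F3), Module.card_eq_pow_finrank (K := F3) (V := KK β d d),
    ZMod.card, ← pow_add, rho_add β d d]

lemma lamT_bound (d : ℕ) (β : Fn r) : ‖lamT r d β‖ ^ 2 * 3 ^ rho β d d ≤ 1 := by
  have h1 := gsum d β 1 (by decide)
  have h2 := gsum d β 2 (by decide)
  set s1 := ∑ p : PP r d, ch β (shift (p : Fn r) 1)
  set s2 := ∑ p : PP r d, ch β (shift (p : Fn r) 2)
  have hl : lamT r d β = (s1 + s2) / ((Fintype.card (PP r d) : ℂ) * 2) := by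
    rw [lamT, Finset.sum_comm, Finset.sum_pair (by decide), sum_poly, sum_poly, card_poly]
  have hc : (Fintype.card (PP r d) : ℝ) = 3 ^ rho β d d * Fintype.card (KK β d d) := by
    exact_mod_cast card_KK β d
  set N : ℝ := (Fintype.card (PP r d) : ℝ) with hN
  set k : ℝ := (Fintype.card (KK β d d) : ℝ)
  have hN0 : 0 < N := by rw [hN]; exact_mod_cast Fintype.card_pos
  have h3 : ‖s1 + s2‖ ^ 2 ≤ 4 * (N * k) := by
    have := norm_add_le s1 s2
    nlinarith [norm_nonneg s1, norm_nonneg s2, norm_nonneg (s1 + s2), sq_nonneg (‖s1‖ - ‖s2‖)]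
  have h4 : ‖lamT r d β‖ = ‖s1 + s2‖ / (N * 2) := by
    rw [hl, norm_div, norm_mul, Complex.norm_natCast]; simp [hN]
  rw [h4, div_pow, div_mul_eq_mul_div, div_le_one (by positivity)]
  calc ‖s1 + s2‖ ^ 2 * 3 ^ rho β d d ≤ 4 * (N * k) * 3 ^ rho β d d := by gcongr
    _ = (N * 2) ^ 2 := by rw [show 4 * (N * k) * 3 ^ rho β d d = 4 * N * (3 ^ rho β d d * k) by ring, ← hc]; ring

end St18

namespace St18

variable {r : ℕ}

lemma ell_mem (v : Pt r) (c : F3) : (fun x => (∑ j, v j * x j) + c : Fn r) ∈ PP r 1 := by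
  have : (fun x => (∑ j, v j * x j) + c : Fn r) = (∑ j, v j • coordFn j) + fun _ => c := by
    funext x; simp [Finset.sum_apply, coordFn]
  rw [this]
  exact Submodule.add_mem _ (Submodule.sum_mem _ fun j _ => Submodule.smul_mem _ _ (coord_mem j))
    (const_mem c 1)

lemma ellProd_mem {d : ℕ} (v : Fin d → Pt r) (c : Fin d → F3) : ellProd v c ∈ PP r (2 * d) := by
  have key : ∀ I : Finset (Fin d), (∏ i ∈ I, (fun x => ((∑ j, v i j * x j) + c i - 1) *
      ((∑ j, v i j * x j) + c i - 2) : Fn r)) ∈ PP r (2 * I.card) := by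
    intro I
    induction I using Finset.induction_on with
    | empty => simpa using one_mem 0
    | insert i I hi ih =>
      rw [Finset.prod_insert hi, Finset.card_insert_of_notMem hi]
      rw [show 2 * (I.card + 1) = (1 + 1) + 2 * I.card by ring]
      refine mul_mem ?_ ih
      have e : ∀ k : F3, (fun x => (∑ j, v i j * x j) + c i - k : Fn r) ∈ PP r 1 := by
        intro k
        have := ell_mem (v i) (c i - k)
        simpa [add_sub_assoc] using this
      exact mul_mem (e 1) (e 2)
  have h := key Finset.univ
  rw [Finset.card_univ, Fintype.card_fin] at h
  convert h using 1
  funext x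
  simp [ellProd, Finset.prod_apply]

lemma LI_pos {d : ℕ} (h : d ≤ r) : 0 < (LIset r d).card := by
  rw [Finset.card_pos]
  refine ⟨fun i => Pi.single (Fin.castLE h i) 1, ?_⟩
  rw [LIset, Finset.mem_filter]
  refine ⟨Finset.mem_univ _, ?_⟩
  have h1 := (Pi.basisFun F3 (Fin r)).linearIndependent.comp (Fin.castLE h) (Fin.castLE_injective h)
  convert h1 using 1
  funext i
  simp

noncomputable def lamS (r d : ℕ) (β : Fn r) : ℂ :=
  (∑ v ∈ LIset r d, ∑ c : Fin d → F3, ∑ a : F3, ch β (fun x => a * ellProd v c x)) /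
    (((LIset r d).card : ℂ) * 3 ^ d * 3)

noncomputable def lam (r d : ℕ) (β : Fn r) : ℝ :=
  (∑ v ∈ LIset r d, ∑ c : Fin d → F3, if dotF β (ellProd v c) = 0 then (1 : ℝ) else 0) /
    (((LIset r d).card : ℝ) * 3 ^ d)

lemma sum_psi (y : F3) : ∑ a : F3, psi (a * y) = if y = 0 then (3 : ℂ) else 0 := by
  by_cases hy : y = 0
  · subst hy; simp
  · rw [if_neg hy]
    have := AddChar.sum_mulShift (R := F3) (R' := ℂ) (ψ := psi) y (ZMod.isPrimitive_stdAddChar 3)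
    rw [this, if_neg hy]; simp

lemma lamS_eq (d : ℕ) (β : Fn r) : lamS r d β = (lam r d β : ℂ) := by
  rw [lamS, lam]
  push_cast
  simp only [apply_ite Complex.ofReal, Complex.ofReal_one, Complex.ofReal_zero]
  have : ∀ v c, ∑ a : F3, ch β (fun x => a * ellProd (r := r) (d := d) v c x) =
      (if dotF β (ellProd v c) = 0 then (1 : ℂ) else 0) * 3 := by
    intro v c
    rw [ite_mul, one_mul, zero_mul, ← sum_psi]
    refine Finset.sum_congr rfl fun a _ => ?_
    rw [← dotF_smul]; rfl
  simp_rw [this, ← Finset.sum_mul]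
  rw [mul_div_mul_right _ _ (by norm_num)]

lemma lam_nonneg (d : ℕ) (β : Fn r) : 0 ≤ lam r d β := by
  rw [lam]
  refine div_nonneg (Finset.sum_nonneg fun v _ => Finset.sum_nonneg fun c _ => ?_) (by positivity)
  split_ifs <;> norm_num

lemma lam_compl {d : ℕ} (h : d ≤ r) (β : Fn r) : 1 - lam r d β =
    (∑ v ∈ LIset r d, ∑ c : Fin d → F3, if dotF β (ellProd v c) = 0 then (0 : ℝ) else 1) /
    (((LIset r d).card : ℝ) * 3 ^ d) := by
  have hpos : (0 : ℝ) < ((LIset r d).card : ℝ) := by exact_mod_cast LI_pos h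
  have h3 : (0 : ℝ) < ((LIset r d).card : ℝ) * 3 ^ d := by positivity
  rw [lam, eq_div_iff h3.ne', sub_mul, div_mul_cancel₀ _ h3.ne', sub_eq_iff_eq_add,
    ← Finset.sum_add_distrib]
  simp_rw [← Finset.sum_add_distrib]
  have : ∀ v c, ((if dotF β (ellProd (r := r) (d := d) v c) = 0 then (0 : ℝ) else 1) +
    if dotF β (ellProd v c) = 0 then (1 : ℝ) else 0) = 1 := by intro v c; split_ifs <;> simp
  simp_rw [this]
  simp

lemma lam_le_one {d : ℕ} (h : d ≤ r) (β : Fn r) : lam r d β ≤ 1 := by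
  have : 0 ≤ 1 - lam r d β := by
    rw [lam_compl h]
    refine div_nonneg (Finset.sum_nonneg fun v _ => Finset.sum_nonneg fun c _ => ?_) (by positivity)
    split_ifs <;> norm_num
  linarith

lemma lam_congr {d : ℕ} {β β' : Fn r} (h : ∀ p ∈ PP r (2 * d), dotF β' p = dotF β p) :
    lam r d β' = lam r d β := by
  rw [lam, lam]
  simp_rw [h _ (ellProd_mem _ _)]

lemma f3_aux (y : F3) : (y - 1) * (y - 2) ≠ 0 → y = 0 := by revert y; decide

lemma ell_count {d : ℕ} (v : Fin d → Pt r) (x : Pt r) :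
    (Finset.univ.filter fun c : Fin d → F3 => ellProd v c x ≠ 0).card ≤ 1 := by
  rw [Finset.card_le_one]
  have : ∀ c : Fin d → F3, ellProd v c x ≠ 0 → c = fun i => - ∑ j, v i j * x j := by
    intro c hc
    funext i
    have := f3_aux _ (Finset.prod_ne_zero_iff.1 hc i (Finset.mem_univ i))
    exact eq_neg_of_add_eq_zero_right this
  intro a ha b hb
  rw [this a (Finset.mem_filter.1 ha).2, this b (Finset.mem_filter.1 hb).2]

lemma lam_supp {d : ℕ} (h : d ≤ r) (β : Fn r) : 1 - lam r d β ≤ (supp β : ℝ) / 3 ^ d := by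
  have hpos : (0 : ℝ) < ((LIset r d).card : ℝ) := by exact_mod_cast LI_pos h
  have key : ∀ v : Fin d → Pt r,
      (∑ c : Fin d → F3, if dotF β (ellProd v c) = 0 then (0 : ℝ) else 1) ≤ supp β := by
    intro v
    have h1 : ∀ c : Fin d → F3, (if dotF β (ellProd v c) = 0 then (0 : ℝ) else 1) ≤
        ∑ x ∈ Finset.univ.filter (fun x => β x ≠ 0), if ellProd v c x ≠ 0 then (1 : ℝ) else 0 := by
      intro c
      split_ifs with h0
      · exact Finset.sum_nonneg fun x _ => by split_ifs <;> norm_num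
      · obtain ⟨x, _, hx⟩ := Finset.exists_ne_zero_of_sum_ne_zero h0
        have hx1 := left_ne_zero_of_mul hx
        have hx2 := right_ne_zero_of_mul hx
        have := Finset.single_le_sum (f := fun x => if ellProd v c x ≠ 0 then (1 : ℝ) else 0)
          (s := Finset.univ.filter (fun x => β x ≠ 0))
          (fun x _ => by split_ifs <;> norm_num)
          (Finset.mem_filter.2 ⟨Finset.mem_univ x, hx1⟩)
        simpa [hx2] using this
    refine (Finset.sum_le_sum fun c _ => h1 c).trans ?_
    rw [Finset.sum_comm]
    have h2 : ∀ x : Pt r, (∑ c : Fin d → F3, if ellProd v c x ≠ 0 then (1 : ℝ) else 0) ≤ 1 := by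
      intro x
      rw [Finset.sum_boole]
      exact_mod_cast ell_count v x
    refine (Finset.sum_le_sum fun x _ => h2 x).trans ?_
    rw [supp]
    simp
  rw [lam_compl h, div_le_div_iff₀ (by positivity) (by positivity)]
  have h3 := Finset.sum_le_sum (s := LIset r d) fun v _ => key v
  rw [Finset.sum_const, nsmul_eq_mul] at h3
  have h4 := mul_le_mul_of_nonneg_right h3 (by positivity : (0 : ℝ) ≤ 3 ^ d)
  linarith

lemma pow_bound (x : ℝ) (h0 : 0 ≤ x) (h1 : x ≤ 1) (n : ℕ) : 1 - x ^ n ≤ n * (1 - x) := by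
  have := one_add_mul_le_pow (a := x - 1) (by linarith) n
  have e : 1 + (x - 1) = x := by ring
  rw [e] at this
  linarith

lemma sq_le_three_pow (n : ℕ) : n ^ 2 ≤ 3 ^ n := by
  induction n with
  | zero => norm_num
  | succ n ih =>
    rcases n with _ | _ | n
    · norm_num
    · norm_num
    · have e : 3 ^ (n + 1 + 1 + 1) = 3 ^ (n + 1 + 1) * 3 := pow_succ _ _
      rw [e]
      refine le_trans ?_ (Nat.mul_le_mul_right 3 ih)
      ring_nf
      nlinarith

/-- per-character bound -/
lemma per_char {d : ℕ} (h : d ≤ r) (hd : 3 ^ 4000 ≤ d) (t : ℕ) (ht : 1 ≤ t) (β : Fn r) :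
    ‖lamT r d β‖ * (1 - lam r d β ^ (2 * t)) ≤ 2 * (d : ℝ) * t / 3 ^ d := by
  have hT := lamT_bound d β
  have hl0 := lam_nonneg d β
  have hl1 := lam_le_one h β
  have hp0 : lam r d β ^ (2 * t) ≤ 1 := pow_le_one₀ hl0 hl1
  have hp1 : 0 ≤ lam r d β ^ (2 * t) := pow_nonneg hl0 _
  have ht' : (1 : ℝ) ≤ t := by exact_mod_cast ht
  have hd' : (3 : ℝ) ^ 4000 ≤ d := by exact_mod_cast hd
  have h3d : (0 : ℝ) < 3 ^ d := by positivity
  have hdpos : (0 : ℝ) < d := lt_of_lt_of_le (by positivity) hd'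
  have hn := norm_nonneg (lamT r d β)
  set R := rho β d d with hR
  rcases Nat.lt_or_ge (R + 8000) (2 * d) with hlt | hge
  · obtain ⟨β', hβ', hs⟩ := structure_thm d β hlt
    have h1 := lam_supp h β'
    rw [lam_congr hβ'] at h1
    have h2 := pow_bound _ hl0 hl1 (2 * t)
    have hs' : (supp β' : ℝ) ≤ R := by exact_mod_cast hs
    have h3 : 1 - lam r d β ≤ R / 3 ^ d := h1.trans (by gcongr)
    have hRR : (R : ℝ) ^ 2 ≤ 3 ^ R := by
      exact_mod_cast sq_le_three_pow R
    have h4 : ‖lamT r d β‖ * R ≤ 1 := by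
      have : (‖lamT r d β‖ * R) ^ 2 ≤ 1 ^ 2 := by
        rw [mul_pow, one_pow]
        exact (mul_le_mul_of_nonneg_left hRR (by positivity)).trans hT
      exact le_of_sq_le_sq this (by norm_num)
    have hd1 : (1 : ℝ) ≤ d := le_trans (one_le_pow₀ (by norm_num)) hd'
    calc ‖lamT r d β‖ * (1 - lam r d β ^ (2 * t))
        ≤ ‖lamT r d β‖ * (((2 * t : ℕ) : ℝ) * (R / 3 ^ d)) := by
          refine mul_le_mul_of_nonneg_left (h2.trans ?_) hn
          exact mul_le_mul_of_nonneg_left h3 (by positivity)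
      _ = (2 * t / 3 ^ d) * (‖lamT r d β‖ * R) := by push_cast; ring
      _ ≤ (2 * t / 3 ^ d) * d := by
          refine mul_le_mul_of_nonneg_left (h4.trans hd1) (by positivity)
      _ = 2 * (d : ℝ) * t / 3 ^ d := by ring
  · have h5 : ‖lamT r d β‖ * 3 ^ d ≤ d := by
      have : (‖lamT r d β‖ * 3 ^ d) ^ 2 ≤ (d : ℝ) ^ 2 := by
        calc (‖lamT r d β‖ * 3 ^ d) ^ 2 = ‖lamT r d β‖ ^ 2 * 3 ^ (2 * d) := by
              rw [mul_pow, ← pow_mul, mul_comm d 2]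
          _ ≤ ‖lamT r d β‖ ^ 2 * 3 ^ (R + 8000) := by
              refine mul_le_mul_of_nonneg_left (pow_le_pow_right₀ (by norm_num) hge) (by positivity)
          _ = (‖lamT r d β‖ ^ 2 * 3 ^ R) * ((3 : ℝ) ^ 4000) ^ 2 := by
              rw [pow_add, ← pow_mul]; ring
          _ ≤ 1 * (d : ℝ) ^ 2 := by
              refine mul_le_mul hT (pow_le_pow_left₀ (by positivity) hd' 2) (by positivity) (by norm_num)
          _ = _ := one_mul _
      exact le_of_sq_le_sq this hdpos.le
    rw [le_div_iff₀ h3d]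
    calc ‖lamT r d β‖ * (1 - lam r d β ^ (2 * t)) * 3 ^ d ≤ ‖lamT r d β‖ * 1 * 3 ^ d := by
          gcongr; linarith only [hp1]
      _ ≤ d := by rw [mul_one]; exact h5
      _ ≤ 2 * d * t := by nlinarith only [hdpos, ht']

end St18

namespace St18

variable {r : ℕ}

noncomputable def hat (m : ℕ) (F : Fn r → ℝ) (β : Fn r) : ℂ :=
  ∑ f : PP r m, (F f : ℂ) * (starRingEnd ℂ) (ch β (f : Fn r))

lemma hat_shift (m : ℕ) (F : Fn r → ℝ) (β s : Fn r) (hs : s ∈ PP r m) :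
    ∑ f : PP r m, (F ((f : Fn r) + s) : ℂ) * (starRingEnd ℂ) (ch β (f : Fn r)) =
      ch β s * hat m F β := by
  have e := Equiv.sum_comp (Equiv.addRight (⟨s, hs⟩ : PP r m))
    (fun f : PP r m => (F f : ℂ) * (starRingEnd ℂ) (ch β (f : Fn r)))
  rw [hat, ← e, Finset.mul_sum]
  refine Finset.sum_congr rfl fun f _ => ?_
  simp only [Equiv.coe_addRight, Submodule.coe_add]
  rw [AddChar.map_add_eq_mul, map_mul, ← AddChar.map_neg_eq_conj, ← AddChar.map_neg_eq_conj]
  have : ch β s * ch β (-s) = 1 := by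
    rw [← AddChar.map_add_eq_mul, add_neg_cancel, AddChar.map_zero_eq_one]
  linear_combination (-(F ((f : Fn r) + s) : ℂ) * ch β (-(f : Fn r))) * this

lemma shift_mem {d : ℕ} {p : Fn r} (hp : p ∈ PP r d) (a : F3) : shift p a ∈ PP r (2 * d) := by
  rw [shift_eq, two_mul]
  exact Submodule.smul_mem _ _ (Submodule.add_mem _ (mul_mem hp hp) (one_mem _))

lemma hat_T (d : ℕ) (F : Fn r → ℝ) (β : Fn r) :
    hat (2 * d) (Trd r d F) β = lamT r d β * hat (2 * d) F β := by
  rw [lamT, hat]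
  simp only [Trd]
  push_cast
  rw [div_mul_eq_mul_div, Finset.sum_mul]
  simp_rw [Finset.sum_mul]
  have : ∀ p ∈ polyFinset r d, ∑ a ∈ ({1, 2} : Finset F3), ch β (shift p a) * hat (2 * d) F β =
      ∑ a ∈ ({1, 2} : Finset F3), ∑ f : PP r (2 * d), (F ((f : Fn r) + shift p a) : ℂ) *
        (starRingEnd ℂ) (ch β (f : Fn r)) := by
    intro p hp
    refine Finset.sum_congr rfl fun a _ => ?_
    rw [hat_shift _ _ _ _ (shift_mem (mem_polyFinset.1 hp) a)]
  rw [Finset.sum_congr rfl this]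
  simp_rw [Finset.sum_comm (t := (Finset.univ : Finset (PP r (2 * d))))]
  rw [Finset.sum_div]
  refine Finset.sum_congr rfl fun f _ => ?_
  rw [div_mul_eq_mul_div, Finset.sum_mul]
  simp_rw [Finset.sum_mul]

lemma hat_S (d : ℕ) (F : Fn r → ℝ) (β : Fn r) :
    hat (2 * d) (Sop r d F) β = (lam r d β : ℂ) * hat (2 * d) F β := by
  rw [← lamS_eq, lamS, hat]
  simp only [Sop]
  push_cast
  rw [div_mul_eq_mul_div, Finset.sum_mul]
  simp_rw [Finset.sum_mul]
  have : ∀ (v : Fin d → Pt r) (c : Fin d → F3) (a : F3),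
      ch β (fun x => a * ellProd v c x) * hat (2 * d) F β =
      ∑ f : PP r (2 * d), (F ((f : Fn r) + fun x => a * ellProd v c x) : ℂ) *
        (starRingEnd ℂ) (ch β (f : Fn r)) := by
    intro v c a
    rw [hat_shift]
    exact Submodule.smul_mem _ a (ellProd_mem v c)
  simp_rw [this]
  simp_rw [Finset.sum_comm (t := (Finset.univ : Finset (PP r (2 * d))))]
  rw [Finset.sum_div]
  refine Finset.sum_congr rfl fun f _ => ?_
  rw [div_mul_eq_mul_div, Finset.sum_mul]
  simp_rw [Finset.sum_mul]

lemma hat_iter (d t : ℕ) (F : Fn r → ℝ) (β : Fn r) :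
    hat (2 * d) ((Sop r d)^[t] F) β = (lam r d β : ℂ) ^ t * hat (2 * d) F β := by
  induction t with
  | zero => simp
  | succ t ih => rw [Function.iterate_succ_apply', hat_S, ih, pow_succ]; ring

lemma ch_comm (β f : Fn r) : ch β f = ch f β := by
  rw [ch_apply, ch_apply, dotF, dotF]
  simp_rw [mul_comm]

lemma ch_eq_zero {f : Fn r} : ch f = 0 ↔ f = 0 := by
  constructor
  · intro h
    funext x
    apply psi_eq_one
    intro c
    have h1 := DFunLike.congr_fun h (Pi.single x c)
    rw [ch_apply, AddChar.zero_apply] at h1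
    rw [← h1]
    congr 1
    simp [dotF, Pi.single_apply, mul_comm]
  · rintro rfl
    ext β
    rw [ch_comm, ch_apply, dotF_zero, AddChar.map_zero_eq_one, AddChar.zero_apply]

lemma sum_ch (f : Fn r) : ∑ β : Fn r, ch β f = if f = 0 then (Fintype.card (Fn r) : ℂ) else 0 := by
  simp_rw [ch_comm _ f]
  rw [AddChar.sum_eq_ite]
  simp only [ch_eq_zero]

lemma parseval (m : ℕ) (F G : Fn r → ℝ) :
    ∑ β : Fn r, (starRingEnd ℂ) (hat m F β) * hat m G β =
      (Fintype.card (Fn r) : ℂ) * ((∑ f : PP r m, F f * G f : ℝ) : ℂ) := by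
  have h1 : ∀ β : Fn r, (starRingEnd ℂ) (hat m F β) * hat m G β =
      ∑ f : PP r m, ∑ g : PP r m, (F f : ℂ) * (G g : ℂ) * ch β ((f : Fn r) - g) := by
    intro β
    rw [hat, hat, map_sum, Finset.sum_mul_sum]
    refine Finset.sum_congr rfl fun f _ => Finset.sum_congr rfl fun g _ => ?_
    rw [sub_eq_add_neg, AddChar.map_add_eq_mul, map_mul, Complex.conj_conj, Complex.conj_ofReal,
      AddChar.map_neg_eq_conj]
    ring
  simp_rw [h1]
  rw [Finset.sum_comm]
  push_cast
  rw [Finset.mul_sum]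
  refine Finset.sum_congr rfl fun f _ => ?_
  rw [Finset.sum_comm]
  simp_rw [← Finset.mul_sum, sum_ch]
  rw [Finset.sum_eq_single f]
  · simp; ring
  · intro g _ hg
    have : (f : Fn r) - g ≠ 0 := fun h => hg (Subtype.ext (sub_eq_zero.1 h)).symm
    rw [if_neg this, mul_zero]
  · simp

lemma hat_sq (m : ℕ) (F : Fn r → ℝ) (hF : ∀ f ∈ polyFinset r m, 0 ≤ F f ∧ F f ≤ 1) :
    ∑ β : Fn r, ‖hat m F β‖ ^ 2 ≤ (Fintype.card (Fn r) : ℝ) * (Fintype.card (PP r m) : ℝ) := by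
  have h1 := parseval m F F
  have h2 : ∑ β : Fn r, (starRingEnd ℂ) (hat m F β) * hat m F β =
      ((∑ β : Fn r, ‖hat m F β‖ ^ 2 : ℝ) : ℂ) := by
    push_cast
    refine Finset.sum_congr rfl fun β _ => ?_
    rw [Complex.conj_mul']
  rw [h2] at h1
  have h3 : ∑ β : Fn r, ‖hat m F β‖ ^ 2 = (Fintype.card (Fn r) : ℝ) * ∑ f : PP r m, F f * F f := by
    exact_mod_cast h1
  rw [h3]
  refine mul_le_mul_of_nonneg_left ?_ (by positivity)
  have : ∀ f : PP r m, F f * F f ≤ 1 := by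
    intro f
    obtain ⟨h0, h1⟩ := hF f (mem_polyFinset.2 f.2)
    nlinarith
  refine (Finset.sum_le_sum fun f _ => this f).trans ?_
  simp

lemma main {d : ℕ} (h : d ≤ r) (hd : 3 ^ 4000 ≤ d) (t : ℕ) (ht : 1 ≤ t) (A B : Fn r → ℝ)
    (hA : ∀ f ∈ polyFinset r (2 * d), 0 ≤ A f ∧ A f ≤ 1)
    (hB : ∀ f ∈ polyFinset r (2 * d), 0 ≤ B f ∧ B f ≤ 1) :
    |innerP r d A (Trd r d B) -
            innerP r d ((Sop r d)^[t] A) (Trd r d ((Sop r d)^[t] B))|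
          ≤ 2 * (d : ℝ) * (t : ℝ) / 3 ^ d := by
  set M : ℝ := 2 * (d : ℝ) * (t : ℝ) / 3 ^ d with hM
  have hM0 : 0 ≤ M := by positivity
  set N : ℝ := (Fintype.card (Fn r) : ℝ) with hN
  have hN0 : 0 < N := by rw [hN]; exact_mod_cast Fintype.card_pos
  set Q : ℝ := (Fintype.card (PP r (2 * d)) : ℝ) with hQ
  have hQ0 : 0 < Q := by rw [hQ]; exact_mod_cast Fintype.card_pos
  rw [innerP, innerP, sum_poly, sum_poly, card_poly, ← hQ, ← sub_div, abs_div, abs_of_pos hQ0,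
    div_le_iff₀ hQ0]
  set X : ℝ := ∑ f : PP r (2 * d), A f * Trd r d B f with hX
  set Y : ℝ := ∑ f : PP r (2 * d), (Sop r d)^[t] A f * Trd r d ((Sop r d)^[t] B) f with hY
  have e1 := parseval (2 * d) A (Trd r d B)
  have e2 := parseval (2 * d) ((Sop r d)^[t] A) (Trd r d ((Sop r d)^[t] B))
  rw [← hX] at e1
  rw [← hY] at e2
  have e3 : (((N * (X - Y) : ℝ)) : ℂ) = ∑ β : Fn r, ((starRingEnd ℂ) (hat (2 * d) A β) *
      hat (2 * d) B β) * (lamT r d β * ((1 - lam r d β ^ (2 * t) : ℝ) : ℂ)) := by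
    have : (((N * (X - Y) : ℝ)) : ℂ) = (Fintype.card (Fn r) : ℂ) * (X : ℂ) -
        (Fintype.card (Fn r) : ℂ) * (Y : ℂ) := by rw [hN]; push_cast; ring
    rw [this, ← e1, ← e2, ← Finset.sum_sub_distrib]
    refine Finset.sum_congr rfl fun β _ => ?_
    rw [hat_T, hat_T, hat_iter, hat_iter, map_mul, map_pow, Complex.conj_ofReal]
    push_cast
    ring
  have e4 : N * |X - Y| ≤ ∑ β : Fn r, (‖hat (2 * d) A β‖ * ‖hat (2 * d) B β‖) * M := by
    have : N * |X - Y| = ‖(((N * (X - Y) : ℝ)) : ℂ)‖ := by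
      rw [Complex.norm_real, Real.norm_eq_abs, abs_mul, abs_of_pos hN0]
    rw [this, e3]
    refine (norm_sum_le _ _).trans (Finset.sum_le_sum fun β _ => ?_)
    rw [norm_mul, norm_mul, norm_mul, RCLike.norm_conj, Complex.norm_real, Real.norm_eq_abs]
    have hp0 : lam r d β ^ (2 * t) ≤ 1 := pow_le_one₀ (lam_nonneg d β) (lam_le_one h β)
    rw [abs_of_nonneg (sub_nonneg.2 hp0)]
    exact mul_le_mul_of_nonneg_left (per_char h hd t ht β) (by positivity)
  have e5 : ∑ β : Fn r, (‖hat (2 * d) A β‖ * ‖hat (2 * d) B β‖) * M ≤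
      ∑ β : Fn r, ((‖hat (2 * d) A β‖ ^ 2 + ‖hat (2 * d) B β‖ ^ 2) / 2) * M := by
    refine Finset.sum_le_sum fun β _ => mul_le_mul_of_nonneg_right ?_ hM0
    have := two_mul_le_add_sq ‖hat (2 * d) A β‖ ‖hat (2 * d) B β‖
    rw [le_div_iff₀ (by norm_num)]
    linarith only [this]
  have e6 : ∑ β : Fn r, ((‖hat (2 * d) A β‖ ^ 2 + ‖hat (2 * d) B β‖ ^ 2) / 2) * M ≤ N * Q * M := by
    rw [← Finset.sum_mul, ← Finset.sum_div, Finset.sum_add_distrib]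
    refine mul_le_mul_of_nonneg_right ?_ hM0
    have h1 := hat_sq (2 * d) A hA
    have h2 := hat_sq (2 * d) B hB
    linarith only [h1, h2]
  have e7 : N * |X - Y| ≤ N * (M * Q) := by
    refine e4.trans (e5.trans (e6.trans (le_of_eq ?_)))
    ring
  exact le_of_mul_le_mul_left e7 hN0

end St18

/-- Noising lemma (Lemma 4.7): there is `d₀` such that for `d₀ ≤ d ≤ r`, `t ≥ 1`, and
`A, B : P_{r,2d} → [0,1]`, with `A' := S_{r,d}^t A`, `B' := S_{r,d}^t B`,
`|⟨A, T_{r,d}B⟩ − ⟨A', T_{r,d}B'⟩| ≤ 2dt/3^d`. -/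
theorem stmt18 :
    ∃ d₀ : ℕ, ∀ r d t : ℕ, d₀ ≤ d → d ≤ r → 1 ≤ t →
      ∀ A B : Fn r → ℝ,
        (∀ f ∈ polyFinset r (2 * d), 0 ≤ A f ∧ A f ≤ 1) →
        (∀ f ∈ polyFinset r (2 * d), 0 ≤ B f ∧ B f ≤ 1) →
        |innerP r d A (Trd r d B) -
            innerP r d ((Sop r d)^[t] A) (Trd r d ((Sop r d)^[t] B))|
          ≤ 2 * (d : ℝ) * (t : ℝ) / 3 ^ d := by
  exact ⟨3 ^ 4000, fun r d t hd hr ht A B hA hB => St18.main hr hd t ht A B hA hB⟩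
end
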